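/- arXiv:1710.02629 — 3 statements merged into one kernel-verified Lean document; each statement's English description precedes it below -/
import Mathlib

section
/- There exists a symmetric positive definite matrix B with integer entries of size 64×64 such that det B = 1, xᵀBx ∈ 2ℤ for every x ∈ ℤ⁶⁴, and min{xᵀBx : x ∈ ℤ⁶⁴, x ≠ 0} = 6. In other words, there exists an extremal even unimodular lattice of rank 64. -/
/-!
The lattice is a variant of Quebbemann's lattice `Q₆₄`. In `E₈ / 3E₈` take two complementary totally
isotropic subspaces `M` and `N` for the form modulo 3; they are dual to each other, and both are
planes over `𝔽₉`. Let `C` be a two-dimensional Reed-Solomon type code of length 8 over `𝔽₉`, with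
parameters `[8, 2, 7]`; its dual is an `[8, 6, 3]` code. The lattice consists of the vectors of
`E₈⁸` that reduce modulo 3 to an element of `C ⊗ M + C^⊥ ⊗ N`, with the form divided by 3.

It is integral because `M` and `N` are isotropic and the codes are dual (`three_B`), even because
`E₈` is even (`even_form`), and unimodular because its index in `E₈⁸` is `3³²` (`B_det`). The minimum
is obtained from the two minimum distances (`code_X`, `code_Y`): before the division by 3 the norm
is a multiple of 6, and it exceeds 12 (`sum_g_ge`) as
* a vector whose `M`-part is nonzero modulo 3 has seven nonzero components, of norm at least 2 each;
* a vector whose `M`-part vanishes modulo 3 but whose `N`-part does not has three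
  components that reduce to nonzero elements of `N`, and these have norm divisible by 6;
* a nonzero vector of `3E₈⁸` has norm at least `9 * 2`.

All of this is made explicit in a basis of `E₈` whose first half spans `M` and whose second half
spans `N` modulo 3, the two halves being dual modulo 3.
-/

open Matrix
namespace Q64
open scoped Kronecker

/-! ### The lattice `E₈` with an isotropic splitting modulo 3 -/

/-- Index set of `(ℤ⁴)⁸`: a codeword position in `Fin 8` and a coordinate in `Fin 4`. -/
abbrev ι := Fin 8 × Fin 4

/-- One third of the Gram matrix of the first four vectors of the chosen basis of `E₈`. These span,
modulo 3, a maximal totally isotropic subspace `M` of `E₈ / 3E₈`. -/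
def P : Matrix (Fin 4) (Fin 4) ℤ := !![2, 1, -1, -1; 1, 2, -1, -1; -1, -1, 4, 0; -1, -1, 0, 2]
/-- One third of the Gram matrix of the last four vectors of the chosen basis of `E₈`. These span,
modulo 3, a totally isotropic complement `N` of `M`. -/
def R : Matrix (Fin 4) (Fin 4) ℤ := !![2, 2, -1, 0; 2, 4, 0, 0; -1, 0, 4, -1; 0, 0, -1, 2]
/-- The off-diagonal block of the `E₈` Gram matrix, reduced by the identity and divided by 3. -/
def Q₁ : Matrix (Fin 4) (Fin 4) ℤ := !![0, 0, 1, 0; 1, 1, 0, 1; -2, -3, 0, 1; -1, 0, 0, -1]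
/-- The off-diagonal block of the `E₈` Gram matrix. It is congruent to the identity modulo 3, so the
chosen bases of `M` and `N` are dual to each other modulo 3. -/
def Q : Matrix (Fin 4) (Fin 4) ℤ := 1 + (3 : ℤ) • Q₁
/-- A complex structure on `ℤ⁴`. Modulo 3 it turns `𝔽₃⁴` into a plane over `𝔽₉ = 𝔽₃[J]`. -/
def J : Matrix (Fin 4) (Fin 4) ℤ := !![0, -1, 0, 0; 1, 0, 0, 0; 0, 0, 0, -1; 0, 0, 1, 0]

/-- A Gram matrix of the lattice `E₈`, in a basis adapted to the splitting `E₈ / 3E₈ = M ⊕ N`. -/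
def G : Matrix (Fin 4 ⊕ Fin 4) (Fin 4 ⊕ Fin 4) ℤ :=
  fromBlocks ((3 : ℤ) • P) Q Qᵀ ((3 : ℤ) • R)

/-- The quadratic form of `G`, evaluated at the vector with coordinates `x` in `ℤ⁴` and `y` in `ℤ⁴`. -/
def g (x y : Fin 4 → ℤ) : ℤ := 3 * (x ⬝ᵥ P *ᵥ x) + 2 * (x ⬝ᵥ Q *ᵥ y) + 3 * (y ⬝ᵥ R *ᵥ y)

/-- The eight linear forms are the inner products with eight pairwise orthogonal roots `rₖ` of `E₈`,
so that `2 v·v = ∑ (v·rₖ)²`. -/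
lemma g_squares (x y : Fin 4 → ℤ) : 2 * g x y =
    (-2 * x 0 - 3 * x 1 + x 2 + 2 * x 3 - y 0 - y 1 - 2 * y 3) ^ 2 +
    (2 * x 0 - x 2 - y 1 - y 2) ^ 2 +
    (x 1 - x 2 + x 3 + y 1) ^ 2 +
    (-x 1 - x 2 - y 2) ^ 2 +
    (-x 2 + 2 * x 3 - y 0 + 2 * y 1 + 2 * y 2) ^ 2 +
    (2 * x 0 - x 2 - x 3 + 4 * y 2 - 2 * y 3) ^ 2 +
    (-x 1 + 3 * x 2 + x 3 - 3 * y 0 - 4 * y 1 + y 2) ^ 2 +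
    (-3 * x 2 + x 3 + y 0 + y 1 - y 2 - 2 * y 3) ^ 2 := by
  simp [g, P, Q, Q₁, R, dotProduct, mulVec, Fin.sum_univ_four, Matrix.one_apply]
  ring

lemma even_g (x y : Fin 4 → ℤ) : 2 ∣ g x y := by
  have hP : 2 ∣ x ⬝ᵥ P *ᵥ x :=
    ⟨x 0 ^ 2 + x 1 ^ 2 + 2 * x 2 ^ 2 + x 3 ^ 2 + x 0 * x 1 - x 0 * x 2 - x 0 * x 3 - x 1 * x 2
      - x 1 * x 3, by simp [P, dotProduct, mulVec, Fin.sum_univ_four]; ring⟩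
  have hR : 2 ∣ y ⬝ᵥ R *ᵥ y :=
    ⟨y 0 ^ 2 + 2 * y 1 ^ 2 + 2 * y 2 ^ 2 + y 3 ^ 2 + 2 * y 0 * y 1 - y 0 * y 2 - y 2 * y 3,
      by simp [R, dotProduct, mulVec, Fin.sum_univ_four]; ring⟩
  unfold g
  omega

lemma sum_sq_eq_zero {a b c d e f u v : ℤ}
    (h : a ^ 2 + b ^ 2 + c ^ 2 + d ^ 2 + e ^ 2 + f ^ 2 + u ^ 2 + v ^ 2 = 2 * 0) :
    a = 0 ∧ b = 0 ∧ c = 0 ∧ d = 0 ∧ e = 0 ∧ f = 0 ∧ u = 0 ∧ v = 0 := by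
  refine ⟨?_, ?_, ?_, ?_, ?_, ?_, ?_, ?_⟩ <;> refine pow_eq_zero_iff two_ne_zero |>.1 ?_ <;>
    linarith [sq_nonneg a, sq_nonneg b, sq_nonneg c, sq_nonneg d, sq_nonneg e, sq_nonneg f,
      sq_nonneg u, sq_nonneg v]

/-- Evenness and positivity make 2 a lower bound for the nonzero values of `g`. -/
lemma g_pos (x y : Fin 4 → ℤ) (h : ¬ (x = 0 ∧ y = 0)) : 2 ≤ g x y := by
  have h0 : 0 ≤ g x y := by
    have := g_squares x y
    have : 0 ≤ 2 * g x y := by rw [this]; positivity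
    omega
  have h1 : g x y ≠ 0 := by
    intro h1
    have h2 := g_squares x y
    rw [h1] at h2
    apply h
    obtain ⟨e1, e2, e3, e4, e5, e6, e7, e8⟩ := sum_sq_eq_zero h2.symm
    have h0 : x 0 = 0 := by linarith only [e1, e2, e3, e4, e5, e6, e7, e8]
    have h1 : x 1 = 0 := by linarith only [e1, e2, e3, e4, e5, e6, e7, e8]
    have h2 : x 2 = 0 := by linarith only [e1, e2, e3, e4, e5, e6, e7, e8]
    have h3 : x 3 = 0 := by linarith only [e1, e2, e3, e4, e5, e6, e7, e8]
    have k0 : y 0 = 0 := by linarith only [e1, e2, e3, e4, e5, e6, e7, e8]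
    have k1 : y 1 = 0 := by linarith only [e1, e2, e3, e4, e5, e6, e7, e8]
    have k2 : y 2 = 0 := by linarith only [e1, e2, e3, e4, e5, e6, e7, e8]
    have k3 : y 3 = 0 := by linarith only [e1, e2, e3, e4, e5, e6, e7, e8]
    constructor <;> funext a <;> fin_cases a <;> assumption
  have := even_g x y
  omega

/-- The explicit inverse shows that `E₈` in this basis is unimodular. -/
lemma G_inv : ∃ H, G * H = 1 := by
  refine ⟨(Matrix.reindex finSumFinEquiv.symm finSumFinEquiv.symm) (!![
      714, 345, 930, -1206, -2357, 1761, -1263, -1671;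
      345, 168, 450, -585, -1143, 853, -612, -810;
      930, 450, 1212, -1572, -3072, 2295, -1646, -2178;
      -1206, -585, -1572, 2046, 3996, -2982, 2139, 2830;
      -2357, -1143, -3072, 3996, 7806, -5826, 4179, 5529;
      1761, 853, 2295, -2982, -5826, 4350, -3120, -4128;
      -1263, -612, -1646, 2139, 4179, -3120, 2238, 2961;
      -1671, -810, -2178, 2830, 5529, -4128, 2961, 3918] : Matrix (Fin (4 + 4)) (Fin (4 + 4)) ℤ), ?_⟩
  decide +kernel

/-! ### A pair of dual MDS codes over `𝔽₉` -/

/-- The points `(aᵢ, cᵢ)` with `aᵢ = sᵢ + tᵢ J`, for `i = 0, …, 7`, are eight pairwise distinct points of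
the projective line over `𝔽₉`. This is the list of the `sᵢ`. -/
def s : Fin 8 → ℤ := ![1, 0, 1, -1, 0, 0, 1, -1]
/-- The list of the `tᵢ` in `aᵢ = sᵢ + tᵢ J`. -/
def t : Fin 8 → ℤ := ![0, 0, 0, 0, 1, -1, 1, -1]
/-- The list of the second coordinates `cᵢ` of the eight points. -/
def c : Fin 8 → ℤ := ![0, 1, 1, 1, 1, 1, 1, 1]

/-- The part of `S` with scalar blocks. -/
def S₁ : Matrix (Fin 8) (Fin 8) ℤ := .of fun i j =>
  if j = 0 then s i else if j = 1 then c i else if i = j then 3 else 0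
/-- The part of `S` whose blocks are multiples of `J`. -/
def S₂ : Matrix (Fin 8) (Fin 8) ℤ := .of fun i j => if j = 0 then t i else 0
/-- Basis, in columns, of the lattice of all `X` in `(ℤ⁴)⁸` that reduce modulo 3 to a word
`Xᵢ = aᵢ u + cᵢ v` of the `[8, 2, 7]` code: columns 0 and 1 are code words, the others are three
times unit vectors (the first two positions are an information set). -/
def S : Matrix ι ι ℤ := S₁ ⊗ₖ 1 + S₂ ⊗ₖ J

/-- The part of `D` with scalar blocks. -/
def D₁ : Matrix (Fin 8) (Fin 8) ℤ := .of fun i j =>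
  if i = j then if i = 0 ∨ i = 1 then 3 else 1 else if i = 0 then -s j else
    if i = 1 then -c j else 0
/-- The part of `D` whose blocks are multiples of `J`. -/
def D₂ : Matrix (Fin 8) (Fin 8) ℤ := .of fun i j => if i = 0 then t j else 0
/-- Basis, in columns, of the lattice of all `Y` in `(ℤ⁴)⁸` that reduce modulo 3 to a word of the dual
`[8, 6, 3]` code. It is three times the inverse transpose of `S`. -/
def D : Matrix ι ι ℤ := D₁ ⊗ₖ 1 + D₂ ⊗ₖ J

lemma S_transpose : Sᵀ = S₁ᵀ ⊗ₖ 1 + S₂ᵀ ⊗ₖ Jᵀ := by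
  rw [S, transpose_add, ← kroneckerMap_transpose, ← kroneckerMap_transpose, transpose_one]

/-- The columns of `S` and `D` pair to multiples of 3: the two codes are dual. -/
lemma S_D : Sᵀ * D = (3 : ℤ) • 1 := by
  have h₁ : S₁ᵀ * D₁ + S₂ᵀ * D₂ = (3 : ℤ) • 1 := by decide +kernel
  have h₂ : S₁ᵀ * D₂ = S₂ᵀ * D₁ := by decide +kernel
  have hJ : Jᵀ * J = 1 := by decide
  have hJ' : Jᵀ = (-1 : ℤ) • J := by decide
  rw [S_transpose, D, Matrix.add_mul, Matrix.mul_add, Matrix.mul_add, ← mul_kronecker_mul,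
    ← mul_kronecker_mul, ← mul_kronecker_mul, ← mul_kronecker_mul, hJ, h₂, Matrix.mul_one,
    Matrix.mul_one, Matrix.one_mul, hJ', kronecker_smul, neg_one_smul, ← one_kronecker_one,
    ← smul_kronecker, ← h₁, add_kronecker]
  abel

lemma J_mulVec_zero (u : Fin 4 → ℤ) : (J *ᵥ u) 0 = -u 1 := by
  simp [J, mulVec, dotProduct, Fin.sum_univ_four]

lemma J_mulVec_one (u : Fin 4 → ℤ) : (J *ᵥ u) 1 = u 0 := by
  simp [J, mulVec, dotProduct, Fin.sum_univ_four]

lemma J_mulVec_two (u : Fin 4 → ℤ) : (J *ᵥ u) 2 = -u 3 := by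
  simp [J, mulVec, dotProduct, Fin.sum_univ_four]

lemma J_mulVec_three (u : Fin 4 → ℤ) : (J *ᵥ u) 3 = u 2 := by
  simp [J, mulVec, dotProduct, Fin.sum_univ_four]

lemma J_transpose_mulVec (u : Fin 4 → ℤ) : Jᵀ *ᵥ u = -(J *ᵥ u) := by
  rw [show Jᵀ = -J by decide, neg_mulVec]

lemma kron_mulVec (A : Matrix (Fin 8) (Fin 8) ℤ) (M : Matrix (Fin 4) (Fin 4) ℤ) (p : ι → ℤ)
    (i : Fin 8) (a : Fin 4) :
    ((A ⊗ₖ M) *ᵥ p) (i, a) = ∑ j, A i j * (M *ᵥ fun b => p (j, b)) a := by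
  simp only [mulVec, dotProduct, Fintype.sum_prod_type, kroneckerMap_apply, Finset.mul_sum,
    mul_assoc]

/-- Modulo 3, `S p` is the code word of the pair formed by blocks 0 and 1 of `p`. -/
lemma S_mulVec (p : ι → ℤ) (i : Fin 8) (a : Fin 4) :
    (((S *ᵥ p) (i, a) : ℤ) : ZMod 3) =
      s i * p (0, a) + t i * (J *ᵥ fun b => p (0, b)) a + c i * p (1, a) := by
  have h3 : (3 : ZMod 3) = 0 := rfl
  rw [S, add_mulVec, Pi.add_apply, kron_mulVec, kron_mulVec]
  fin_cases i <;> simp [S₁, S₂, Fin.sum_univ_eight, s, t, c, h3] <;> ring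

/-- The first parity check of the dual code; note that `Jᵀ = -J` conjugates `aᵢ`. -/
lemma S_transpose_mulVec_zero (y : ι → ℤ) (a : Fin 4) :
    (Sᵀ *ᵥ y) (0, a) = ∑ i, (s i * y (i, a) + t i * (Jᵀ *ᵥ fun b => y (i, b)) a) := by
  rw [S_transpose, add_mulVec, Pi.add_apply, kron_mulVec, kron_mulVec, ← Finset.sum_add_distrib]
  simp [S₁, S₂]

/-- The second parity check of the dual code. -/
lemma S_transpose_mulVec_one (y : ι → ℤ) (a : Fin 4) :
    (Sᵀ *ᵥ y) (1, a) = ∑ i, c i * y (i, a) := by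
  rw [S_transpose, add_mulVec, Pi.add_apply, kron_mulVec, kron_mulVec, ← Finset.sum_add_distrib]
  simp [S₁, S₂]

/-- Two distinct points of the projective line have a nonzero determinant, so a code word vanishing
at two positions vanishes. The vectors over `𝔽₉` are pairs over `𝔽₃`. -/
lemma mds : ∀ j k : Fin 8, j ≠ k → ∀ u u' v v' : ZMod 3,
    s j * u - t j * u' + c j * v = 0 → t j * u + s j * u' + c j * v' = 0 →
    s k * u - t k * u' + c k * v = 0 → t k * u + s k * u' + c k * v' = 0 →
    u = 0 ∧ u' = 0 ∧ v = 0 ∧ v' = 0 := by decide +kernel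

/-- By the same determinant, a dual code word supported on two positions vanishes. -/
lemma mds' : ∀ j k : Fin 8, j ≠ k → ∀ y y' z z' : ZMod 3,
    s j * y + t j * y' + (s k * z + t k * z') = 0 → s j * y' - t j * y + (s k * z' - t k * z) = 0 →
    c j * y + c k * z = 0 → c j * y' + c k * z' = 0 →
    y = 0 ∧ y' = 0 ∧ z = 0 ∧ z' = 0 := by decide +kernel

/-! ### The rank 64 Gram matrix -/

/-- The off-diagonal block of `B`, equal to one third of `Sᵀ (1 ⊗ Q) D` since `Sᵀ D = 3`. -/
def K : Matrix ι ι ℤ := 1 + Sᵀ * (1 ⊗ₖ Q₁) * D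
/-- The Gram matrix of the rank 64 lattice. -/
def B : Matrix (ι ⊕ ι) (ι ⊕ ι) ℤ :=
  fromBlocks (Sᵀ * (1 ⊗ₖ P) * S) K Kᵀ (Dᵀ * (1 ⊗ₖ R) * D)
/-- The basis matrix of the rank 64 lattice inside `E₈⁸`. -/
def T : Matrix (ι ⊕ ι) (ι ⊕ ι) ℤ := fromBlocks S 0 0 D
/-- The Gram matrix of `E₈⁸`, with the coordinates of all `M`-parts preceding those of all `N`-parts. -/
def GG : Matrix (ι ⊕ ι) (ι ⊕ ι) ℤ :=
  fromBlocks (1 ⊗ₖ ((3 : ℤ) • P)) (1 ⊗ₖ Q) (1 ⊗ₖ Qᵀ) (1 ⊗ₖ ((3 : ℤ) • R))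

lemma three_K : (3 : ℤ) • K = Sᵀ * (1 ⊗ₖ Q) * D := by
  simp only [K, Q, kronecker_add, kronecker_smul, smul_add, Matrix.mul_add, Matrix.add_mul,
    Matrix.mul_smul, Matrix.smul_mul, one_kronecker_one, Matrix.mul_one, S_D]

lemma one_kron_transpose (A : Matrix (Fin 4) (Fin 4) ℤ) :
    (1 ⊗ₖ A : Matrix ι ι ℤ)ᵀ = 1 ⊗ₖ Aᵀ := by
  rw [← kroneckerMap_transpose, transpose_one]

/-- The lattice is the sublattice of `E₈⁸` with basis `T`, with its form divided by 3. -/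
lemma three_B : (3 : ℤ) • B = Tᵀ * GG * T := by
  have hKt : (3 : ℤ) • Kᵀ = Dᵀ * (1 ⊗ₖ Qᵀ) * S := by
    rw [← transpose_smul, three_K, transpose_mul, transpose_mul, one_kron_transpose,
      transpose_transpose, Matrix.mul_assoc]
  rw [B, fromBlocks_smul, three_K, hKt]
  simp only [T, GG, fromBlocks_transpose, fromBlocks_multiply, kronecker_smul, transpose_zero, smul_zero,
    Matrix.mul_zero, Matrix.zero_mul, add_zero, zero_add, Matrix.mul_smul, Matrix.smul_mul]

lemma B_symm : B.IsSymm := by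
  have hP : Pᵀ = P := by decide
  have hR : Rᵀ = R := by decide
  refine IsSymm.fromBlocks ?_ rfl ?_
  · rw [Matrix.IsSymm, transpose_mul, transpose_mul, one_kron_transpose, hP, transpose_transpose,
      Matrix.mul_assoc]
  · rw [Matrix.IsSymm, transpose_mul, transpose_mul, one_kron_transpose, hR, transpose_transpose,
      Matrix.mul_assoc]

lemma GG_det : GG.det = 1 := by
  have h : GG = (1 ⊗ₖ G : Matrix (Fin 8 × (Fin 4 ⊕ Fin 4)) (Fin 8 × (Fin 4 ⊕ Fin 4)) ℤ).submatrix
      (Equiv.prodSumDistrib _ _ _).symm (Equiv.prodSumDistrib _ _ _).symm := by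
    ext (⟨i, a⟩ | ⟨i, a⟩) (⟨j, b⟩ | ⟨j, b⟩) <;> simp [GG, G, Matrix.kroneckerMap_apply]
  have hG : IsUnit G.det := by
    obtain ⟨H, hH⟩ := G_inv
    exact (Matrix.isUnit_iff_isUnit_det _).1 (IsUnit.of_mul_eq_one _ hH)
  rw [h, det_submatrix_equiv_self, det_kronecker]
  rcases Int.isUnit_iff.1 hG with h | h <;> simp [h]

/-- The index `det T = 3³²` exactly compensates the division of the form by 3. -/
lemma B_det : B.det = 1 := by
  have h1 : S.det * D.det = 3 ^ 32 := by
    rw [← det_transpose S, ← det_mul, S_D, det_smul]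
    simp
  have h2 : T.det = 3 ^ 32 := by rw [T, det_fromBlocks_zero₂₁, h1]
  have h3 := congrArg Matrix.det three_B
  rw [det_mul, det_mul, det_transpose, GG_det, h2, det_smul] at h3
  simp at h3
  omega

lemma kron_form (A : Matrix (Fin 4) (Fin 4) ℤ) (X Y : ι → ℤ) :
    X ⬝ᵥ ((1 ⊗ₖ A : Matrix ι ι ℤ) *ᵥ Y) =
      ∑ i, (fun a => X (i, a)) ⬝ᵥ A *ᵥ (fun a => Y (i, a)) := by
  simp only [dotProduct, mulVec, Fintype.sum_prod_type, kroneckerMap_apply, one_apply]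
  refine Finset.sum_congr rfl fun i _ => Finset.sum_congr rfl fun a _ => ?_
  congr 1
  rw [Finset.sum_eq_single i] <;> simp +contextual [eq_comm]

lemma three_form (z : ι ⊕ ι → ℤ) : 3 * (z ⬝ᵥ B *ᵥ z) =
    ∑ i, g (fun a => (S *ᵥ (z ∘ Sum.inl)) (i, a)) (fun a => (D *ᵥ (z ∘ Sum.inr)) (i, a)) := by
  set X := S *ᵥ (z ∘ Sum.inl) with hX
  set Y := D *ᵥ (z ∘ Sum.inr) with hY
  have hT : T *ᵥ z = Sum.elim X Y := by
    simp [T, fromBlocks_mulVec, hX, hY]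
  have hc : Y ⬝ᵥ ((1 ⊗ₖ Qᵀ : Matrix ι ι ℤ) *ᵥ X) = X ⬝ᵥ ((1 ⊗ₖ Q : Matrix ι ι ℤ) *ᵥ Y) := by
    rw [← one_kron_transpose, dotProduct_comm, mulVec_transpose, ← dotProduct_mulVec]
  have h : 3 * (z ⬝ᵥ B *ᵥ z) = Sum.elim X Y ⬝ᵥ (GG *ᵥ Sum.elim X Y) := by
    rw [← hT, ← smul_eq_mul, ← dotProduct_smul, ← smul_mulVec, three_B,
      ← mulVec_mulVec, ← mulVec_mulVec, dotProduct_mulVec, vecMul_transpose]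
  rw [h, GG, fromBlocks_mulVec, sumElim_dotProduct_sumElim]
  simp only [Sum.elim_comp_inl, Sum.elim_comp_inr, dotProduct_add, hc]
  simp only [kron_form, g, smul_mulVec, dotProduct_smul, Finset.sum_add_distrib,
    ← Finset.mul_sum, smul_eq_mul]
  ring

/-- Since `M` and `N` are totally isotropic modulo 3, the norm of a vector of either one is divisible
by 3. -/
lemma g_three {x y : Fin 4 → ℤ} (h : (∀ a, 3 ∣ x a) ∨ ∀ a, 3 ∣ y a) : 3 ∣ g x y := by
  have h : 3 ∣ x ⬝ᵥ Q *ᵥ y := by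
    rcases h with h | h
    · exact Finset.dvd_sum fun a _ => (h a).mul_right _
    · refine Finset.dvd_sum fun a _ => Dvd.dvd.mul_left ?_ _
      rw [mulVec, dotProduct]
      exact Finset.dvd_sum fun b _ => (h b).mul_left _
  unfold g
  omega

lemma g_ge_six {x y : Fin 4 → ℤ} (h : (∀ a, 3 ∣ x a) ∨ ∀ a, 3 ∣ y a) (h0 : ¬ (x = 0 ∧ y = 0)) :
    6 ≤ g x y := by
  have := g_three h
  have := even_g x y
  have := g_pos x y h0
  omega

lemma g_nonneg (x y : Fin 4 → ℤ) : 0 ≤ g x y := by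
  by_cases h : x = 0 ∧ y = 0
  · simp [h.1, h.2, g]
  · linarith [g_pos x y h]

lemma g_ge_eighteen {x y : Fin 4 → ℤ} (hx : ∀ a, 3 ∣ x a) (hy : ∀ a, 3 ∣ y a)
    (h0 : ¬ (x = 0 ∧ y = 0)) : 18 ≤ g x y := by
  choose u hu using hx
  choose v hv using hy
  obtain rfl : x = (3 : ℤ) • u := funext hu
  obtain rfl : y = (3 : ℤ) • v := funext hv
  have h : g ((3 : ℤ) • u) ((3 : ℤ) • v) = 9 * g u v := by
    simp only [g, mulVec_smul, dotProduct_smul, smul_dotProduct, smul_eq_mul]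
    ring
  have := g_pos u v (by rintro ⟨rfl, rfl⟩; simp at h0)
  omega

/-! ### The minimum -/

/-- The first code has minimum distance at least 7. -/
lemma code_X {p : ι → ℤ} {j k : Fin 8} (hjk : j ≠ k)
    (hj : ∀ a, 3 ∣ (S *ᵥ p) (j, a)) (hk : ∀ a, 3 ∣ (S *ᵥ p) (k, a)) (i : Fin 8) (a : Fin 4) :
    3 ∣ (S *ᵥ p) (i, a) := by
  have key (i : Fin 8) (a : Fin 4) : 3 ∣ (S *ᵥ p) (i, a) ↔
      (s i * p (0, a) + t i * (J *ᵥ fun b => p (0, b)) a + c i * p (1, a) : ZMod 3) = 0 := by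
    rw [← S_mulVec]
    exact (ZMod.intCast_zmod_eq_zero_iff_dvd _ 3).symm
  simp only [key] at hj hk ⊢
  have e := mds j k hjk (p (0, 0)) (p (0, 1)) (p (1, 0)) (p (1, 1))
  have f := mds j k hjk (p (0, 2)) (p (0, 3)) (p (1, 2)) (p (1, 3))
  simp only [Fin.forall_fin_succ, Fin.isValue, Fin.succ_zero_eq_one, Fin.succ_one_eq_two,
    IsEmpty.forall_iff, and_true] at hj hk
  obtain ⟨j0, j1, j2, j3⟩ := hj
  obtain ⟨k0, k1, k2, k3⟩ := hk
  change _ + _ * ((J *ᵥ _) 3 : ZMod 3) + _ = 0 at j3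
  change _ + _ * ((J *ᵥ _) 3 : ZMod 3) + _ = 0 at k3
  simp only [J_mulVec_zero, J_mulVec_one, J_mulVec_two, J_mulVec_three] at j0 j1 j2 j3 k0 k1 k2 k3
  push_cast at *
  obtain ⟨e0, e1, e2, e3⟩ := e (by linear_combination j0) (by linear_combination j1)
    (by linear_combination k0) (by linear_combination k1)
  obtain ⟨f0, f1, f2, f3⟩ := f (by linear_combination j2) (by linear_combination j3)
    (by linear_combination k2) (by linear_combination k3)
  fin_cases a <;> simp [J_mulVec_zero, J_mulVec_one, J_mulVec_two, J_mulVec_three, *]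

/-- The dual code has minimum distance at least 3. -/
lemma code_Y {q : ι → ℤ} {j k : Fin 8} (hjk : j ≠ k)
    (h : ∀ i, i ≠ j → i ≠ k → ∀ a, 3 ∣ (D *ᵥ q) (i, a)) (i : Fin 8) (a : Fin 4) :
    3 ∣ (D *ᵥ q) (i, a) := by
  set y := D *ᵥ q with hy
  have hS : Sᵀ *ᵥ y = (3 : ℤ) • q := by rw [hy, mulVec_mulVec, S_D, smul_mulVec, one_mulVec]
  have key (i : Fin 8) (a : Fin 4) : 3 ∣ y (i, a) ↔ (y (i, a) : ZMod 3) = 0 :=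
    (ZMod.intCast_zmod_eq_zero_iff_dvd _ 3).symm
  simp only [key] at h ⊢
  have h3 : (3 : ZMod 3) = 0 := rfl
  have hc (a : Fin 4) : (c j * y (j, a) + c k * y (k, a) : ZMod 3) = 0 := by
    have := congrArg (Int.cast (R := ZMod 3)) (S_transpose_mulVec_one y a)
    rw [hS] at this
    push_cast at this
    rw [Fintype.sum_eq_add j k hjk (fun i hi => by rw [h i hi.1 hi.2 a, mul_zero])] at this
    simpa [h3] using this.symm
  have hs (a b : Fin 4) (ε : ℤ) (hJ : ∀ u : Fin 4 → ℤ, (Jᵀ *ᵥ u) a = ε * u b) :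
      (s j * y (j, a) + t j * (ε * y (j, b)) +
        (s k * y (k, a) + t k * (ε * y (k, b))) : ZMod 3) = 0 := by
    have := congrArg (Int.cast (R := ZMod 3)) (S_transpose_mulVec_zero y a)
    rw [hS] at this
    simp only [hJ] at this
    push_cast at this
    rw [Fintype.sum_eq_add j k hjk
      (fun i hi => by rw [h i hi.1 hi.2 a, h i hi.1 hi.2 b]; simp)] at this
    simpa [h3] using this.symm
  have s0 := hs 0 1 1 (by simp [J_transpose_mulVec, J_mulVec_zero])
  have s1 := hs 1 0 (-1) (by simp [J_transpose_mulVec, J_mulVec_one])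
  have s2 := hs 2 3 1 (by simp [J_transpose_mulVec, J_mulVec_two])
  have s3 := hs 3 2 (-1) (by simp [J_transpose_mulVec, J_mulVec_three])
  push_cast at s0 s1 s2 s3
  obtain ⟨e0, e1, e2, e3⟩ := mds' j k hjk (y (j, 0)) (y (j, 1)) (y (k, 0)) (y (k, 1))
    (by linear_combination s0) (by linear_combination s1) (hc 0) (hc 1)
  obtain ⟨f0, f1, f2, f3⟩ := mds' j k hjk (y (j, 2)) (y (j, 3)) (y (k, 2)) (y (k, 3))
    (by linear_combination s2) (by linear_combination s3) (hc 2) (hc 3)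
  by_cases hij : i = j
  · subst hij
    fin_cases a <;> assumption
  by_cases hik : i = k
  · subst hik
    fin_cases a <;> assumption
  exact h i hij hik a

/-- The bound is the weakest one that, with divisibility by 6, forces the value to be at least 18. If
the `M`-part is nonzero modulo 3, at least seven components contribute at least 2. Otherwise, if the
`N`-part is nonzero modulo 3, at least three components contribute at least 6. Otherwise the vector
is three times a nonzero vector of `E₈⁸`. -/
lemma sum_g_ge {z : ι ⊕ ι → ℤ} (hz : z ≠ 0) : 13 ≤
    ∑ i, g (fun a => (S *ᵥ (z ∘ Sum.inl)) (i, a)) (fun a => (D *ᵥ (z ∘ Sum.inr)) (i, a)) := by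
  classical
  set p := z ∘ Sum.inl with hp
  set q := z ∘ Sum.inr with hq
  set f : Fin 8 → ℤ := fun i => g (fun a => (S *ᵥ p) (i, a)) (fun a => (D *ᵥ q) (i, a)) with hf
  change 13 ≤ ∑ i, f i
  have hsub (A : Finset (Fin 8)) (m : ℤ) (hA : ∀ i ∈ A, m ≤ f i) : A.card * m ≤ ∑ i, f i := by
    calc A.card * m ≤ ∑ i ∈ A, f i := by
          simpa using Finset.card_nsmul_le_sum A f m hA
      _ ≤ _ := Finset.sum_le_sum_of_subset_of_nonneg (Finset.subset_univ _)
          fun i _ _ => g_nonneg _ _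
  by_cases hX : ∀ i a, 3 ∣ (S *ᵥ p) (i, a)
  · by_cases hY : ∀ i a, 3 ∣ (D *ᵥ q) (i, a)
    · obtain ⟨i, hi⟩ : ∃ i, ¬ ((fun a => (S *ᵥ p) (i, a)) = 0 ∧
          (fun a => (D *ᵥ q) (i, a)) = 0) := by
        by_contra! hcon
        have hp0 : S *ᵥ p = 0 := funext fun ia => congrFun (hcon ia.1).1 ia.2
        have hq0 : D *ᵥ q = 0 := funext fun ia => congrFun (hcon ia.1).2 ia.2
        have hDS : Dᵀ * S = (3 : ℤ) • 1 := by
          rw [← transpose_transpose (Dᵀ * S), transpose_mul, transpose_transpose, S_D,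
            transpose_smul, transpose_one]
        have hp1 : (3 : ℤ) • p = 0 := by
          rw [← one_mulVec p, ← smul_mulVec, ← hDS, ← mulVec_mulVec, hp0, mulVec_zero]
        have hq1 : (3 : ℤ) • q = 0 := by
          rw [← one_mulVec q, ← smul_mulVec, ← S_D, ← mulVec_mulVec, hq0, mulVec_zero]
        apply hz
        funext v
        rcases v with v | v
        · simpa [hp] using congrFun hp1 v
        · simpa [hq] using congrFun hq1 v
      have := hsub {i} 18 (by simpa using g_ge_eighteen (hX i) (hY i) hi)
      simp at this
      linarith
    · set A : Finset (Fin 8) := {i | ¬ ∀ a, 3 ∣ (D *ᵥ q) (i, a)} with hA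
      have hcard : 3 ≤ A.card := by
        by_contra hlt
        obtain ⟨A', hAA', hA'⟩ := Finset.exists_superset_card_eq (s := A) (n := 2)
          (by omega) (by simp)
        obtain ⟨j, k, hjk, rfl⟩ := Finset.card_eq_two.1 hA'
        refine hY (code_Y hjk fun i hij hik => ?_)
        by_contra hi
        have : i ∈ ({j, k} : Finset (Fin 8)) := hAA' (by simpa [hA] using hi)
        simp [hij, hik] at this
      have := hsub A 6 fun i hi => g_ge_six (.inl (hX i)) fun h0 => by
        simp only [hA, Finset.mem_filter] at hi
        exact hi.2 fun a => (congrFun h0.2 a : (D *ᵥ q) (i, a) = 0) ▸ dvd_zero 3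
      omega
  -- `A` is the set of zeros of the code word, of which there is at most one.
  · set A : Finset (Fin 8) := {i | ∀ a, 3 ∣ (S *ᵥ p) (i, a)} with hA
    have hcard : A.card ≤ 1 := by
      refine Finset.card_le_one.2 fun j hj k hk => ?_
      by_contra hjk
      simp only [hA, Finset.mem_filter] at hj hk
      exact hX (code_X hjk hj.2 hk.2)
    have hcompl : Aᶜ.card = 8 - A.card := by simp [Finset.card_compl]
    have := hsub Aᶜ 2 fun i hi => g_pos _ _ fun h0 => by
      simp only [hA, Finset.mem_compl, Finset.mem_filter, not_and] at hi
      exact hi (Finset.mem_univ _) fun a => (congrFun h0.1 a : (S *ᵥ p) (i, a) = 0) ▸ dvd_zero 3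
    omega

lemma even_form (z : ι ⊕ ι → ℤ) : 2 ∣ z ⬝ᵥ B *ᵥ z := by
  have h : 2 ∣ 3 * (z ⬝ᵥ B *ᵥ z) := three_form z ▸ Finset.dvd_sum fun i _ => even_g _ _
  omega

lemma six_le_form {z : ι ⊕ ι → ℤ} (hz : z ≠ 0) : 6 ≤ z ⬝ᵥ B *ᵥ z := by
  have h := sum_g_ge hz
  rw [← three_form] at h
  have := even_form z
  omega

/-- The vector of norm 6: its components in `E₈⁸` are `±` one norm 6 basis vector of `N`, at the
positions 0, 1 and 2. -/
lemma B_diag : B (Sum.inr (2, 0)) (Sum.inr (2, 0)) = 6 := by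
  decide +kernel

lemma form_reindex {R : Type*} [CommRing R] {m n : Type*} [Fintype m] [Fintype n]
    (e : m ≃ n) (A : Matrix n n R) (x : m → R) :
    x ⬝ᵥ (A.submatrix e e *ᵥ x) = (x ∘ e.symm) ⬝ᵥ A *ᵥ (x ∘ e.symm) := by
  rw [submatrix_mulVec_equiv, ← comp_equiv_symm_dotProduct]

/-- Positivity on integer vectors passes to rational vectors by clearing denominators. -/
lemma pos_rat (n : Type*) [Fintype n] (A : Matrix n n ℤ)
    (hA : ∀ x : n → ℤ, x ≠ 0 → 0 < x ⬝ᵥ A *ᵥ x) (x : n → ℚ) (hx : x ≠ 0) :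
    0 < x ⬝ᵥ A.map ((↑) : ℤ → ℚ) *ᵥ x := by
  obtain ⟨b, hb⟩ := IsLocalization.exist_integer_multiples_of_finite (nonZeroDivisors ℤ) x
  choose y hy using hb
  have hb0 : ((b : ℤ) : ℚ) ≠ 0 := by exact_mod_cast nonZeroDivisors.coe_ne_zero b
  have hyx : (fun i => (y i : ℚ)) = ((b : ℤ) : ℚ) • x := by
    funext i
    simpa using hy i
  have hy0 : y ≠ 0 := by
    rintro rfl
    apply hx
    simpa [hb0, funext_iff] using hyx
  have h : (0 : ℚ) < ((y ⬝ᵥ A *ᵥ y : ℤ) : ℚ) := by exact_mod_cast hA y hy0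
  have h2 : ((y ⬝ᵥ A *ᵥ y : ℤ) : ℚ) =
      (fun i => (y i : ℚ)) ⬝ᵥ A.map ((↑) : ℤ → ℚ) *ᵥ (fun i => (y i : ℚ)) := by
    simp [dotProduct, mulVec]
  rw [h2, hyx, mulVec_smul, dotProduct_smul, smul_dotProduct, smul_smul, smul_eq_mul] at h
  exact (pos_iff_pos_of_mul_pos h).1 (mul_self_pos.2 hb0)

end Q64

/-- There exists an even extremal unimodular lattice of rank 64: a symmetric positive
definite integer matrix `B` of size 64×64 with `det B = 1`, `xᵀBx ∈ 2ℤ` for all `x ∈ ℤ⁶⁴`,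
and `min {xᵀBx : x ∈ ℤ⁶⁴, x ≠ 0} = 6`. -/
theorem stmt_0 :
    ∃ B : Matrix (Fin 64) (Fin 64) ℤ,
      B.IsSymm ∧
      (∀ x : Fin 64 → ℚ, x ≠ 0 → 0 < x ⬝ᵥ ((B.map ((↑) : ℤ → ℚ)) *ᵥ x)) ∧
      B.det = 1 ∧
      (∀ x : Fin 64 → ℤ, 2 ∣ x ⬝ᵥ (B *ᵥ x)) ∧
      IsLeast {q : ℤ | ∃ x : Fin 64 → ℤ, x ≠ 0 ∧ q = x ⬝ᵥ (B *ᵥ x)} 6 := by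
  obtain ⟨e⟩ : Nonempty (Fin 64 ≃ Q64.ι ⊕ Q64.ι) := ⟨Fintype.equivOfCardEq (by simp)⟩
  have hmin (x : Fin 64 → ℤ) (hx : x ≠ 0) : 6 ≤ x ⬝ᵥ (Q64.B.submatrix e e *ᵥ x) := by
    rw [Q64.form_reindex]
    refine Q64.six_le_form fun h => hx ?_
    funext i
    simpa using congrFun h (e i)
  refine ⟨Q64.B.submatrix e e, Q64.B_symm.submatrix e, Q64.pos_rat _ _ fun x hx => ?_, ?_,
    fun x => ?_, ⟨Pi.single (e.symm (Sum.inr (2, 0))) 1, ?_, ?_⟩, ?_⟩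
  · linarith [hmin x hx]
  · rw [det_submatrix_equiv_self, Q64.B_det]
  · rw [Q64.form_reindex]
    exact Q64.even_form _
  · simp
  · simp [Q64.B_diag]
  · rintro _ ⟨x, hx, rfl⟩
    exact hmin x hx
end

section
/- min{⟨v,v⟩ : v ∈ L_Q, v ≠ 0} = 6; that is, every nonzero vector of L_Q has square-norm at least 6, and some vector of L_Q has square-norm exactly 6. -/
/-!
Write a component `x` of a vector of `L_Q` as the pair `a = 5 (x₀ - x₁)`, `b = 7 (x₀ + x₁)` of
integers of equal parity; then `70 ⟨x, x⟩ = 7 a² + 5 b²`, and the `a` of all components form a word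
of a code modulo `5`, the `b` a word of a code modulo `7` (`exists_ab`). Both codes have the
systematic generator matrix `(I | A)`, where the `16` information coordinates are the nonzero
squares and `∞`. Both are self-orthogonal (`iso5`, `iso7`), so `∑ a² = 5 i` and `∑ b² = 7 j`; the
norm of the vector is `(i + j) / 2`, and it is even since `4 ∣ 7 a² + 5 b²` in every component. A
vector of norm less than `6` thus has `i + j ∈ {0, 4, 8}`.

The lower bound rests on two minima: a nonzero word `a` has `i ≥ 4` (`min5`), a nonzero word `b` has
`j ≥ 4` (`core7`). If one of them vanishes, all coordinates of the other are even, and halving it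
contradicts the minima (`half`). There remains `i = j = 4`, that is, `∑ a² = 20` and `∑ b² = 28`.

All three facts are reduced to finite searches. The codes are invariant, up to signs, under
`z ↦ z + 1`, `z ↦ 9 z` and `z ↦ -1 / z`, which generate `PSL₂(31)`. The translates of the set of
information coordinates and their complements are the supports of the signs of a Hadamard matrix of
order `32`, so by Parseval's identity a short word can be moved until its square sum on the
information coordinates is at most `8` (modulo `5`) or `9` (modulo `7`): this is `exists_small`.
Few choices of the information coordinates are left, and all of them are examined (`search_sound`).
For the case `i = j = 4`, one descends on the square sum of `a` over the information coordinates
(`not_good`): each word found modulo `5` either is decreased by an automorphism from a fixed list or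
has its pattern of squares in a list `base` of `13` patterns up to `z ↦ 9 z`. As `b` has the
parities of `a`, a listed pattern prescribes the odd coordinates of `b`, and a search modulo `7`
shows that no word with these parities has square sum `28` (`reps_bad`).

The searches are evaluated by the kernel, so they use only recursors and operations on natural
numbers that the kernel evaluates natively. They assign the values of five information coordinates
one at a time and treat all values of the other eleven simultaneously: one large number holds a
field of ten bits for each of these, and a few additions compare all total weights with the bound.

The bound is attained by the explicit vector `exV`.
-/

noncomputable section

/-- The projective line over `F₃₁`: `none` is the point `∞`. -/
abbrev P1 : Type := Option (ZMod 31)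

/-- The generator `v_μ` of the generalized quadratic residue code `Q` with
parameters `(a,b,d,s,t,e) = (0,0,1,7,3,2)`:
`v_μ(μ) = 1`, `v_μ(ν) = 7` if `χ(μ-ν) = 1`, `v_μ(ν) = 3` if `χ(μ-ν) = -1`, `v_μ(∞) = 2`. -/
def vgen (μ : ZMod 31) : P1 → ZMod 35 := fun ν =>
  match ν with
  | none => 2
  | some ν' => if ν' = μ then 1 else if IsSquare (μ - ν') then 7 else 3

/-- The generalized quadratic residue code `Q`, a subgroup of `(ℤ/35ℤ)^{P¹(F₃₁)}`. -/
def Qcode : AddSubgroup (P1 → ZMod 35) := AddSubgroup.closure (Set.range vgen)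
/-- The generator `u = (34 e₁ + 6 e₂)/35` of the discriminant group `D_R = R∨/R ≅ ℤ/35ℤ`. -/
def uvec : Fin 2 → ℚ := ![34/35, 6/35]

/-- The bilinear form `⟨x,y⟩ = xᵀ G y` on `ℚ²`, with `G = [[6,1],[1,6]]`. -/
def B2 (x y : Fin 2 → ℚ) : ℚ :=
  6 * x 0 * y 0 + x 0 * y 1 + x 1 * y 0 + 6 * x 1 * y 1

/-- Membership in the lattice `R = ℤ² ⊆ ℚ²`. -/
def inRlat (x : Fin 2 → ℚ) : Prop := ∀ i, ∃ k : ℤ, x i = (k : ℚ)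
/-- The lattice `L_Q ⊆ (R∨)³² ⊆ ℚ⁶⁴`: the preimage of the code `Q` under the natural
projection `(R∨)³² → (D_R)³² ≅ (ℤ/35ℤ)³²`.  A vector `x` belongs to `L_Q` iff there is a
codeword `w ∈ Q` such that for every `ν ∈ P¹(F₃₁)` the component `x ν` is congruent to
`w(ν)·u` modulo `R = ℤ²`. -/
def LQ : Set (P1 → Fin 2 → ℚ) :=
  {x | ∃ w ∈ Qcode, ∀ ν : P1, ∃ m : ℤ,
    (m : ZMod 35) = w ν ∧ inRlat (x ν - (m : ℚ) • uvec)}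

/-- The orthogonal direct-sum bilinear form of 32 copies of `R∨`. -/
def Bf (x y : P1 → Fin 2 → ℚ) : ℚ := ∑ ν : P1, B2 (x ν) (y ν)

namespace GQR

/-! ### Recursor-based list functions and numbers packed from ten-bit fields -/

/-- `List.map` through the recursor, which the kernel unfolds quickly. -/
def lmap {α β : Type} (f : α → β) (l : List α) : List β := List.rec [] (fun x _ ih => f x :: ih) l

def lsum {α : Type} (f : α → ℕ) (l : List α) : ℕ :=
  List.rec 0 (fun x _ ih => Nat.add (f x) ih) l

def lnth {α : Type} (d : α) (l : List α) : ℕ → α :=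
  List.rec (fun _ => d) (fun x _ ih n => Nat.rec x (fun m _ => ih m) n) l

/-- Branching on a Boolean without a `Decidable` instance. -/
def iteb {α : Type} (b : Bool) (x y : α) : α := Bool.rec y x b

theorem lmap_eq {α β : Type} (f : α → β) (l : List α) : lmap f l = l.map f := by
  induction l with
  | nil => rfl
  | cons x l ih => exact congrArg (f x :: ·) ih

theorem lsum_eq {α : Type} (f : α → ℕ) (l : List α) : lsum f l = (l.map f).sum := by
  induction l with
  | nil => rfl
  | cons x l ih => exact (congrArg (f x + ·) ih).trans (by simp)

theorem lnth_eq {α : Type} (d : α) (l : List α) (n : ℕ) : lnth d l n = l.getD n d := by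
  induction l generalizing n with
  | nil => rfl
  | cons x l ih =>
    cases n with
    | zero => rfl
    | succ m => exact (ih m).trans (by simp)

theorem iteb_ble {α : Type} (m n : ℕ) (x y : α) :
    iteb (Nat.ble m n) x y = if m ≤ n then x else y := by
  cases hb : Nat.ble m n with
  | true => rw [if_pos (Nat.le_of_ble_eq_true hb)]; rfl
  | false => rw [if_neg (Nat.not_le_of_not_ble_eq_true (by simp [hb]))]; rfl

theorem iteb_beq {α : Type} (m n : ℕ) (x y : α) :
    iteb (Nat.beq m n) x y = if m = n then x else y := by
  cases hb : Nat.beq m n with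
  | true => rw [if_pos (Nat.eq_of_beq_eq_true hb)]; rfl
  | false => rw [if_neg (Nat.ne_of_beq_eq_false hb)]; rfl

/-- The number with the entries of the list as digits in base `1024`, least significant first. -/
def pk : List ℕ → ℕ := List.rec 0 (fun x _ ih => Nat.add x (Nat.mul 1024 ih))

@[simp] theorem pk_nil : pk [] = 0 := rfl
@[simp] theorem pk_cons (x : ℕ) (l : List ℕ) : pk (x :: l) = x + 1024 * pk l := rfl

theorem pk_append (l m : List ℕ) : pk (l ++ m) = pk l + 2 ^ (10 * l.length) * pk m := by
  induction l with
  | nil => simp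
  | cons x l ih =>
    simp only [List.cons_append, pk_cons, ih, List.length_cons, Nat.mul_add, pow_add]
    norm_num; ring

theorem pk_map_add {α : Type} (f g : α → ℕ) (l : List α) :
    pk (l.map fun x => f x + g x) = pk (l.map f) + pk (l.map g) := by
  induction l with
  | nil => rfl
  | cons x l ih => simp only [List.map_cons, pk_cons, ih]; ring

theorem pk_map_mul {α : Type} (f : α → ℕ) (c : ℕ) (l : List α) :
    pk (l.map fun x => c * f x) = c * pk (l.map f) := by
  induction l with
  | nil => rfl
  | cons x l ih => simp only [List.map_cons, pk_cons, ih]; ring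

theorem pk_lt {l : List ℕ} (h : ∀ x ∈ l, x < 1024) : pk l < 2 ^ (10 * l.length) := by
  induction l with
  | nil => simp
  | cons x l ih =>
    have h1 := ih fun y hy => h y (by simp [hy])
    have h2 := h x (by simp)
    simp only [pk_cons, List.length_cons, Nat.mul_add, pow_add]
    norm_num at h1 ⊢
    omega

theorem pk_eq_zero {l : List ℕ} (h : pk l = 0) : ∀ x ∈ l, x = 0 := by
  induction l with
  | nil => simp
  | cons x l ih =>
    simp only [pk_cons] at h
    intro y hy
    rcases List.mem_cons.mp hy with rfl | hy
    · omega
    · exact ih (by omega) y hy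

/-- Comparison of all fields with `512` at once: bit `9` of a field below `1024` is clear exactly
when the field is below `512`. -/
theorem pk_flag {α : Type} (f : α → ℕ) (l : List α) (h : ∀ x ∈ l, f x < 1024) :
    Nat.xor (pk (l.map fun _ => 512)) (Nat.land (pk (l.map fun _ => 512)) (pk (l.map f)))
      = pk (l.map fun x => if f x < 512 then 512 else 0) := by
  induction l with
  | nil => simp only [List.map_nil, pk_nil]; decide
  | cons x l ih =>
    have h1 := ih fun y hy => h y (by simp [hy])
    have h2 := h x (by simp)
    have e : ∀ a b : ℕ, a + 1024 * b = 2 ^ 10 * b + a := fun a b => by ring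
    change (pk (l.map fun _ => 512)) ^^^ ((pk (l.map fun _ => 512)) &&& (pk (l.map f))) = _ at h1
    change (pk ((x :: l).map fun _ => 512)) ^^^ ((pk ((x :: l).map fun _ => 512)) &&& (pk ((x :: l).map f))) = _
    simp only [List.map_cons, pk_cons, ← h1, e]
    apply Nat.eq_of_testBit_eq
    intro i
    have h512 : (512:ℕ) < 2 ^ 10 := by norm_num
    have h3 : (if f x < 512 then 512 else 0) < 2 ^ 10 := by split_ifs <;> norm_num
    simp only [Nat.testBit_xor, Nat.testBit_and, Nat.testBit_two_pow_mul_add _ h512,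
      Nat.testBit_two_pow_mul_add _ h3, Nat.testBit_two_pow_mul_add _ (show f x < 2 ^ 10 from h2)]
    split_ifs with hi hf
    · have : (512 : ℕ) = 2 ^ 9 := by norm_num
      rw [this, Nat.testBit_two_pow]
      by_cases h9 : 9 = i
      · subst h9; simp [Nat.testBit_lt_two_pow (show f x < 2 ^ 9 from hf)]
      · simp [h9]
    · have : (512 : ℕ) = 2 ^ 9 := by norm_num
      rw [this, Nat.testBit_two_pow]
      by_cases h9 : 9 = i
      · subst h9
        have : (f x).testBit 9 = true := by
          rw [Nat.testBit_eq_decide_div_mod_eq]; norm_num; omega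
        simp [this]
      · simp [h9]
    · rfl

/-- The admissible values of one coordinate, each paired with its weight. -/
abbrev Row := List (ℕ × ℕ)

/-- The vectors with entries in the given rows and total weight at most `n`, in lexicographic order.
-/
def adm : List Row → ℕ → List (List (ℕ × ℕ))
  | [], _ => [[]]
  | r :: rs, n => r.flatMap fun a => if a.2 ≤ n then (adm rs (n - a.2)).map (a :: ·) else []

theorem mem_adm {rows : List Row} {xs : List (ℕ × ℕ)} {n : ℕ}
    (h : List.Forall₂ (fun a r => a ∈ r) xs rows) (hn : (xs.map Prod.snd).sum ≤ n) :
    xs ∈ adm rows n := by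
  induction h generalizing n with
  | nil => simp [adm]
  | @cons a r xs rs ha _ ih =>
    simp only [List.map_cons, List.sum_cons] at hn
    simp only [adm, List.mem_flatMap]
    refine ⟨a, ha, ?_⟩
    rw [if_pos (by omega)]
    exact List.mem_map.mpr ⟨xs, ih (by omega), rfl⟩

theorem adm_wt {rows : List Row} {xs : List (ℕ × ℕ)} {n : ℕ} (h : xs ∈ adm rows n) :
    (xs.map Prod.snd).sum ≤ n := by
  induction rows generalizing n xs with
  | nil => simp [adm] at h; simp [h]
  | cons r rs ih =>
    simp only [adm, List.mem_flatMap] at h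
    obtain ⟨a, -, h⟩ := h
    split_ifs at h with hn
    · obtain ⟨ys, hy, rfl⟩ := List.mem_map.mp h
      have := ih hy
      simp; omega
    · simp at h

/-- Concatenation of the packed tables `g a (n - weight of a)` over the values `a` of one
coordinate; `len` gives the number of fields of each table. -/
def piece (n : ℕ) (len : List ℕ) (g : ℕ × ℕ → ℕ → ℕ) (row : Row) : ℕ :=
  List.rec 0 (fun a _ ih => iteb (Nat.ble a.2 n)
    (Nat.add (g a (Nat.sub n a.2)) (Nat.shiftLeft ih (Nat.mul 10 (lnth 0 len (Nat.sub n a.2))))) ih) row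

theorem piece_eq (n : ℕ) (len : List ℕ) (g : ℕ × ℕ → ℕ → ℕ) (row : Row)
    (h : ℕ × ℕ → ℕ → List ℕ) (hg : ∀ a ∈ row, a.2 ≤ n → g a (n - a.2) = pk (h a (n - a.2)))
    (hl : ∀ a ∈ row, a.2 ≤ n → lnth 0 len (n - a.2) = (h a (n - a.2)).length) :
    piece n len g row = pk (row.flatMap fun a => if a.2 ≤ n then h a (n - a.2) else []) := by
  induction row with
  | nil => rfl
  | cons a row ih =>
    have ih := ih (fun b hb => hg b (by simp [hb])) (fun b hb => hl b (by simp [hb]))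
    have e : piece n len g (a :: row) = iteb (Nat.ble a.2 n)
      (g a (n - a.2) + (piece n len g row) <<< (10 * (lnth 0 len (n - a.2)))) (piece n len g row) := rfl
    rw [e, iteb_ble, ih, List.flatMap_cons]
    split_ifs with hn
    · rw [hg a (by simp) hn, hl a (by simp) hn, pk_append, Nat.shiftLeft_eq]; ring
    · simp

/-- The numbers of vectors in `adm`, for every final segment of the rows and every bound in `ns`. -/
def lens (ns : List ℕ) (rows : List Row) : List (List ℕ) :=
  List.rec [lmap (fun _ => 1) ns] (fun r _ ih =>
    lmap (fun n => lsum (fun a => iteb (Nat.ble a.2 n) (lnth 0 (lnth [] ih 0) (Nat.sub n a.2)) 0) r) ns :: ih) rows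

theorem lnth_range (f : ℕ → ℕ) {E n : ℕ} (h : n ≤ E) : lnth 0 (lmap f (List.range (E + 1))) n = f n := by
  rw [lnth_eq, lmap_eq, List.getD_eq_getElem _ _ (by simpa using by omega)]
  simp

theorem lnth_range' {α : Type} (d : α) (f : ℕ → α) {E n : ℕ} (h : n < E) :
    lnth d (lmap f (List.range E)) n = f n := by
  rw [lnth_eq, lmap_eq, List.getD_eq_getElem _ _ (by simpa using by omega)]
  simp

theorem lens_eq (E : ℕ) (rows : List Row) {n : ℕ} (h : n ≤ E) :
    lnth 0 (lnth [] (lens (List.range (E + 1)) rows) 0) n = (adm rows n).length := by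
  induction rows generalizing n with
  | nil => exact lnth_range _ h
  | cons r rs ih =>
    refine (lnth_range _ h).trans ?_
    rw [lsum_eq]
    simp only [adm, List.length_flatMap]
    congr 1
    apply List.map_congr_left
    intro a _
    rw [iteb_ble]
    split_ifs with hn
    · rw [List.length_map]; exact ih (le_trans (Nat.sub_le _ _) h)
    · rfl

/-- The packed tables with all fields `1`, indexed like `lens`. -/
def ones (ns : List ℕ) (rows : List Row) : List (List ℕ) → List (List ℕ) :=
  List.rec (fun _ => [lmap (fun _ => 1) ns])
   (fun row _ ih lens =>
     (fun old => lmap (fun n => piece n (lnth [] lens 1) (fun _ m => (lnth 0 (lnth [] old 0) m)) row) ns :: old)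
      (ih (List.tail lens))) rows

/-- `piece` turns packed tables over `adm rs` into a packed table over `adm (r :: rs)`. -/
theorem pk_adm_cons (E : ℕ) (r : Row) (rs : List Row) {n : ℕ} (h : n ≤ E) (F : List (ℕ × ℕ) → ℕ)
    (g : ℕ × ℕ → ℕ → ℕ)
    (hg : ∀ a ∈ r, ∀ m ≤ E, g a m = pk ((adm rs m).map fun xs => F (a :: xs))) :
    piece n (lnth [] (lens (List.range (E + 1)) (r :: rs)) 1) g r = pk ((adm (r :: rs) n).map F) := by
  have hl : lnth [] (lens (List.range (E + 1)) (r :: rs)) 1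
      = lnth [] (lens (List.range (E + 1)) rs) 0 := rfl
  rw [hl, piece_eq n _ _ _ (fun a m => (adm rs m).map fun xs => F (a :: xs))]
  · congr 1
    simp only [adm, List.map_flatMap]
    congr 1
    funext a
    split_ifs <;> simp
  · intro a ha hn
    exact hg a ha _ (by omega)
  · intro a _ hn
    rw [lens_eq E rs (by omega)]; simp

theorem ones_eq (E : ℕ) (rows : List Row) {n : ℕ} (h : n ≤ E) :
    lnth 0 (lnth [] (ones (List.range (E + 1)) rows (lens (List.range (E + 1)) rows)) 0) n
      = pk ((adm rows n).map fun _ => 1) := by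
  induction rows generalizing n with
  | nil => exact lnth_range _ h
  | cons r rs ih =>
    refine (lnth_range _ h).trans ?_
    exact pk_adm_cons E r rs h _ _ fun a _ m hm => ih hm

/-- The packed tables of the weights of the vectors in `adm rows n`. -/
def normTab (ns : List ℕ) (rows : List Row) : List (List ℕ) → List (List ℕ) → List ℕ :=
  List.rec (fun _ _ => lmap (fun _ => 0) ns)
   (fun row _ ih lens ones =>
     (fun old => lmap (fun n => piece n (lnth [] lens 1)
        (fun a m => Nat.add (lnth 0 old m) (Nat.mul a.2 (lnth 0 (lnth [] ones 1) m))) row) ns)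
      (ih (List.tail lens) (List.tail ones))) rows

theorem normTab_eq (E : ℕ) (rows : List Row) {n : ℕ} (h : n ≤ E) :
    lnth 0 (normTab (List.range (E + 1)) rows (lens (List.range (E + 1)) rows)
      (ones (List.range (E + 1)) rows (lens (List.range (E + 1)) rows))) n
      = pk ((adm rows n).map fun xs => (xs.map Prod.snd).sum) := by
  induction rows generalizing n with
  | nil => exact lnth_range _ h
  | cons r rs ih =>
    refine (lnth_range _ h).trans ?_
    apply pk_adm_cons E r rs h
    intro a _ m hm
    have := ones_eq E rs hm
    refine (congrArg₂ (fun x y => x + a.2 * y) (ih hm) this).trans ?_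
    simp only [List.map_cons, List.sum_cons]
    rw [← pk_map_mul, ← pk_map_add]
    simp [Nat.add_comm]

/-- The packed tables of the weights of one check coordinate, for every residue `c` contributed by
the coordinates outside `rows` and every bound in `ns`; `f` is the weight of a residue. -/
def colTab (p : ℕ) (ns : List ℕ) (f : List ℕ) (rows : List Row) : List (List ℕ) → List ℕ → List (List ℕ) :=
  List.rec (fun _ _ => lmap (fun c => lmap (fun _ => lnth 0 f c) ns) (List.range p))
   (fun row _ ih lens coefs =>
     (fun old => lmap (fun c => lmap (fun n => piece n (lnth [] lens 1)
        (fun a m => lnth 0 (lnth [] old (Nat.mod (Nat.add c (Nat.mul a.1 (lnth 0 coefs 0))) p)) m) row) ns) (List.range p))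
      (ih (List.tail lens) (List.tail coefs))) rows

/-- The weight of one check coordinate, where `coefs` are its coefficients at the vector and `c` is
the contribution of the other coordinates. -/
def cval (p : ℕ) (f : List ℕ) : List (ℕ × ℕ) → List ℕ → ℕ → ℕ
  | [], _, c => lnth 0 f c
  | a :: xs, coefs, c => cval p f xs coefs.tail ((c + a.1 * lnth 0 coefs 0) % p)

theorem colTab_eq (p E : ℕ) (hp : 0 < p) (f : List ℕ) (rows : List Row) (coefs : List ℕ) {n c : ℕ} (h : n ≤ E) (hc : c < p) :
    lnth 0 (lnth [] (colTab p (List.range (E + 1)) f rows (lens (List.range (E + 1)) rows) coefs) c) n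
      = pk ((adm rows n).map fun xs => cval p f xs coefs c) := by
  induction rows generalizing n c coefs with
  | nil =>
    refine (congrArg (lnth 0 · n) (lnth_range' _ _ hc)).trans ?_
    refine (lnth_range _ h).trans ?_
    simp [adm, cval]
  | cons r rs ih =>
    refine (congrArg (lnth 0 · n) (lnth_range' _ _ hc)).trans ?_
    refine (lnth_range _ h).trans ?_
    apply pk_adm_cons E r rs h
    intro a _ m hm
    exact ih coefs.tail hm (Nat.mod_lt _ hp)

/-- The packed sums of the weights of all check coordinates; the residues contributed by the other
coordinates are the fields of `w`. -/
def sumCols (m p : ℕ) (tabs : List (List (List ℕ))) : ℕ → ℕ :=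
  List.rec (fun _ => 0) (fun t _ ih w =>
    Nat.add (lnth 0 (lnth [] t (Nat.mod (Nat.mod w 1024) p)) m) (ih (Nat.div w 1024))) tabs

/-- A check coordinate: the weights of its residues, and its coefficients. -/
abbrev Col := List ℕ × List ℕ

/-- The sum of the weights of all check coordinates. -/
def colsum (p : ℕ) (xs : List (ℕ × ℕ)) : List Col → List ℕ → ℕ
  | [], _ => 0
  | q :: qs, cs => cval p q.1 xs q.2 (lnth 0 cs 0 % p) + colsum p xs qs cs.tail

theorem sumCols_eq (p E : ℕ) (hp : 0 < p) (rows : List Row) (cols : List Col) (cs : List ℕ)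
    (hcs : ∀ x ∈ cs, x < 1024) {n : ℕ} (h : n ≤ E) :
    sumCols n p (lmap (fun q : Col => colTab p (List.range (E + 1)) q.1 rows (lens (List.range (E + 1)) rows) q.2) cols) (pk cs)
      = pk ((adm rows n).map fun xs => colsum p xs cols cs) := by
  induction cols generalizing cs with
  | nil =>
    change 0 = _
    simp only [colsum]
    induction adm rows n with
    | nil => rfl
    | cons x l ih => simp only [List.map_cons, pk_cons, ← ih]
  | cons q qs ih =>
    have h0 : pk cs % 1024 = lnth 0 cs 0 := by
      cases cs with
      | nil => rfl
      | cons x l =>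
        have := hcs x (by simp)
        have : lnth 0 (x :: l) 0 = x := rfl
        rw [this, pk_cons]; omega
    have h1 : pk cs / 1024 = pk cs.tail := by
      cases cs with
      | nil => rfl
      | cons x l =>
        have := hcs x (by simp)
        rw [pk_cons, List.tail_cons]; omega
    have := ih cs.tail fun x hx => hcs x (List.mem_of_mem_tail hx)
    have e : lnth 0 (lnth [] (colTab p (List.range (E + 1)) q.1 rows
        (lens (List.range (E + 1)) rows) q.2) (pk cs % 1024 % p)) n
        = pk ((adm rows n).map fun xs => cval p q.1 xs q.2 (lnth 0 cs 0 % p)) := by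
      rw [h0]; exact colTab_eq p E hp q.1 rows q.2 h (Nat.mod_lt _ hp)
    refine (congrArg₂ (· + ·) e ((congrArg _ h1).trans this)).trans ?_
    rw [← pk_map_add]; rfl

/-! ### Bounds for the packed weights, and soundness of the enumeration -/

theorem cval_le (p B : ℕ) (f : List ℕ) (hf : ∀ x ∈ f, x ≤ B) (xs : List (ℕ × ℕ)) (coefs : List ℕ)
    (c : ℕ) : cval p f xs coefs c ≤ B := by
  induction xs generalizing coefs c with
  | nil =>
    simp only [cval, lnth_eq]
    rcases lt_or_ge c f.length with h | h
    · rw [List.getD_eq_getElem _ _ h]; exact hf _ (List.getElem_mem h)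
    · rw [List.getD_eq_default _ _ h]; exact Nat.zero_le _
  | cons a xs ih => exact ih _ _

theorem colsum_le (p B : ℕ) (xs : List (ℕ × ℕ)) (cols : List Col)
    (hf : ∀ q ∈ cols, ∀ x ∈ q.1, x ≤ B) (cs : List ℕ) : colsum p xs cols cs ≤ B * cols.length := by
  induction cols generalizing cs with
  | nil => simp [colsum]
  | cons q qs ih =>
    have h1 := cval_le p B q.1 (hf q (by simp)) xs q.2 (lnth 0 cs 0 % p)
    have h2 := ih (fun q' hq' => hf q' (by simp [hq'])) cs.tail
    simp only [colsum, List.length_cons, Nat.mul_add]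
    omega

/-- The packed flags, `512` for every vector whose completion has total weight at most `TOT`. Here
`E - m` is the weight already used by the other information coordinates. -/
def leaf (p E TOT : ℕ) (tabs : List (List (List ℕ))) (nt os : List ℕ) (w m : ℕ) : ℕ :=
  (fun o => (fun M => Nat.xor M (Nat.land M (Nat.add (sumCols m p tabs w)
    (Nat.add (lnth 0 nt m) (Nat.mul (Nat.sub (Nat.add 511 (Nat.sub E m)) TOT) o)))))
      (Nat.mul 512 o)) (lnth 0 os m)

theorem leaf_eq (p E TOT B : ℕ) (hp : 0 < p) (rows : List Row) (cols : List Col) (cs : List ℕ)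
    (hcs : ∀ x ∈ cs, x < 1024) (hB : ∀ q ∈ cols, ∀ x ∈ q.1, x ≤ B)
    (hB' : B * cols.length + E + 511 < 1024) (hT : TOT ≤ 511) {m : ℕ} (h : m ≤ E) :
    leaf p E TOT
      (lmap (fun q : Col => colTab p (List.range (E + 1)) q.1 rows
        (lens (List.range (E + 1)) rows) q.2) cols)
      (normTab (List.range (E + 1)) rows (lens (List.range (E + 1)) rows)
        (ones (List.range (E + 1)) rows (lens (List.range (E + 1)) rows)))
      (lnth [] (ones (List.range (E + 1)) rows (lens (List.range (E + 1)) rows)) 0) (pk cs) m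
      = pk ((adm rows m).map fun xs =>
        if (xs.map Prod.snd).sum + (E - m) + colsum p xs cols cs ≤ TOT then 512 else 0) := by
  have e1 := sumCols_eq p E hp rows cols cs hcs h
  have e2 := normTab_eq E rows h
  have e3 := ones_eq E rows h
  change Nat.xor (512 * _) (Nat.land (512 * _) (_ + (_ + (511 + (E - m) - TOT) * _))) = _
  rw [e1, e2, e3, ← pk_map_mul, ← pk_map_mul, ← pk_map_add, ← pk_map_add]
  have := pk_flag (fun xs : List (ℕ × ℕ) => colsum p xs cols cs +
    ((xs.map Prod.snd).sum + (511 + (E - m) - TOT) * 1)) (adm rows m) fun xs hx => by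
      have h1 := colsum_le p B xs cols hB cs
      have h2 := adm_wt hx
      omega
  refine Eq.trans ?_ (this.trans ?_)
  · simp
  · congr 1
    apply List.map_congr_left
    intro xs _
    exact if_congr (by omega) rfl rfl

/-- Splits the packed flags `F` according to the value of one coordinate and continues with `rec`.
-/
def scanRow (rec : ℕ → ℕ → ℕ → ℕ → ℕ) (W : ℕ) (len : List ℕ) (n w u : ℕ) (row : Row) : ℕ → ℕ :=
  List.rec (fun _ => 0) (fun a _ ih F => iteb (Nat.ble a.2 n)
    ((fun k => Nat.add
      (rec (Nat.sub n a.2) (Nat.add w (Nat.mul a.1 W)) (Nat.add (Nat.mul u 32) a.2)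
        (Nat.mod F (Nat.shiftLeft 1 k)))
      (ih (Nat.shiftRight F k))) (Nat.mul 10 (lnth 0 len (Nat.sub n a.2))))
    (ih F)) row

/-- Visits the vectors with nonzero flag in `F`, summing `fin` of the accumulated check word and of
the accumulated base `32` digits of weights; it stops at once where no flag is set. -/
def scan (fin : ℕ → ℕ → ℕ) (rows : List Row) : List (List ℕ) → List ℕ → ℕ → ℕ → ℕ → ℕ → ℕ :=
  List.rec (fun _ _ _ w u F => iteb (Nat.beq F 0) 0 (fin w u))
    (fun row _ ih lens words n w u F => iteb (Nat.beq F 0) 0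
      (scanRow (ih (List.tail lens) (List.tail words)) (lnth 0 words 0) (lnth [] lens 1)
        n w u row F)) rows

/-- The packed check word accumulated along a vector. -/
def wacc : List (ℕ × ℕ) → List ℕ → ℕ → ℕ
  | [], _, w => w
  | a :: xs, words, w => wacc xs words.tail (w + a.1 * lnth 0 words 0)

/-- The base `32` number of weights accumulated along a vector. -/
def uacc : List (ℕ × ℕ) → ℕ → ℕ
  | [], u => u
  | a :: xs, u => uacc xs (u * 32 + a.2)

theorem scanRow_sound (rec : ℕ → ℕ → ℕ → ℕ → ℕ) (W : ℕ) (len : List ℕ) (n w u : ℕ) (row : Row)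
    (h : ℕ × ℕ → List ℕ) (hl : ∀ a ∈ row, a.2 ≤ n → lnth 0 len (n - a.2) = (h a).length)
    (hb : ∀ a ∈ row, ∀ x ∈ h a, x < 1024)
    (h0 : scanRow rec W len n w u row
      (pk (row.flatMap fun a => if a.2 ≤ n then h a else [])) = 0) :
    ∀ a ∈ row, a.2 ≤ n → rec (n - a.2) (w + a.1 * W) (u * 32 + a.2) (pk (h a)) = 0 := by
  induction row with
  | nil => simp
  | cons a row ih =>
    have ih := ih (fun b hb => hl b (by simp [hb])) (fun b hb' => hb b (by simp [hb']))
    have e : ∀ F, scanRow rec W len n w u (a :: row) F = iteb (Nat.ble a.2 n)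
      (rec (n - a.2) (w + a.1 * W) (u * 32 + a.2) (F % (1 <<< (10 * (lnth 0 len (n - a.2)))))
        + scanRow rec W len n w u row (F >>> (10 * (lnth 0 len (n - a.2)))))
      (scanRow rec W len n w u row F) := fun F => rfl
    rw [e, iteb_ble, List.flatMap_cons] at h0
    by_cases hn : a.2 ≤ n
    · rw [if_pos hn, if_pos hn, hl a (by simp) hn, pk_append, Nat.shiftRight_eq_div_pow,
        Nat.one_shiftLeft, Nat.add_mul_mod_self_left, Nat.add_mul_div_left _ _ (by positivity),
        Nat.mod_eq_of_lt (pk_lt (hb a (by simp))), Nat.div_eq_of_lt (pk_lt (hb a (by simp))),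
        Nat.zero_add] at h0
      obtain ⟨h1, h2⟩ := Nat.add_eq_zero_iff.mp h0
      intro b hb' hbn
      rcases List.mem_cons.mp hb' with rfl | hb'
      · exact h1
      · exact ih h2 b hb' hbn
    · rw [if_neg hn, if_neg hn, List.nil_append] at h0
      intro b hb' hbn
      rcases List.mem_cons.mp hb' with rfl | hb'
      · exact absurd hbn hn
      · exact ih h0 b hb' hbn

theorem scan_sound (E : ℕ) (fin : ℕ → ℕ → ℕ) (rows : List Row) (words : List ℕ) {n : ℕ} (w u : ℕ)
    (h : n ≤ E) (flag : List (ℕ × ℕ) → ℕ) (hb : ∀ xs, flag xs < 1024)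
    (h0 : scan fin rows (lens (List.range (E + 1)) rows) words n w u
      (pk ((adm rows n).map flag)) = 0) :
    ∀ xs ∈ adm rows n, flag xs ≠ 0 → fin (wacc xs words w) (uacc xs u) = 0 := by
  induction rows generalizing n w u words flag with
  | nil =>
    intro xs hx hf
    have hx : xs = [] := by simpa [adm] using hx
    subst hx
    have e : ∀ F, scan fin [] (lens (List.range (E + 1)) []) words n w u F
      = iteb (Nat.beq F 0) 0 (fin w u) := fun F => rfl
    rw [e, iteb_beq] at h0
    simpa [adm, hf, wacc, uacc] using h0
  | cons r rs ih =>
    have e : ∀ F, scan fin (r :: rs) (lens (List.range (E + 1)) (r :: rs)) words n w u F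
      = iteb (Nat.beq F 0) 0 (scanRow (scan fin rs (lens (List.range (E + 1)) rs) words.tail)
        (lnth 0 words 0) (lnth [] (lens (List.range (E + 1)) rs) 0) n w u r F) := fun F => rfl
    rw [e, iteb_beq] at h0
    intro xs hx hf
    rw [if_neg] at h0
    swap
    · intro hz
      exact hf (pk_eq_zero hz _ (List.mem_map.mpr ⟨xs, hx, rfl⟩))
    have e2 : (adm (r :: rs) n).map flag = r.flatMap fun a =>
        if a.2 ≤ n then (adm rs (n - a.2)).map (fun ys => flag (a :: ys)) else [] := by
      simp only [adm, List.map_flatMap]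
      congr 1
      funext a
      split_ifs <;> simp
    rw [e2] at h0
    have key := scanRow_sound _ _ _ n w u r
      (fun a => (adm rs (n - a.2)).map (fun ys => flag (a :: ys)))
      (fun a _ hn => by rw [lens_eq E rs (by omega)]; simp)
      (fun a _ x hx => by
        obtain ⟨ys, -, rfl⟩ := List.mem_map.mp hx
        exact hb _) h0
    simp only [adm, List.mem_flatMap] at hx
    obtain ⟨a, ha, hx⟩ := hx
    split_ifs at hx with hn
    · obtain ⟨ys, hy, rfl⟩ := List.mem_map.mp hx
      exact ih words.tail _ _ (by omega) (fun ys => flag (a :: ys)) (fun ys => hb _)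
        (key a ha hn) ys hy hf
    · simp at hx

/-- The enumeration of the information coordinates that are assigned one at a time. -/
def right (leafF : ℕ → ℕ → ℕ → ℕ) (rows : List Row) : List ℕ → ℕ → ℕ → ℕ → ℕ :=
  List.rec (fun _ w u m => leafF w u m)
   (fun row _ ih words w u m => lsum (fun a => iteb (Nat.ble a.2 m)
      (ih (List.tail words) (Nat.add w (Nat.mul a.1 (lnth 0 words 0)))
        (Nat.add (Nat.mul u 32) a.2) (Nat.sub m a.2)) 0) row) rows

theorem right_sound (leafF : ℕ → ℕ → ℕ → ℕ) (rows : List Row) (words : List ℕ) (w u m : ℕ)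
    (h0 : right leafF rows words w u m = 0) (xs : List (ℕ × ℕ))
    (hx : List.Forall₂ (fun a r => a ∈ r) xs rows) (hm : (xs.map Prod.snd).sum ≤ m) :
    leafF (wacc xs words w) (uacc xs u) (m - (xs.map Prod.snd).sum) = 0 := by
  induction hx generalizing words w u m with
  | nil => exact h0
  | @cons a r xs rs ha _ ih =>
    have e : right leafF (r :: rs) words w u m = lsum (fun a => iteb (Nat.ble a.2 m)
      (right leafF rs words.tail (w + a.1 * lnth 0 words 0) (u * 32 + a.2) (m - a.2)) 0) r := rfl
    rw [e, lsum_eq, List.sum_eq_zero_iff] at h0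
    simp only [List.map_cons, List.sum_cons] at hm ⊢
    have := h0 _ (List.mem_map.mpr ⟨a, ha, rfl⟩)
    rw [iteb_ble, if_pos (by omega)] at this
    have := ih _ _ _ _ this (by omega)
    rwa [Nat.sub_sub] at this

/-- Appends the weights of the check coordinates to the base `32` digits `u`. -/
def finY (p : ℕ) (fs : List (List ℕ)) : ℕ → ℕ → ℕ :=
  List.rec (fun _ u => u) (fun f _ ih w u =>
    ih (Nat.div w 1024) (Nat.add (Nat.mul u 32) (lnth 0 f (Nat.mod (Nat.mod w 1024) p)))) fs

/-- The search: coordinates in `rowsR` are assigned one at a time, those in `rowsL` simultaneously.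
The tables are bound by applied functions, so that they are computed once. -/
def run (p E TOT : ℕ) (chk : ℕ → ℕ) (rowsR rowsL : List Row) (wR wL : List ℕ)
    (cols : List Col) : ℕ :=
  (fun ls => (fun os => (fun tabs => (fun nt => (fun o =>
    right (fun w u m => scan (fun w' u' => chk (finY p (lmap Prod.fst cols) w' u'))
        rowsL ls wL m w u (leaf p E TOT tabs nt o w m)) rowsR wR 0 0 E)
    (lnth [] os 0))
    (normTab (List.range (Nat.succ E)) rowsL ls os))
    (lmap (fun q : Col => colTab p (List.range (Nat.succ E)) q.1 rowsL ls q.2) cols))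
    (ones (List.range (Nat.succ E)) rowsL ls)) (lens (List.range (Nat.succ E)) rowsL)

theorem run_sound (p E TOT B : ℕ) (chk : ℕ → ℕ) (rowsR rowsL : List Row) (wR wL : List ℕ)
    (cols : List Col) (hp : 0 < p) (hB : ∀ q ∈ cols, ∀ x ∈ q.1, x ≤ B)
    (hB' : B * cols.length + E + 511 < 1024) (hT : TOT ≤ 511)
    (h0 : run p E TOT chk rowsR rowsL wR wL cols = 0)
    (xs ys : List (ℕ × ℕ)) (hx : List.Forall₂ (fun a r => a ∈ r) xs rowsR)
    (hy : List.Forall₂ (fun a r => a ∈ r) ys rowsL)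
    (hE : (xs.map Prod.snd).sum + (ys.map Prod.snd).sum ≤ E)
    (cs : List ℕ) (hcs : ∀ x ∈ cs, x < 1024) (hw : wacc xs wR 0 = pk cs)
    (ht : (xs.map Prod.snd).sum + (ys.map Prod.snd).sum + colsum p ys cols cs ≤ TOT) :
    chk (finY p (cols.map Prod.fst) (wacc ys wL (pk cs)) (uacc ys (uacc xs 0))) = 0 := by
  have h1 := right_sound _ rowsR wR 0 0 E h0 xs hx (by omega)
  simp only [hw] at h1
  have h2 := leaf_eq p E TOT B hp rowsL cols cs hcs hB hB' hT
    (m := E - (xs.map Prod.snd).sum) (Nat.sub_le _ _)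
  have h3 := scan_sound E _ rowsL wL (n := E - (xs.map Prod.snd).sum) (pk cs) (uacc xs 0)
    (Nat.sub_le _ _) _ (fun _ => by split_ifs <;> norm_num) ((congrArg _ h2.symm).trans h1)
    ys (mem_adm hy (by omega)) (by rw [if_pos (by omega)]; norm_num)
  rwa [lmap_eq] at h3

/-! ### The search over a code with 16 information and 16 check coordinates -/

theorem wacc_map (x wt word : ℕ → ℕ) (I : List ℕ) (w : ℕ) :
    wacc (I.map fun i => (x i, wt i)) (I.map word) w = w + (I.map fun i => x i * word i).sum := by
  induction I generalizing w with
  | nil => rfl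
  | cons i I ih =>
    refine (ih (w + x i * word i)).trans ?_
    simp [Nat.add_assoc]

theorem uacc_map (x wt : ℕ → ℕ) (I : List ℕ) (u : ℕ) :
    uacc (I.map fun i => (x i, wt i)) u = I.foldl (fun u i => u * 32 + wt i) u := by
  induction I generalizing u with
  | nil => rfl
  | cons i I ih => exact ih _

theorem cval_map (p : ℕ) (f : List ℕ) (x wt coef : ℕ → ℕ) (I : List ℕ) (c : ℕ) :
    cval p f (I.map fun i => (x i, wt i)) (I.map coef) (c % p)
      = lnth 0 f ((c + (I.map fun i => x i * coef i).sum) % p) := by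
  induction I generalizing c with
  | nil => rfl
  | cons i I ih =>
    have e : cval p f ((i :: I).map fun i => (x i, wt i)) ((i :: I).map coef) (c % p)
      = cval p f (I.map fun i => (x i, wt i)) (I.map coef) ((c % p + x i * coef i) % p) := rfl
    rw [e, Nat.mod_add_mod, ih]
    simp [Nat.add_assoc]

theorem colsum_map (p : ℕ) (xs : List (ℕ × ℕ)) (q : ℕ → Col) (c : ℕ → ℕ) (J : List ℕ) :
    colsum p xs (J.map q) (J.map c) = (J.map fun j => cval p (q j).1 xs (q j).2 (c j % p)).sum := by
  induction J with
  | nil => rfl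
  | cons j J ih =>
    simp only [List.map_cons, List.sum_cons, ← ih]; rfl

theorem finY_map (p : ℕ) (f : ℕ → List ℕ) (c : ℕ → ℕ) (J : List ℕ) (hc : ∀ j ∈ J, c j < 1024)
    (u : ℕ) : finY p (J.map f) (pk (J.map c)) u
      = J.foldl (fun u j => u * 32 + lnth 0 (f j) (c j % p)) u := by
  induction J generalizing u with
  | nil => rfl
  | cons j J ih =>
    have h1 := hc j (by simp)
    have e : finY p ((j :: J).map f) (pk ((j :: J).map c)) u
      = finY p (J.map f) (pk ((j :: J).map c) / 1024)
        (u * 32 + lnth 0 (f j) (pk ((j :: J).map c) % 1024 % p)) := rfl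
    have e1 : pk ((j :: J).map c) / 1024 = pk (J.map c) := by
      simp only [List.map_cons, pk_cons]; omega
    have e2 : pk ((j :: J).map c) % 1024 = c j := by
      simp only [List.map_cons, pk_cons]; omega
    rw [e, e1, e2, ih fun k hk => hc k (by simp [hk])]
    rfl

theorem pk_map_sum (x : ℕ → ℕ) (M : ℕ → ℕ → ℕ) (I J : List ℕ) (c : ℕ → ℕ) :
    pk (J.map c) + (I.map fun i => x i * pk (J.map (M i))).sum
      = pk (J.map fun j => c j + (I.map fun i => x i * M i j).sum) := by
  induction I generalizing c with
  | nil => simp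
  | cons i I ih =>
    simp only [List.map_cons, List.sum_cons]
    rw [← Nat.add_assoc, ← pk_map_mul, ← pk_map_add, ih]
    simp [Nat.add_assoc]

/-- The number with the `32` digits `y 0, …, y 31` in base `32`, most significant first. -/
def hz (y : ℕ → ℕ) : ℕ := (List.range 32).foldl (fun u k => u * 32 + y k) 0

/-- Check coordinate `j`, before reduction modulo `p`. -/
def sums (x : ℕ → ℕ) (M : ℕ → ℕ → ℕ) (j : ℕ) : ℕ := ((List.range 16).map fun i => x i * M i j).sum

/-- The search over all words with generator matrix `(I | M)` modulo `p`, whose information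
coordinates have total weight at most `E` and whose `32` coordinates have total weight at most
`TOT`. It is zero if and only if `chk` vanishes on all patterns of weights that occur. -/
def search (p E TOT : ℕ) (rows : ℕ → Row) (M : ℕ → ℕ → ℕ) (f : ℕ → List ℕ) (chk : ℕ → ℕ) : ℕ :=
  run p E TOT chk (lmap rows (List.range 5)) (lmap (fun i => rows (Nat.add 5 i)) (List.range 11))
    (lmap (fun i => pk (lmap (M i) (List.range 16))) (List.range 5))
    (lmap (fun i => pk (lmap (M (Nat.add 5 i)) (List.range 16))) (List.range 11))
    (lmap (fun j => (f j, lmap (fun i => M (Nat.add 5 i) j) (List.range 11))) (List.range 16))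

theorem sum_le_mul (g : ℕ → ℕ) (I : List ℕ) (B : ℕ) (h : ∀ i ∈ I, g i ≤ B) :
    (I.map g).sum ≤ I.length * B := by
  have := List.sum_le_card_nsmul (I.map g) B (by simpa using h)
  simpa using this

theorem search_sound (p E TOT : ℕ) (rows : ℕ → Row) (M : ℕ → ℕ → ℕ) (f : ℕ → List ℕ)
    (chk : ℕ → ℕ) (hp : 0 < p) (hT : TOT ≤ 511) (hE' : E ≤ 20)
    (hf : ∀ j < 16, ∀ y ∈ f j, y ≤ 12) (hM : ∀ i < 16, ∀ j < 16, M i j ≤ 6)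
    (hr : ∀ i < 16, ∀ a ∈ rows i, a.1 ≤ 6)
    (h0 : search p E TOT rows M f chk = 0)
    (x wt : ℕ → ℕ) (hx : ∀ i < 16, (x i, wt i) ∈ rows i)
    (hE : ((List.range 16).map wt).sum ≤ E)
    (ht : ((List.range 16).map wt).sum
      + ((List.range 16).map fun j => lnth 0 (f j) (sums x M j % p)).sum ≤ TOT) :
    chk (hz fun k => if k < 16 then wt k else lnth 0 (f (k - 16)) (sums x M (k - 16) % p)) = 0 := by
  have hsplit : List.range 16 = List.range 5 ++ (List.range 11).map (5 + ·) := rfl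
  have hfor : ∀ (I : List ℕ) (g : ℕ → ℕ), (∀ i ∈ I, g i < 16) →
      List.Forall₂ (fun a r => a ∈ r) (I.map fun i => (x (g i), wt (g i)))
        (I.map fun i => rows (g i)) := by
    intro I g hg
    induction I with
    | nil => exact List.Forall₂.nil
    | cons i I ih =>
      exact List.Forall₂.cons (hx _ (hg i (by simp))) (ih fun k hk => hg k (by simp [hk]))
  have hwt : ((List.range 16).map wt).sum
      = ((List.range 5).map wt).sum + ((List.range 11).map fun i => wt (5 + i)).sum := by
    rw [hsplit, List.map_append, List.sum_append, List.map_map]; rfl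
  have hsum : ∀ j, sums x M j = ((List.range 5).map fun i => x i * M i j).sum
      + ((List.range 11).map fun i => x (5 + i) * M (5 + i) j).sum := by
    intro j
    rw [sums, hsplit, List.map_append, List.sum_append, List.map_map]; rfl
  have hprod : ∀ i < 16, ∀ j < 16, x i * M i j ≤ 36 := fun i hi j hj =>
    (Nat.mul_le_mul (hr i hi _ (hx i hi)) (hM i hi j hj)).trans (by norm_num)
  have hlt : ∀ j < 16, sums x M j < 1024 := by
    intro j hj
    have := sum_le_mul (fun i => x i * M i j) (List.range 16) 36
      (fun i hi => hprod i (by simpa using hi) j hj)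
    rw [List.length_range] at this
    exact lt_of_le_of_lt this (by norm_num)
  set cs : List ℕ := (List.range 16).map fun j => ((List.range 5).map fun i => x i * M i j).sum
    with hcs
  have hcols : lmap (fun j => (f j, lmap (fun i => M (Nat.add 5 i) j) (List.range 11)))
      (List.range 16) = (List.range 16).map (fun j => (f j, (List.range 11).map (fun i => M (5 + i) j))) := by
    rw [lmap_eq]; simp only [lmap_eq]; rfl
  have hcol : colsum p ((List.range 11).map fun i => (x (5 + i), wt (5 + i)))
      ((List.range 16).map (fun j => (f j, (List.range 11).map (fun i => M (5 + i) j)))) cs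
      = ((List.range 16).map fun j => lnth 0 (f j) (sums x M j % p)).sum := by
    rw [hcs, colsum_map]
    refine congrArg List.sum (List.map_congr_left fun j _ => ?_)
    rw [hsum]
    exact cval_map p (f j) (fun i => x (5 + i)) (fun i => wt (5 + i)) (fun i => M (5 + i) j) _ _
  have hs1 : ((List.range 5).map fun i => (x i, wt i)).map Prod.snd = (List.range 5).map wt := by
    rw [List.map_map]; rfl
  have hs2 : ((List.range 11).map fun i => (x (5 + i), wt (5 + i))).map Prod.snd
      = (List.range 11).map fun i => wt (5 + i) := by
    rw [List.map_map]; rfl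
  unfold search at h0
  rw [hcols] at h0
  have key := run_sound p E TOT 12 chk _ _ _ _ _ hp (by
      intro q hq
      obtain ⟨j, hj, rfl⟩ := List.mem_map.mp hq
      exact hf j (by simpa using hj)) (by simp only [List.length_map, List.length_range]; omega) hT h0
    ((List.range 5).map fun i => (x i, wt i))
    ((List.range 11).map fun i => (x (5 + i), wt (5 + i)))
    (by rw [lmap_eq]; exact hfor _ id (fun i hi => by have := List.mem_range.mp hi; simp; omega))
    (by rw [lmap_eq]; exact hfor _ (5 + ·) (fun i hi => by have := List.mem_range.mp hi; omega))
    (by rw [hs1, hs2]; omega) cs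
    (by
      intro y hy
      obtain ⟨j, hj, rfl⟩ := List.mem_map.mp hy
      have := hlt j (by simpa using hj)
      rw [hsum] at this
      omega)
    (by
      rw [lmap_eq, wacc_map, hcs]
      have := pk_map_sum x M (List.range 5) (List.range 16) fun _ => 0
      simp only [Nat.zero_add] at this
      rw [← this]
      have hz : ∀ J : List ℕ, pk (J.map fun _ => 0) = 0 := by
        intro J
        induction J with
        | nil => rfl
        | cons j J ih => simp only [List.map_cons, pk_cons, ih]
      rw [hz]
      simp only [lmap_eq])
    (by rw [hs1, hs2, hcol]; omega)
  have hw : wacc ((List.range 11).map fun i => (x (5 + i), wt (5 + i)))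
      (lmap (fun i => pk (lmap (M (Nat.add 5 i)) (List.range 16))) (List.range 11)) (pk cs)
      = pk ((List.range 16).map (sums x M)) := by
    rw [lmap_eq]
    refine (wacc_map (fun i => x (5 + i)) (fun i => wt (5 + i)) _ _ _).trans ?_
    simp only [lmap_eq]
    refine (pk_map_sum (fun i => x (5 + i)) (fun i => M (5 + i)) _ _ _).trans ?_
    exact congrArg pk (List.map_congr_left fun j _ => (hsum j).symm)
  rw [hw, List.map_map] at key
  have hfin := finY_map p f (sums x M) (List.range 16) fun j hj => hlt j (by simpa using hj)
  have hu1 := uacc_map x wt (List.range 5) 0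
  have hu2 := uacc_map (fun i => x (5 + i)) (fun i => wt (5 + i)) (List.range 11)
    (uacc ((List.range 5).map fun i => (x i, wt i)) 0)
  have e : ((Prod.fst : Col → List ℕ) ∘ fun j => (f j, (List.range 11).map (fun i => M (5 + i) j))) = f := rfl
  rw [e, hfin, hu2, hu1] at key
  have h32 : List.range 32 = List.range 5 ++ ((List.range 11).map (5 + ·)
      ++ (List.range 16).map (16 + ·)) := rfl
  rw [hz, h32, List.foldl_append, List.foldl_append, List.foldl_map, List.foldl_map]
  refine Eq.trans (congrArg chk ?_) key
  have c1 : List.foldl (fun u k => u * 32 + if k < 16 then wt k else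
      lnth 0 (f (k - 16)) (sums x M (k - 16) % p)) 0 (List.range 5)
      = List.foldl (fun u i => u * 32 + wt i) 0 (List.range 5) := by
    apply List.foldl_ext
    intro u k hk
    rw [if_pos (by have := List.mem_range.mp hk; omega)]
  have c2 : ∀ u, List.foldl (fun u k => u * 32 + if 5 + k < 16 then wt (5 + k) else
      lnth 0 (f (5 + k - 16)) (sums x M (5 + k - 16) % p)) u (List.range 11)
      = List.foldl (fun u i => u * 32 + wt (5 + i)) u (List.range 11) := by
    intro u
    apply List.foldl_ext
    intro u k hk
    rw [if_pos (by have := List.mem_range.mp hk; omega)]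
  rw [c1, c2]
  apply List.foldl_ext
  intro u k _
  rw [if_neg (by omega), Nat.add_sub_cancel_left]

/-! ### Data of the codes and of the searches -/

/-- The translation `z ↦ z + 1` in the coordinates `pts`. -/
def Tl : List ℕ := [12, 7, 4, 27, 23, 26, 1, 20, 28, 10, 21, 19, 24, 2, 6, 15, 31, 22, 29, 3, 18,
  14, 30, 17, 9, 8, 25, 13, 16, 11, 5, 0]
/-- The homothety `z ↦ 9 z` in the coordinates `pts`. -/
def Rl : List ℕ := [1, 2, 3, 4, 5, 6, 7, 8, 9, 10, 11, 12, 13, 14, 0, 15, 17, 18, 19, 20, 21, 22,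
  23, 24, 25, 26, 27, 28, 29, 30, 16, 31]
/-- The inversion `z ↦ -1 / z` in the coordinates `pts`. -/
def Wl : List ℕ := [16, 30, 29, 28, 27, 26, 25, 24, 23, 22, 21, 20, 19, 18, 17, 31, 0, 14, 13, 12,
  11, 10, 9, 8, 7, 6, 5, 4, 3, 2, 1, 15]

/-- The first row of the circulant part of `Al`. -/
def rowc : List ℕ := [33, 16, 21, 26, 2, 27, 29, 29, 9, 3, 8, 21, 34, 15, 30]
def shift (l : List ℕ) : List ℕ := lnth 0 l 14 :: l.take 14
/-- The matrix `A` modulo `35` of the systematic generator matrix `(I | A)`: a bordered circulant,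
because of the symmetry `z ↦ 9 z`. -/
def Al : List (List ℕ) := lmap (fun i => (shift^[i] rowc) ++ [11]) (List.range 15) ++
  [[4, 4, 4, 4, 4, 4, 4, 4, 4, 4, 4, 4, 4, 4, 4, 33]]

def Ap (p i j : ℕ) : ℕ := Nat.mod (lnth 0 (lnth [] Al i) j) p

/-- The residues modulo `5` with their least squares. -/
def rows5 : Row := [(0,0),(1,1),(4,1),(2,4),(3,4)]
/-- The residues modulo `7` with their least squares. -/
def rows7 : Row := [(0,0),(1,1),(6,1),(2,4),(5,4),(3,9),(4,9)]
/-- The least square in each residue class modulo `5`. -/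
def sq5 : List ℕ := [0,1,4,4,1]
/-- The least square in each residue class modulo `7`. -/
def sq7 : List ℕ := [0,1,4,9,9,4,1]

/-- The list `x, f x, …, f^[n - 1] x`. -/
def iter {α : Type} (f : α → α) (n : ℕ) : α → List α :=
  Nat.rec (fun _ => []) (fun _ ih x => x :: ih (f x)) n

def lflat {α β : Type} (f : α → List β) (l : List α) : List β :=
  List.rec [] (fun x _ ih => f x ++ ih) l

/-- The images of the set of information coordinates under `T^n`, for `n < 31`. -/
def sets0 : List (List ℕ) := iter (lmap (lnth 0 Tl)) 31 (List.range 16)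
/-- The images of the set of information coordinates under `T^n` and under `T^m W T^n`. -/
def blocks : List (List (List ℕ)) :=
  sets0 :: lmap (fun S => iter (lmap (lnth 0 Tl)) 31 (lmap (lnth 0 Wl) S)) sets0
/-- The positions in `blocks` of a selection of images that suffices for the searches. -/
def sel : List ℕ := [755, 617, 439, 395, 247, 470, 729, 338, 406, 335, 84, 462, 865, 431, 379,
  191, 745, 943, 95, 604, 469, 785, 233, 644, 981, 988, 873, 989, 169, 368, 987, 691, 120, 599, 917,
  697, 948, 586, 121, 902, 497, 157, 316, 867, 142, 912, 969, 226, 851, 423, 359, 391, 663, 696,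
  365, 738, 890, 138, 592, 85, 491, 340, 414, 823, 512, 125, 184, 686, 542, 374, 855, 269, 792, 309,
  828, 471, 540, 762, 631, 305, 104, 436, 203, 70, 136, 176, 689, 640, 260, 870, 209, 680, 717, 483,
  412, 253, 508, 749, 410, 603, 845, 411, 437, 295, 378, 789, 933, 364, 950, 235, 838, 875, 877,
  966, 231, 878, 934, 543, 801, 255, 339, 571, 563, 583, 698, 102, 418, 150, 402, 716, 742, 440,
  380, 773, 518, 463, 798, 799, 451, 585, 130, 953, 506, 192, 399, 570, 719, 561, 768, 464, 952,
  970, 37, 34, 455, 974, 699, 505, 711, 714, 984, 425, 861, 223, 885, 137, 424, 239, 220, 951, 781,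
  230, 879, 705, 519, 146, 764, 905, 972, 52, 967, 582, 757, 344, 384, 228, 959, 901, 242, 565, 579,
  976, 854, 706, 809, 724, 897, 153, 241, 786, 517, 166, 526, 695, 189, 396, 864, 476, 898, 522,
  794, 141, 694, 322, 863, 511, 152, 840, 420, 394, 774, 450, 895, 759, 415, 143, 725, 514, 852,
  477, 894, 957, 765, 373, 740, 300, 728, 796, 457, 584]
def sets : List (List ℕ) := lmap (fun q => lnth [] (lnth [] blocks (Nat.div q 31)) (Nat.mod q 31)) sel
/-- The bit mask that selects the base `32` digits with index in `S`. -/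
def mask (S : List ℕ) : ℕ := lsum (fun i => Nat.mul 31 (Nat.pow 32 (Nat.sub 31 i))) S
def masks : List ℕ := lmap mask sets
/-- Zero if some mask in `l` selects digits of `Y` with sum less than `e`, one otherwise. The sum of
the digits is the residue modulo `31`. -/
def find (Y e : ℕ) (l : List ℕ) : ℕ :=
  List.rec 1 (fun m _ ih => iteb (Nat.ble (Nat.succ (Nat.mod (Nat.land Y m) 31)) e) 0 ih) l
/-- Zero if `Y` occurs in `l`, one otherwise. -/
def mem (Y : ℕ) (l : List ℕ) : ℕ := List.rec 1 (fun m _ ih => iteb (Nat.beq Y m) 0 ih) l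
/-- Patterns of squares of words modulo `5` with square sum `20` that none of the `sets` improves,
up to `z ↦ 9 z`. -/
def reps : List (List ℕ) := [
[0, 0, 0, 0, 0, 0, 0, 0, 0, 0, 0, 0, 0, 0, 0, 1, 1, 1, 1, 1, 1, 1, 1, 1, 1, 1, 1, 1, 1, 1, 1, 4],
[0, 0, 0, 0, 0, 0, 0, 0, 0, 0, 1, 1, 0, 0, 1, 1, 4, 1, 1, 0, 1, 1, 1, 0, 0, 1, 1, 1, 1, 1, 1, 1],
[0, 0, 0, 0, 0, 0, 0, 0, 0, 1, 0, 0, 0, 1, 1, 0, 1, 1, 0, 4, 0, 1, 1, 1, 0, 1, 1, 4, 1, 0, 0, 1],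
[0, 0, 0, 0, 0, 0, 0, 0, 1, 0, 1, 0, 0, 0, 1, 0, 4, 1, 0, 1, 0, 0, 4, 0, 1, 1, 1, 1, 1, 1, 0, 1],
[0, 0, 0, 0, 0, 0, 0, 0, 1, 0, 1, 0, 1, 0, 1, 1, 0, 1, 0, 1, 1, 1, 1, 1, 1, 1, 1, 0, 1, 1, 4, 0],
[0, 0, 0, 0, 0, 0, 0, 0, 1, 1, 0, 0, 0, 0, 1, 0, 1, 1, 0, 4, 0, 4, 0, 1, 1, 1, 1, 1, 1, 0, 0, 1],
[0, 0, 0, 0, 0, 0, 0, 1, 0, 1, 0, 0, 0, 1, 1, 1, 1, 0, 1, 1, 1, 1, 4, 1, 1, 1, 1, 1, 0, 1, 0, 0],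
[0, 0, 0, 0, 0, 0, 1, 0, 1, 1, 0, 1, 0, 0, 1, 0, 1, 1, 0, 1, 1, 1, 1, 4, 1, 0, 1, 1, 1, 0, 0, 1],
[0, 0, 0, 0, 0, 0, 1, 0, 1, 1, 0, 1, 0, 0, 1, 0, 1, 1, 1, 1, 1, 1, 0, 1, 4, 0, 1, 1, 0, 1, 0, 1],
[0, 0, 0, 0, 0, 0, 1, 0, 1, 1, 1, 0, 0, 0, 1, 0, 1, 1, 0, 1, 4, 1, 1, 1, 0, 0, 1, 1, 1, 0, 1, 1],
[0, 0, 0, 0, 0, 1, 0, 0, 0, 0, 1, 0, 0, 0, 1, 0, 1, 1, 1, 1, 0, 0, 1, 1, 1, 0, 1, 1, 0, 0, 4, 4],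
[0, 0, 0, 0, 0, 1, 0, 1, 1, 0, 0, 0, 1, 0, 1, 0, 1, 1, 1, 1, 1, 1, 1, 1, 1, 0, 1, 1, 1, 1, 1, 1],
[0, 0, 0, 0, 0, 1, 1, 0, 1, 1, 0, 0, 0, 0, 1, 0, 1, 1, 0, 4, 1, 1, 1, 1, 0, 1, 1, 1, 1, 0, 0, 1]]

def hzl (l : List ℕ) : ℕ → ℕ := List.rec (fun u => u) (fun x _ ih u => ih (Nat.add (Nat.mul u 32) x)) l
/-- The patterns `reps` and their images under the powers of `z ↦ 9 z`, as base `32` numbers. -/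
def base : List ℕ := lmap (fun l => hzl l 0) (lflat (iter (fun r => lmap (lnth 0 r) Rl) 15) reps)
/-- Zero if `Y` vanishes, or if it has digit sum `20` modulo `31` and is improved by one of the
`sets` or listed in `base`; one otherwise. -/
def chk5 (Y : ℕ) : ℕ := iteb (Nat.beq Y 0) 0 (iteb (Nat.beq (Nat.mod Y 31) 20)
  (iteb (Nat.beq (find Y (Nat.mod (Nat.land Y (mask (List.range 16))) 31) masks) 0) 0 (mem Y base)) 1)
/-- Evaluation of `f` at `Y`; the recursor makes the kernel reduce `Y` to a numeral first, which
avoids repeated evaluation in `f`. -/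
def force (f : ℕ → ℕ) (Y : ℕ) : ℕ := Nat.rec (f 0) (fun n _ => f (Nat.succ n)) Y

/-- The residues modulo `7` of the integers `x` with `|x| ≤ 4` and the parity of `y`, each with
weight `(x² - y % 2) / 4`. -/
def rowB (y : ℕ) : Row := iteb (Nat.beq (Nat.mod y 2) 0) [(0,0),(2,1),(5,1),(4,4),(3,4)] [(1,0),(6,0),(3,2),(4,2)]
/-- For each residue modulo `7`, the least value of `(x² - y % 2) / 4` over the integers `x` in this
class with the parity of `y`. -/
def colB (y : ℕ) : List ℕ := iteb (Nat.beq (Nat.mod y 2) 0) [0,9,1,4,4,1,9] [12,0,6,2,2,6,0]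
/-- The search for words modulo `7` of square sum `28` with the parities of `y`; the weight of `x`
is `(x² - y % 2) / 4`, so the total weight is a quarter of `28` minus the number of odd coordinates.
Every word found contributes `1`. -/
def searchB (y : List ℕ) : ℕ :=
  (fun K => search 7 K K (fun i => rowB (lnth 0 y i)) (Ap 7) (fun j => colB (lnth 0 y (Nat.add 16 j))) (fun _ => 1))
   (Nat.div (Nat.sub 28 (lsum (fun v => Nat.mod v 2) y)) 4)

/-! ### From the quadratic residue code to the systematic generator matrix -/

/-- The points of `P¹(F₃₁)` in the order of the coordinates; `31` stands for `∞`. -/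
def pts : List ℕ := [1, 9, 19, 16, 20, 25, 8, 10, 28, 4, 5, 14, 2, 18, 7, 31, 30, 22, 12, 15, 11, 6,
  23, 21, 3, 27, 26, 17, 29, 13, 24, 0]

/-- The point of `P¹(F₃₁)` with coordinate index `k`. -/
def pt (k : ℕ) : P1 := if pts.getD k 0 = 31 then none else some (pts.getD k 0 : ZMod 31)

/-- The systematic generator matrix `(I | A)` of the code. -/
def G (i k : ℕ) : ℕ := if k < 16 then (if k = i then 1 else 0) else lnth 0 (lnth [] Al i) (k - 16)

/-- `a` is a word of the code reduced modulo `m`. -/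
def Sys (m : ℕ) (a : ℕ → ℤ) : Prop :=
  ∀ k < 32, (a k : ZMod m) = ∑ i ∈ Finset.range 16, (a i : ZMod m) * (G i k : ZMod m)

/-- The nonzero squares modulo `31`. -/
def qr : List (ZMod 31) := [1, 2, 4, 5, 7, 8, 9, 10, 14, 16, 18, 19, 20, 25, 28]

theorem isSquare_iff : ∀ x : ZMod 31, x ≠ 0 → (IsSquare x ↔ x ∈ qr) := by
  decide +kernel

/-- The generator `vgen μ` in a form whose entries can be computed. -/
def vq (μ : ZMod 31) : P1 → ZMod 35
  | none => 2
  | some z => if z = μ then 1 else if μ - z ∈ qr then 7 else 3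

theorem vgen_eq (μ : ZMod 31) : vgen μ = vq μ := by
  funext ν
  cases ν with
  | none => rfl
  | some z =>
    simp only [vgen, vq]
    split_ifs with h1 h2 h3 h3
    · rfl
    · rfl
    · exact absurd ((isSquare_iff _ (sub_ne_zero.mpr (Ne.symm h1))).mp h2) h3
    · exact absurd ((isSquare_iff _ (sub_ne_zero.mpr (Ne.symm h1))).mpr h3) h2
    · rfl

theorem vq_sys : ∀ μ : ZMod 31, ∀ k < 32,
    vq μ (pt k) = ∑ i ∈ Finset.range 16, vq μ (pt i) * (G i k : ZMod 35) := by
  decide +kernel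

theorem word_sys {w : P1 → ZMod 35} (hw : w ∈ Qcode) :
    ∀ k < 32, w (pt k) = ∑ i ∈ Finset.range 16, w (pt i) * (G i k : ZMod 35) := by
  induction hw using AddSubgroup.closure_induction with
  | mem x hx => obtain ⟨μ, rfl⟩ := hx; rw [vgen_eq]; exact vq_sys μ
  | zero => intro k _; simp
  | add x y _ _ hx hy =>
    intro k hk
    simp only [Pi.add_apply, add_mul, Finset.sum_add_distrib, hx k hk, hy k hk]
  | neg x _ hx =>
    intro k hk
    simp only [Pi.neg_apply, neg_mul, Finset.sum_neg_distrib, hx k hk]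

theorem sum_pt (f : P1 → ℚ) : ∑ ν : P1, f ν = ∑ k ∈ Finset.range 32, f (pt k) := by
  symm
  refine Finset.sum_nbij pt (fun _ _ => Finset.mem_univ _) ?_ ?_ fun _ _ => rfl
  · have h : ∀ k < 32, ∀ l < 32, pt k = pt l → k = l := by decide +kernel
    intro k hk l hl
    exact h k (by simpa using hk) l (by simpa using hl)
  · have h : ∀ ν : P1, ∃ k < 32, pt k = ν := by decide +kernel
    intro ν _
    obtain ⟨k, hk, e⟩ := h ν
    exact ⟨k, by simpa using hk, e⟩

/-! ### From the lattice to words modulo 5 and modulo 7 -/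

theorem sys_of_cast {m : ℕ} (c : ZMod 35 →+* ZMod m) (s : ZMod m) {w : P1 → ZMod 35}
    (hw : w ∈ Qcode) {a : ℕ → ℤ} (ha : ∀ k, (a k : ZMod m) = s * c (w (pt k))) : Sys m a := by
  intro k hk
  simp only [ha]
  rw [word_sys hw k hk, map_sum, Finset.mul_sum]
  refine Finset.sum_congr rfl fun i _ => ?_
  rw [map_mul, map_natCast, mul_assoc]

/-- Each component `x = m u + k` of a vector of `L_Q` is described by the integers
`a = 5 (x₀ - x₁)` and `b = 7 (x₀ + x₁)`, which have the same parity and satisfy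
`70 ⟨x, x⟩ = 7 a² + 5 b²`; these give codewords modulo `5` and modulo `7`. -/
theorem exists_ab {v : P1 → Fin 2 → ℚ} (hv : v ∈ LQ) : ∃ a b : ℕ → ℤ, Sys 5 a ∧ Sys 7 b ∧
    (∀ k, (2 : ℤ) ∣ a k - b k) ∧ (∀ k, (4 : ℤ) ∣ 7 * a k ^ 2 + 5 * b k ^ 2) ∧
    (∀ k, 70 * B2 (v (pt k)) (v (pt k)) = ((7 * a k ^ 2 + 5 * b k ^ 2 : ℤ) : ℚ)) := by
  obtain ⟨w, hw, h⟩ := hv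
  choose m hm hk using h
  choose z hz using hk
  have hv0 : ∀ ν, v ν 0 = m ν * (34 / 35) + z ν 0 := by
    intro ν
    have := hz ν 0
    simp [uvec] at this
    linarith
  have hv1 : ∀ ν, v ν 1 = m ν * (6 / 35) + z ν 1 := by
    intro ν
    have := hz ν 1
    simp [uvec] at this
    linarith
  refine ⟨fun k => 4 * m (pt k) + 5 * (z (pt k) 0 - z (pt k) 1),
    fun k => 8 * m (pt k) + 7 * (z (pt k) 0 + z (pt k) 1), ?_, ?_, ?_, ?_, ?_⟩
  · refine sys_of_cast (ZMod.castHom (by norm_num : 5 ∣ 35) (ZMod 5)) (-1) hw fun k => ?_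
    rw [← hm, map_intCast]
    push_cast
    have h4 : (4 : ZMod 5) = -1 := by decide
    have h5 : (5 : ZMod 5) = 0 := by decide
    rw [h4, h5]; ring
  · refine sys_of_cast (ZMod.castHom (by norm_num : 7 ∣ 35) (ZMod 7)) 1 hw fun k => ?_
    rw [← hm, map_intCast]
    push_cast
    have h4 : (8 : ZMod 7) = 1 := by decide
    have h5 : (7 : ZMod 7) = 0 := by decide
    rw [h4, h5]; ring
  · intro k
    exact ⟨-2 * m (pt k) - z (pt k) 0 - 6 * z (pt k) 1, by ring⟩
  · intro k
    exact ⟨108 * m (pt k) ^ 2 + 210 * m (pt k) * z (pt k) 0 + 70 * m (pt k) * z (pt k) 1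
      + 105 * z (pt k) 0 ^ 2 + 35 * z (pt k) 0 * z (pt k) 1 + 105 * z (pt k) 1 ^ 2, by ring⟩
  · intro k
    simp only [B2, hv0, hv1]
    push_cast
    ring

/-! ### Automorphisms of the codes -/

/-- Composition with `g`, followed by suitable signs, preserves the code modulo `m`. The signs may
depend on the word in this definition, but they do not in the applications. -/
def Mono (m : ℕ) (g : ℕ → ℕ) : Prop := ∀ a, Sys m a →
  ∃ ε : ℕ → ℤ, (∀ k, ε k = 1 ∨ ε k = -1) ∧ Sys m fun k => ε k * a (g k)

/-- A permutation of the coordinates that induces automorphisms of both codes up to signs. -/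
structure Inv (g : ℕ → ℕ) : Prop where
  perm : ((List.range 32).map g).Perm (List.range 32)
  five : Mono 5 g
  seven : Mono 7 g

theorem Inv.lt {g : ℕ → ℕ} (h : Inv g) {k : ℕ} (hk : k < 32) : g k < 32 := by
  have := h.perm.mem_iff (a := g k)
  rw [List.mem_map, List.mem_range] at this
  exact this.mp ⟨k, List.mem_range.mpr hk, rfl⟩

theorem Inv.sum {g : ℕ → ℕ} (h : Inv g) {M : Type*} [AddCommMonoid M] (f : ℕ → M) :
    ∑ k ∈ Finset.range 32, f (g k) = ∑ k ∈ Finset.range 32, f k := by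
  have := (h.perm.map f).sum_eq
  rw [List.map_map] at this
  exact this

theorem Mono.comp {m : ℕ} {g h : ℕ → ℕ} (hg : Mono m g) (hh : Mono m h) :
    Mono m fun k => g (h k) := by
  intro a ha
  obtain ⟨ε, hε, h1⟩ := hg a ha
  obtain ⟨δ, hδ, h2⟩ := hh _ h1
  refine ⟨fun k => δ k * ε (h k), fun k => ?_, ?_⟩
  · rcases hδ k with e | e <;> rcases hε (h k) with e' | e' <;> simp [e, e']
  · simpa only [mul_assoc] using h2

theorem Inv.comp {g h : ℕ → ℕ} (hg : Inv g) (hh : Inv h) : Inv fun k => g (h k) where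
  perm := by
    have := hh.perm.map g
    rw [List.map_map] at this
    exact this.trans hg.perm
  five := hg.five.comp hh.five
  seven := hg.seven.comp hh.seven

theorem Inv.id : Inv fun k => k where
  perm := by rw [List.map_id']
  five := fun a ha => ⟨fun _ => 1, fun _ => Or.inl rfl, by simpa using ha⟩
  seven := fun a ha => ⟨fun _ => 1, fun _ => Or.inl rfl, by simpa using ha⟩

theorem Inv.iterate {g : ℕ → ℕ} (hg : Inv g) (n : ℕ) : Inv (g^[n]) := by
  induction n with
  | zero => exact Inv.id
  | succ n ih => rw [Function.iterate_succ]; exact ih.comp hg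

/-- The finite verification that the signed permutation `(e, g)` preserves the code modulo `m`:
it suffices to test the rows of the systematic generator matrix. Signs are residues, `1` or
`m - 1`. -/
def chkMono (m : ℕ) (g e : List ℕ) : Bool :=
  Nat.beq (lsum (fun i => lsum (fun k => iteb (Nat.beq
    (Nat.mod (Nat.mul (lnth 0 e k) (G i (lnth 0 g k))) m)
    (Nat.mod (lsum (fun t => Nat.mul (Nat.mul (lnth 0 e t) (G i (lnth 0 g t))) (G t k))
      (List.range 16)) m)) 0 1) (List.range 32)) (List.range 16)) 0

theorem lsum_eq_zero {α : Type} {f : α → ℕ} {l : List α} (h : lsum f l = 0) :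
    ∀ x ∈ l, f x = 0 := by
  rw [lsum_eq] at h
  intro x hx
  exact List.sum_eq_zero_iff.mp h _ (List.mem_map_of_mem hx)

theorem lsum_range (f : ℕ → ℕ) (n : ℕ) : lsum f (List.range n) = ∑ i ∈ Finset.range n, f i :=
  lsum_eq f _

theorem mono_of_chk {m : ℕ} {g e : List ℕ} (s : ℕ → ℤ) (hc : chkMono m g e = true)
    (hg : ∀ k < 32, lnth 0 g k < 32) (hs : ∀ k, s k = 1 ∨ s k = -1)
    (he : ∀ k < 32, ((lnth 0 e k : ℕ) : ZMod m) = ((s k : ℤ) : ZMod m)) : Mono m (lnth 0 g) := by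
  intro a ha
  refine ⟨s, hs, ?_⟩
  have key : ∀ i < 16, ∀ k < 32, (s k : ZMod m) * (G i (lnth 0 g k) : ZMod m)
      = ∑ t ∈ Finset.range 16, (s t : ZMod m) * (G i (lnth 0 g t) : ZMod m) * (G t k : ZMod m) := by
    intro i hi k hk
    have h1 := lsum_eq_zero (Nat.eq_of_beq_eq_true hc) i (List.mem_range.mpr hi)
    have h2 := lsum_eq_zero h1 k (List.mem_range.mpr hk)
    rw [iteb_beq, lsum_range] at h2
    split_ifs at h2 with h3
    have h4 : (lnth 0 e k * G i (lnth 0 g k)) % m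
      = (∑ t ∈ Finset.range 16, lnth 0 e t * G i (lnth 0 g t) * G t k) % m := h3
    have h5 := (ZMod.natCast_eq_natCast_iff' _ _ m).mpr h4
    rw [Nat.cast_mul, Nat.cast_sum, he k hk] at h5
    rw [h5]
    refine Finset.sum_congr rfl fun t ht => ?_
    rw [Nat.cast_mul, Nat.cast_mul, he t (by have := Finset.mem_range.mp ht; omega)]
  intro k hk
  dsimp only
  rw [Int.cast_mul, ha _ (hg k hk), Finset.mul_sum]
  have : ∀ i ∈ Finset.range 16, (s k : ZMod m) * ((a i : ZMod m) * (G i (lnth 0 g k) : ZMod m))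
      = ∑ t ∈ Finset.range 16, (a i : ZMod m) *
        ((s t : ZMod m) * (G i (lnth 0 g t) : ZMod m) * (G t k : ZMod m)) := by
    intro i hi
    rw [← Finset.mul_sum, ← key i (Finset.mem_range.mp hi) k hk]
    ring
  rw [Finset.sum_congr rfl this, Finset.sum_comm]
  refine Finset.sum_congr rfl fun t ht => ?_
  rw [Int.cast_mul, ha _ (hg t (by have := Finset.mem_range.mp ht; omega)), Finset.mul_sum,
    Finset.sum_mul]
  exact Finset.sum_congr rfl fun i _ => by ring

theorem lt_of_perm {l : List ℕ} (h : ((List.range 32).map (lnth 0 l)).Perm (List.range 32)) :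
    ∀ k < 32, lnth 0 l k < 32 := by
  intro k hk
  have := h.mem_iff (a := lnth 0 l k)
  rw [List.mem_map, List.mem_range] at this
  exact this.mp ⟨k, List.mem_range.mpr hk, rfl⟩

theorem T_perm : ((List.range 32).map (lnth 0 Tl)).Perm (List.range 32) := by decide +kernel
theorem R_perm : ((List.range 32).map (lnth 0 Rl)).Perm (List.range 32) := by decide +kernel
theorem W_perm : ((List.range 32).map (lnth 0 Wl)).Perm (List.range 32) := by decide +kernel

/-- The trivial signs. -/
def sgn1 : List ℕ := List.replicate 32 1
/-- The signs of the inversion modulo `5`. -/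
def sgnW5 : List ℕ := List.replicate 15 1 ++ List.replicate 16 4 ++ [1]
/-- The signs of the inversion modulo `7`. -/
def sgnW7 : List ℕ := List.replicate 16 1 ++ List.replicate 16 6

/-- The translation `z ↦ z + 1` of `P¹(F₃₁)`. -/
theorem inv_T : Inv (lnth 0 Tl) where
  perm := T_perm
  five := mono_of_chk (e := sgn1) (fun _ => 1) (by decide +kernel) (lt_of_perm T_perm)
    (fun _ => Or.inl rfl) (by decide +kernel)
  seven := mono_of_chk (e := sgn1) (fun _ => 1) (by decide +kernel) (lt_of_perm T_perm)
    (fun _ => Or.inl rfl) (by decide +kernel)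

/-- The homothety `z ↦ 9 z` of `P¹(F₃₁)`. -/
theorem inv_R : Inv (lnth 0 Rl) where
  perm := R_perm
  five := mono_of_chk (e := sgn1) (fun _ => 1) (by decide +kernel) (lt_of_perm R_perm)
    (fun _ => Or.inl rfl) (by decide +kernel)
  seven := mono_of_chk (e := sgn1) (fun _ => 1) (by decide +kernel) (lt_of_perm R_perm)
    (fun _ => Or.inl rfl) (by decide +kernel)

/-- The inversion `z ↦ -1/z` of `P¹(F₃₁)`, which needs signs; these differ modulo `5` and `7`. -/
theorem inv_W : Inv (lnth 0 Wl) where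
  perm := W_perm
  five := mono_of_chk (e := sgnW5) (fun k => if k < 15 ∨ k = 31 then 1 else -1) (by decide +kernel)
    (lt_of_perm W_perm) (fun k => by split_ifs <;> simp) (by decide +kernel)
  seven := mono_of_chk (e := sgnW7) (fun k => if k < 16 then 1 else -1) (by decide +kernel)
    (lt_of_perm W_perm) (fun k => by split_ifs <;> simp) (by decide +kernel)

/-! ### Partial digit sums by bit masks -/

/-- The bitwise conjunction acts separately on base `32` digits. -/
theorem land_digit (u v a b : ℕ) (ha : a < 32) (hb : b < 32) :
    (u * 32 + a) &&& (v * 32 + b) = (u &&& v) * 32 + (a &&& b) := by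
  have hab : a &&& b < 2 ^ 5 := lt_of_le_of_lt Nat.and_le_left ha
  have e : ∀ s t : ℕ, s * 32 + t = 2 ^ 5 * s + t := fun s t => by ring
  rw [e, e, e]
  apply Nat.eq_of_testBit_eq
  intro i
  rw [Nat.testBit_and, Nat.testBit_two_pow_mul_add _ (show a < 2 ^ 5 from ha),
    Nat.testBit_two_pow_mul_add _ (show b < 2 ^ 5 from hb), Nat.testBit_two_pow_mul_add _ hab]
  split_ifs <;> rw [Nat.testBit_and]

/-- The base `32` number with `n` digits `y 0, …, y (n - 1)`, most significant digit first. -/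
def hzn (n : ℕ) (y : ℕ → ℕ) : ℕ := (List.range n).foldl (fun u k => u * 32 + y k) 0

theorem hzn_succ (n : ℕ) (y : ℕ → ℕ) : hzn (n + 1) y = hzn n y * 32 + y n := by
  simp [hzn, List.range_succ]

theorem hzn_land (n : ℕ) (y z : ℕ → ℕ) (hy : ∀ k < n, y k < 32) (hzz : ∀ k < n, z k < 32) :
    hzn n y &&& hzn n z = hzn n fun k => y k &&& z k := by
  induction n with
  | zero => simp [hzn]
  | succ n ih =>
    rw [hzn_succ, hzn_succ, hzn_succ, land_digit _ _ _ _ (hy n (by omega)) (hzz n (by omega)),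
      ih (fun k hk => hy k (by omega)) (fun k hk => hzz k (by omega))]

theorem hzn_add (n : ℕ) (y z : ℕ → ℕ) : hzn n (fun k => y k + z k) = hzn n y + hzn n z := by
  induction n with
  | zero => simp [hzn]
  | succ n ih => rw [hzn_succ, hzn_succ, hzn_succ, ih]; ring

/-- Since `32 ≡ 1` modulo `31`, a base `32` number is congruent to its digit sum. -/
theorem hzn_mod (n : ℕ) (y : ℕ → ℕ) : hzn n y % 31 = (∑ k ∈ Finset.range n, y k) % 31 := by
  induction n with
  | zero => simp [hzn]
  | succ n ih => rw [hzn_succ, Finset.sum_range_succ]; omega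

theorem hzn_congr (n : ℕ) {y z : ℕ → ℕ} (h : ∀ k < n, y k = z k) : hzn n y = hzn n z := by
  induction n with
  | zero => rfl
  | succ n ih => rw [hzn_succ, hzn_succ, ih fun k hk => h k (by omega), h n (by omega)]

theorem hzn_inj (n : ℕ) {y z : ℕ → ℕ} (hy : ∀ k < n, y k < 32) (hzz : ∀ k < n, z k < 32)
    (h : hzn n y = hzn n z) : ∀ k < n, y k = z k := by
  induction n with
  | zero => intro k hk; omega
  | succ n ih =>
    rw [hzn_succ, hzn_succ] at h
    have h1 := hy n (by omega)
    have h2 := hzz n (by omega)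
    intro k hk
    rcases Nat.lt_succ_iff_lt_or_eq.mp hk with hk | rfl
    · exact ih (fun k hk => hy k (by omega)) (fun k hk => hzz k (by omega)) (by omega) k hk
    · omega

theorem hzn_single (n i : ℕ) (hi : i < n) :
    hzn n (fun k => if k = i then 31 else 0) = 31 * 32 ^ (n - 1 - i) := by
  induction n with
  | zero => omega
  | succ n ih =>
    rw [hzn_succ]
    rcases Nat.lt_succ_iff_lt_or_eq.mp hi with h | rfl
    · rw [ih h, if_neg (by omega), show n + 1 - 1 - i = (n - 1 - i) + 1 by omega, pow_succ]
      ring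
    · have : hzn i (fun k => if k = i then 31 else 0) = hzn i fun _ => 0 :=
        hzn_congr i fun k hk => if_neg (by omega)
      rw [this]
      have h0 : ∀ n, hzn n (fun _ => 0) = 0 := by
        intro n
        induction n with
        | zero => rfl
        | succ n ih => rw [hzn_succ, ih]
      rw [h0]; simp

theorem hz_eq (y : ℕ → ℕ) : hz y = hzn 32 y := rfl

theorem mask_eq {S : List ℕ} (hn : S.Nodup) (hS : ∀ i ∈ S, i < 32) :
    mask S = hzn 32 fun k => if k ∈ S then 31 else 0 := by
  induction S with
  | nil => decide +kernel
  | cons i S ih =>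
    rw [List.nodup_cons] at hn
    have h1 : mask (i :: S) = 31 * 32 ^ (31 - i) + mask S := rfl
    rw [h1, ih hn.2 fun j hj => hS j (by simp [hj]), ← hzn_single 32 i (hS i (by simp)), ← hzn_add]
    refine hzn_congr 32 fun k _ => ?_
    by_cases hk : k = i
    · subst hk; simp [hn.1]
    · simp [hk]

/-- The mask of `S` extracts the sum of the digits indexed by `S`. -/
theorem land_mask {S : List ℕ} (hn : S.Nodup) (hS : ∀ i ∈ S, i < 32) {y : ℕ → ℕ}
    (hy : ∑ k ∈ Finset.range 32, y k ≤ 30) : (hz y &&& mask S) % 31 = (S.map y).sum := by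
  have hle : ∀ k < 32, y k < 31 := fun k hk => lt_of_le_of_lt
    ((Finset.single_le_sum (f := y) (fun _ _ => Nat.zero_le _) (Finset.mem_range.mpr hk)).trans hy)
    (by norm_num)
  rw [mask_eq hn hS, hz_eq, hzn_land 32 y _ (fun k hk => (hle k hk).trans (by norm_num))
    (fun k _ => by split_ifs <;> norm_num), hzn_mod]
  have h1 : ∑ k ∈ Finset.range 32, (y k &&& if k ∈ S then 31 else 0)
      = ∑ k ∈ Finset.range 32, if k ∈ S then y k else 0 := by
    refine Finset.sum_congr rfl fun k hk => ?_
    have := hle k (Finset.mem_range.mp hk)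
    split_ifs
    · rw [show 31 = 2 ^ 5 - 1 by norm_num, Nat.and_two_pow_sub_one_eq_mod]
      exact Nat.mod_eq_of_lt (by omega)
    · simp
  have h2 : ∑ k ∈ Finset.range 32, (if k ∈ S then y k else 0) = (S.map y).sum := by
    rw [← Finset.sum_filter, ← List.sum_toFinset y hn]
    refine Finset.sum_congr ?_ fun _ _ => rfl
    ext k
    simp only [Finset.mem_filter, Finset.mem_range, List.mem_toFinset]
    exact ⟨fun h => h.2, fun h => ⟨hS k h, h⟩⟩
  rw [h1, h2]
  refine Nat.mod_eq_of_lt (lt_of_le_of_lt ?_ (by norm_num : 30 < 31))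
  rw [← h2]
  refine le_trans (Finset.sum_le_sum fun k _ => ?_) hy
  split_ifs <;> simp

theorem iter_ind {α : Type} (f : α → α) (P : α → Prop) (hf : ∀ x, P x → P (f x)) (n : ℕ) (x : α)
    (hx : P x) : ∀ y ∈ iter f n x, P y := by
  induction n generalizing x with
  | zero => intro y hy; cases hy
  | succ n ih =>
    intro y hy
    rcases List.mem_cons.mp (show y ∈ x :: iter f n (f x) from hy) with rfl | hy
    · exact hx
    · exact ih (f x) (hf x hx) y hy

/-- `S` is the image of the index set `{0, …, 15}` under an automorphism of the codes. -/
def Reach (S : List ℕ) : Prop := ∃ g, Inv g ∧ S = (List.range 16).map g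

theorem Reach.lmap {S l : List ℕ} (hS : Reach S) (hl : Inv (lnth 0 l)) :
    Reach (lmap (lnth 0 l) S) := by
  obtain ⟨g, hg, rfl⟩ := hS
  exact ⟨fun k => lnth 0 l (g k), hl.comp hg, by rw [lmap_eq, List.map_map]; rfl⟩

theorem lnth_mem_or {α : Type} (d : α) (l : List α) (n : ℕ) : lnth d l n ∈ l ∨ lnth d l n = d := by
  rw [lnth_eq]
  by_cases h : n < l.length
  · left; rw [List.getD_eq_getElem _ _ h]; exact List.getElem_mem h
  · right; exact List.getD_eq_default _ _ (by omega)

theorem reach_sets0 : ∀ S ∈ sets0, Reach S :=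
  iter_ind _ Reach (fun _ h => h.lmap inv_T) _ _ ⟨fun k => k, Inv.id, by rw [List.map_id']⟩

theorem sets_ne_nil : (sets.all fun S => !S.isEmpty) = true := by decide +kernel

theorem reach_sets : ∀ S ∈ sets, Reach S := by
  intro S hS
  have hne : S ≠ [] := by
    rintro rfl
    simpa using List.all_eq_true.mp sets_ne_nil _ hS
  rw [sets, lmap_eq, List.mem_map] at hS
  obtain ⟨q, -, rfl⟩ := hS
  generalize hB : lnth [] blocks (Nat.div q 31) = B at hne ⊢
  have h1 := (lnth_mem_or [] B (Nat.mod q 31)).resolve_right hne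
  have h2 : B ∈ blocks := by
    have := lnth_mem_or [] blocks (Nat.div q 31)
    rw [hB] at this
    exact this.resolve_right fun h => by rw [h] at h1; cases h1
  rw [blocks, List.mem_cons, lmap_eq, List.mem_map] at h2
  rcases h2 with rfl | ⟨S, hS, rfl⟩
  · exact reach_sets0 _ h1
  · exact iter_ind _ Reach (fun _ h => h.lmap inv_T) _ _ ((reach_sets0 S hS).lmap inv_W) _ h1

theorem Inv.nodup {g : ℕ → ℕ} (hg : Inv g) : ((List.range 16).map g).Nodup := by
  have h : ((List.range 32).map g).Nodup := hg.perm.nodup_iff.mpr List.nodup_range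
  refine h.sublist (List.Sublist.map g ?_)
  exact List.range_sublist.mpr (by norm_num)

/-- The sum of `y` over the information coordinates `{0, …, 15}`. -/
def Ew (y : ℕ → ℕ) : ℕ := ∑ i ∈ Finset.range 16, y i

theorem land_mask_inv {g : ℕ → ℕ} (hg : Inv g) {y : ℕ → ℕ}
    (hy : ∑ k ∈ Finset.range 32, y k ≤ 30) :
    (hz y &&& mask ((List.range 16).map g)) % 31 = Ew fun k => y (g k) := by
  rw [land_mask hg.nodup (fun i hi => ?_) hy, List.map_map]
  · rfl
  · obtain ⟨k, hk, rfl⟩ := List.mem_map.mp hi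
    exact hg.lt (by have := List.mem_range.mp hk; omega)

theorem find_zero {Y e : ℕ} {l : List ℕ} (h : find Y e l = 0) : ∃ m ∈ l, (Y &&& m) % 31 < e := by
  induction l with
  | nil => exact absurd (show (1 : ℕ) = 0 from h) one_ne_zero
  | cons m l ih =>
    have h' : iteb (Nat.ble (Nat.succ (Nat.mod (Nat.land Y m) 31)) e) 0 (find Y e l) = 0 := h
    rw [iteb_ble] at h'
    split_ifs at h' with h1
    · exact ⟨m, by simp, h1⟩
    · obtain ⟨m', hm, h2⟩ := ih h'
      exact ⟨m', by simp [hm], h2⟩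

theorem mem_zero {Y : ℕ} {l : List ℕ} (h : mem Y l = 0) : Y ∈ l := by
  induction l with
  | nil => exact absurd (show (1 : ℕ) = 0 from h) one_ne_zero
  | cons m l ih =>
    have h' : iteb (Nat.beq Y m) 0 (mem Y l) = 0 := h
    rw [iteb_beq] at h'
    split_ifs at h' with h1
    · simp [h1]
    · simp [ih h']

/-! ### The Parseval identity and words of small weight on the information coordinates -/

/-- The rows `j ↦ [T^n j < 16]` for `n < 31`, whose signed versions together with the constant row
form a Hadamard matrix of order `32`. -/
def had : List (List ℕ) := iter (fun r => lmap (lnth 0 r) Tl) 31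
  (List.replicate 16 1 ++ List.replicate 16 0)

/-- The inner product of two lists. -/
def dot (l : List ℕ) : List ℕ → ℕ :=
  List.rec (fun _ => 0) (fun x _ ih m => Nat.add (Nat.mul x (lnth 0 m 0)) (ih (List.tail m))) l

theorem dot_map {α : Type} (f g : α → ℕ) (l : List α) :
    dot (lmap f l) (lmap g l) = (l.map fun r => f r * g r).sum := by
  induction l with
  | nil => rfl
  | cons x l ih =>
    rw [List.map_cons, List.sum_cons, ← ih]; rfl

/-- Column `i` of `had`. -/
def hcol (i : ℕ) : List ℕ := lmap (fun r => lnth 0 r i) had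

/-- The finite verification that two columns `c`, `d` of `had` satisfy `2 ⟨c, d⟩ + 16 = ⟨c, c⟩ + ⟨d,
d⟩`, with `16` added on the right if they coincide. -/
def chkHad : Bool := Nat.beq (lsum (fun c => lsum (fun d => iteb (Nat.beq
    (Nat.add (Nat.mul 2 (dot (lnth [] c 1) (lnth [] d 1))) 16)
    (Nat.add (Nat.add (dot (lnth [] c 1) (lnth [] c 1)) (dot (lnth [] d 1) (lnth [] d 1)))
      (iteb (Nat.beq (lnth 0 (lnth [] c 0) 0) (lnth 0 (lnth [] d 0) 0)) 16 0))) 0 1)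
  (lmap (fun i => [[i], hcol i]) (List.range 32))) (lmap (fun i => [[i], hcol i]) (List.range 32))) 0

theorem had_check : chkHad = true := by decide +kernel

theorem had_gram (i j : ℕ) (hi : i < 32) (hj : j < 32) :
    2 * (had.map fun r => lnth 0 r i * lnth 0 r j).sum + 16
      = (had.map fun r => lnth 0 r i * lnth 0 r i).sum + (had.map fun r => lnth 0 r j * lnth 0 r j).sum
        + if i = j then 16 else 0 := by
  have h1 := lsum_eq_zero (Nat.eq_of_beq_eq_true had_check) [[i], hcol i]
    (by rw [lmap_eq]; exact List.mem_map_of_mem (f := fun i => [[i], hcol i]) (List.mem_range.mpr hi))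
  have h2 := lsum_eq_zero h1 [[j], hcol j]
    (by rw [lmap_eq]; exact List.mem_map_of_mem (f := fun i => [[i], hcol i]) (List.mem_range.mpr hj))
  have h3 : iteb (Nat.beq (2 * dot (hcol i) (hcol j) + 16) (dot (hcol i) (hcol i)
    + dot (hcol j) (hcol j) + iteb (Nat.beq i j) 16 0)) 0 1 = 0 := h2
  rw [iteb_beq i j, iteb_beq] at h3
  by_contra hne
  rw [if_neg] at h3
  · exact one_ne_zero h3
  · simpa only [hcol, dot_map] using hne

theorem had_eq : had = (List.range 31).map (lnth [] had) := by decide +kernel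

theorem had_bit : ∀ r ∈ had, ∀ j < 32, lnth 0 r j * lnth 0 r j = lnth 0 r j := by decide +kernel

/-- The entries of `had`. -/
def hb (n j : ℕ) : ℕ := lnth 0 (lnth [] had n) j

/-- The sign matrix: the first `31` rows of a Hadamard matrix whose last row is constant. -/
def hs (n j : ℕ) : ℤ := 2 * (hb n j : ℤ) - 1

/-- The columns of the Hadamard matrix are orthogonal; leaving out the constant row subtracts `1`.
-/
theorem hs_orth (i j : ℕ) (hi : i < 32) (hj : j < 32) :
    ∑ n ∈ Finset.range 31, hs n i * hs n j = (if i = j then 32 else 0) - 1 := by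
  have h := had_gram i j hi hj
  rw [had_eq] at h
  simp only [List.map_map] at h
  have e : ∀ f : List ℕ → ℕ, ((List.range 31).map (f ∘ lnth [] had)).sum
      = ∑ n ∈ Finset.range 31, f (lnth [] had n) := fun _ => rfl
  rw [e, e, e] at h
  change 2 * ∑ n ∈ Finset.range 31, hb n i * hb n j + 16 = ∑ n ∈ Finset.range 31, hb n i * hb n i
    + ∑ n ∈ Finset.range 31, hb n j * hb n j + _ at h
  have hbb : ∀ n ∈ Finset.range 31, ∀ k < 32, (hb n k : ℤ) * hb n k = hb n k := by
    intro n hn k hk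
    have hm : lnth [] had n ∈ had := by
      conv_rhs => rw [had_eq]
      exact List.mem_map_of_mem (List.mem_range.mpr (Finset.mem_range.mp hn))
    exact_mod_cast had_bit _ hm k hk
  have h1 : ∑ n ∈ Finset.range 31, hs n i * hs n j
      = 4 * ∑ n ∈ Finset.range 31, (hb n i : ℤ) * hb n j
        - 2 * ∑ n ∈ Finset.range 31, (hb n i : ℤ) * hb n i
        - 2 * ∑ n ∈ Finset.range 31, (hb n j : ℤ) * hb n j
        + 31 := by
    have h31 : (31 : ℤ) = ∑ n ∈ Finset.range 31, 1 := by simp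
    rw [h31, Finset.mul_sum, Finset.mul_sum, Finset.mul_sum, ← Finset.sum_sub_distrib,
      ← Finset.sum_sub_distrib, ← Finset.sum_add_distrib]
    refine Finset.sum_congr rfl fun n hn => ?_
    rw [hbb n hn i hi, hbb n hn j hj, hs, hs]
    ring
  have h2 : 2 * ∑ n ∈ Finset.range 31, (hb n i : ℤ) * hb n j + 16
      = ∑ n ∈ Finset.range 31, (hb n i : ℤ) * hb n i
        + ∑ n ∈ Finset.range 31, (hb n j : ℤ) * hb n j
        + if i = j then 16 else 0 := by exact_mod_cast h
  rw [h1]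
  split_ifs at h2 ⊢ <;> linarith

theorem hs_parseval (y : ℕ → ℤ) :
    ∑ n ∈ Finset.range 31, (∑ j ∈ Finset.range 32, hs n j * y j) ^ 2
      = 32 * ∑ j ∈ Finset.range 32, y j ^ 2 - (∑ j ∈ Finset.range 32, y j) ^ 2 := by
  have h1 : ∀ n, (∑ j ∈ Finset.range 32, hs n j * y j) ^ 2
      = ∑ i ∈ Finset.range 32, ∑ j ∈ Finset.range 32, (hs n i * hs n j) * (y i * y j) := by
    intro n
    rw [sq, Finset.sum_mul_sum]
    exact Finset.sum_congr rfl fun i _ => Finset.sum_congr rfl fun j _ => by ring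
  simp only [h1]
  rw [Finset.sum_comm]
  have h2 : ∀ i ∈ Finset.range 32, ∑ n ∈ Finset.range 31, ∑ j ∈ Finset.range 32,
      (hs n i * hs n j) * (y i * y j) = 32 * y i ^ 2 - ∑ j ∈ Finset.range 32, y i * y j := by
    intro i hi
    rw [Finset.sum_comm]
    have : ∀ j ∈ Finset.range 32, ∑ n ∈ Finset.range 31, (hs n i * hs n j) * (y i * y j)
        = (if i = j then 32 * (y i * y j) else 0) - y i * y j := by
      intro j hj
      rw [← Finset.sum_mul, hs_orth i j (Finset.mem_range.mp hi) (Finset.mem_range.mp hj)]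
      split_ifs <;> ring
    rw [Finset.sum_congr rfl this, Finset.sum_sub_distrib, Finset.sum_ite_eq, if_pos hi]
    ring
  rw [Finset.sum_congr rfl h2, Finset.sum_sub_distrib, ← Finset.mul_sum, sq (∑ j ∈ _, y j),
    Finset.sum_mul_sum]

theorem T31 : ∀ j < 32, (lnth 0 Tl)^[30] (lnth 0 Tl j) = j := by decide +kernel

theorem lnth_lmap (l t : List ℕ) {j : ℕ} (hj : j < t.length) :
    lnth 0 (lmap (lnth 0 l) t) j = lnth 0 l (lnth 0 t j) := by
  rw [lmap_eq, lnth_eq, lnth_eq 0 t, List.getD_eq_getElem _ _ (by simpa using hj),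
    List.getD_eq_getElem _ _ hj, List.getElem_map]

/-- The inner product with a row of `had` is the weight on the information coordinates after an
automorphism. -/
theorem had_reach : ∀ r ∈ had, ∃ g, Inv g ∧ ∀ y : ℕ → ℕ,
    ∑ j ∈ Finset.range 32, lnth 0 r j * y j = Ew fun k => y (g k) := by
  refine iter_ind _ _ ?_ _ _ ?_
  · rintro r ⟨g, hg, h⟩
    refine ⟨fun k => (lnth 0 Tl)^[30] (g k), (inv_T.iterate 30).comp hg, fun y => ?_⟩
    rw [← h fun k => y ((lnth 0 Tl)^[30] k), ← inv_T.sum fun j => lnth 0 r j * y ((lnth 0 Tl)^[30] j)]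
    refine Finset.sum_congr rfl fun j hj => ?_
    have hj := Finset.mem_range.mp hj
    rw [T31 j hj, lnth_lmap _ _ hj]
  · refine ⟨fun k => k, Inv.id, fun y => ?_⟩
    have h32 : Finset.range 32 = Finset.range (16 + 16) := rfl
    rw [h32, Finset.sum_range_add]
    have h1 : ∀ j < 16, lnth 0 (List.replicate 16 1 ++ List.replicate 16 0) j = 1 := by decide
    have h2 : ∀ j < 16, lnth 0 (List.replicate 16 1 ++ List.replicate 16 0) (16 + j) = 0 := by decide
    have h3 : ∑ j ∈ Finset.range 16, lnth 0 (List.replicate 16 1 ++ List.replicate 16 0) (16 + j)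
        * y (16 + j) = 0 :=
      Finset.sum_eq_zero fun j hj => by rw [h2 j (Finset.mem_range.mp hj), zero_mul]
    rw [h3, add_zero]
    exact Finset.sum_congr rfl fun j hj => by rw [h1 j (Finset.mem_range.mp hj), one_mul]

/-- The inversion exchanges the information coordinates and the check coordinates. -/
theorem W_compl : ((List.range 16).map (lnth 0 Wl) ++ List.range 16).Perm (List.range 32) := by
  decide +kernel

theorem Ew_compl (y : ℕ → ℕ) : Ew (fun k => y (lnth 0 Wl k)) + Ew y = ∑ k ∈ Finset.range 32, y k := by
  have h := (W_compl.map y).sum_eq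
  rw [List.map_append, List.sum_append, List.map_map] at h
  exact h

/-- Some automorphism moves little of the weight of `y` to the index set `{0, …, 15}`: otherwise
all partial sums are close to half of the total, against Parseval's identity for `hs`. -/
theorem exists_small (B N : ℕ) (y : ℕ → ℕ) (hN : ∑ k ∈ Finset.range 32, y k = N)
    (hB : B = 8 ∧ N ≤ 20 ∨ B = 9 ∧ N ≤ 21) : ∃ g, Inv g ∧ Ew (fun k => y (g k)) ≤ B := by
  by_contra! hcon
  -- Each sum is `2 s - N`, where `s` and `N - s` are weights of images of `{0, …, 15}`.
  have key : ∀ n ∈ Finset.range 31,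
      (∑ j ∈ Finset.range 32, hs n j * (y j : ℤ)) ^ 2 ≤ ((N : ℤ) - 2 * B - 2) ^ 2 := by
    intro n hn
    have hm : lnth [] had n ∈ had := by
      conv_rhs => rw [had_eq]
      exact List.mem_map_of_mem (List.mem_range.mpr (Finset.mem_range.mp hn))
    obtain ⟨g, hg, h⟩ := had_reach _ hm
    have h1 := hcon g hg
    have h2 := hcon _ (hg.comp inv_W)
    have h3 := Ew_compl fun k => y (g k)
    rw [hg.sum, hN] at h3
    have h4 : ∑ j ∈ Finset.range 32, hs n j * (y j : ℤ) = 2 * (Ew fun k => y (g k) : ℕ) - N := by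
      rw [← h y, ← hN]
      push_cast
      rw [Finset.mul_sum, ← Finset.sum_sub_distrib]
      exact Finset.sum_congr rfl fun j _ => by rw [hs, hb]; ring
    rw [h4]
    apply sq_le_sq'
    · have : (Ew fun k => y (g k)) ≥ B + 1 := h1
      linarith [show ((Ew fun k => y (g k) : ℕ) : ℤ) ≥ B + 1 by exact_mod_cast this]
    · have : (Ew fun k => y (g (lnth 0 Wl k))) ≥ B + 1 := h2
      have h5 : ((Ew fun k => y (g (lnth 0 Wl k)) : ℕ) : ℤ) + (Ew fun k => y (g k) : ℕ) = N := by
        exact_mod_cast h3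
      linarith [show ((Ew fun k => y (g (lnth 0 Wl k)) : ℕ) : ℤ) ≥ B + 1 by exact_mod_cast this]
  have h1 := Finset.sum_le_sum key
  rw [hs_parseval, Finset.sum_const, Finset.card_range] at h1
  have h2 : ∑ j ∈ Finset.range 32, (y j : ℤ) = N := by rw [← hN]; push_cast; rfl
  have h3 : (N : ℤ) ≤ ∑ j ∈ Finset.range 32, (y j : ℤ) ^ 2 := by
    rw [← h2]
    refine Finset.sum_le_sum fun j _ => ?_
    have : y j ≤ y j ^ 2 := Nat.le_self_pow (by norm_num) _
    exact_mod_cast this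
  rw [h2] at h1
  have h4 : B < Ew y := hcon _ Inv.id
  have h5 := hcon _ inv_W
  have h6 := Ew_compl y
  rw [hN] at h6
  -- Both a set and its complement carry weight more than `B`, so `N` takes few values.
  rcases hB with ⟨rfl, hB⟩ | ⟨rfl, hB⟩
  · have h7 : 18 ≤ N := by omega
    simp only [nsmul_eq_mul] at h1
    interval_cases N <;> norm_num at h1 h3 <;> linarith
  · have h7 : 20 ≤ N := by omega
    simp only [nsmul_eq_mul] at h1
    interval_cases N <;> norm_num at h1 h3 <;> linarith

/-! ### Short words modulo 5 and modulo 7 -/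

/-- The least nonnegative residue of `a k`. -/
def rs (p : ℕ) (a : ℕ → ℤ) (k : ℕ) : ℕ := (a k % (p : ℤ)).toNat

theorem rs_cast (p : ℕ) (hp : 0 < p) (a : ℕ → ℤ) (k : ℕ) : ((rs p a k : ℕ) : ℤ) = a k % p :=
  Int.toNat_of_nonneg (Int.emod_nonneg _ (by omega))

theorem rs_lt (p : ℕ) (hp : 0 < p) (a : ℕ → ℤ) (k : ℕ) : rs p a k < p := by
  have h := rs_cast p hp a k
  have := Int.emod_lt_of_pos (a k) (show (0 : ℤ) < p by exact_mod_cast hp)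
  omega

theorem rs_zmod (p : ℕ) (hp : 0 < p) (a : ℕ → ℤ) (k : ℕ) :
    ((rs p a k : ℕ) : ZMod p) = ((a k : ℤ) : ZMod p) := by
  have h : (((rs p a k : ℕ) : ℤ) : ZMod p) = ((a k % p : ℤ) : ZMod p) := by rw [rs_cast p hp]
  rwa [Int.cast_natCast, ZMod.intCast_mod] at h

/-- The check coordinates of a word are computed from its information coordinates. -/
theorem rs_col (p : ℕ) (hp : 0 < p) {a : ℕ → ℤ} (ha : Sys p a) (j : ℕ) (hj : j < 16) :
    sums (rs p a) (Ap p) j % p = rs p a (16 + j) := by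
  rw [← Nat.mod_eq_of_lt (rs_lt p hp a (16 + j))]
  refine (ZMod.natCast_eq_natCast_iff' _ _ p).mp ?_
  have e : sums (rs p a) (Ap p) j = ∑ i ∈ Finset.range 16, rs p a i * Ap p i j := rfl
  rw [rs_zmod p hp, ha _ (by omega), e, Nat.cast_sum]
  refine Finset.sum_congr rfl fun i _ => ?_
  have e2 : Ap p i j = lnth 0 (lnth [] Al i) j % p := rfl
  rw [Nat.cast_mul, rs_zmod p hp, e2, ZMod.natCast_mod, G, if_neg (by omega),
    Nat.add_sub_cancel_left]

/-- A successful search applies to every word whose coordinates have the prescribed weights. -/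
theorem core {p E TOT : ℕ} {rows : ℕ → Row} {f : ℕ → List ℕ} {chk : ℕ → ℕ} (hp : 0 < p)
    (hp7 : p ≤ 7) (hT : TOT ≤ 511) (hE' : E ≤ 20) (hf : ∀ j < 16, ∀ y ∈ f j, y ≤ 12)
    (hr : ∀ i < 16, ∀ a ∈ rows i, a.1 ≤ 6)
    (h0 : Nat.beq (search p E TOT rows (Ap p) f chk) 0 = true) {a : ℕ → ℤ} (ha : Sys p a)
    (wt : ℕ → ℕ) (h1 : ∀ i < 16, (rs p a i, wt i) ∈ rows i)
    (h2 : ∀ j < 16, lnth 0 (f j) (rs p a (16 + j)) = wt (16 + j))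
    (hE : Ew wt ≤ E) (ht : ∑ k ∈ Finset.range 32, wt k ≤ TOT) : chk (hz wt) = 0 := by
  have hM : ∀ i < 16, ∀ j < 16, Ap p i j ≤ 6 := fun i _ j _ => by
    have : Ap p i j < p := Nat.mod_lt _ hp
    omega
  have hcol : ∀ j < 16, lnth 0 (f j) (sums (rs p a) (Ap p) j % p) = wt (16 + j) := fun j hj => by
    rw [rs_col p hp ha j hj, h2 j hj]
  have key := search_sound p E TOT rows (Ap p) f chk hp hT hE' hf hM hr (Nat.eq_of_beq_eq_true h0)
    (rs p a) wt h1 hE ?_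
  · refine Eq.trans (congrArg chk ?_) key
    refine hzn_congr 32 fun k hk => ?_
    split_ifs with hk'
    · rfl
    · rw [hcol (k - 16) (by omega)]
      congr 1; omega
  · have e : (List.map (fun j => lnth 0 (f j) (sums (rs p a) (Ap p) j % p)) (List.range 16)).sum
        = ∑ j ∈ Finset.range 16, wt (16 + j) :=
      congrArg List.sum (List.map_congr_left fun j hj => hcol j (List.mem_range.mp hj))
    rw [e]
    have h32 : Finset.range 32 = Finset.range (16 + 16) := rfl
    rw [h32, Finset.sum_range_add] at ht
    exact ht

/-- The squares of the coordinates. -/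
def q (a : ℕ → ℤ) (k : ℕ) : ℕ := (a k).natAbs ^ 2

theorem q_sign {ε : ℕ → ℤ} (hε : ∀ k, ε k = 1 ∨ ε k = -1) (a : ℕ → ℤ) (g : ℕ → ℕ) (k : ℕ) :
    q (fun k => ε k * a (g k)) k = q a (g k) := by
  rcases hε k with e | e <;> simp [q, e]

theorem q_sum_zero {a : ℕ → ℤ} (h : ∑ k ∈ Finset.range 32, q a k = 0) : ∀ k < 32, a k = 0 := by
  intro k hk
  have := Finset.sum_eq_zero_iff.mp h k (Finset.mem_range.mpr hk)
  simpa [q] using this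

theorem q_le_sum (a : ℕ → ℤ) {k : ℕ} (hk : k < 32) : q a k ≤ ∑ k ∈ Finset.range 32, q a k :=
  Finset.single_le_sum (f := q a) (fun _ _ => Nat.zero_le _) (Finset.mem_range.mpr hk)

theorem abs_le_of_q {a : ℕ → ℤ} {k c : ℕ} (h : q a k < (c + 1) ^ 2) : (a k).natAbs ≤ c :=
  Nat.lt_succ_iff.mp (lt_of_pow_lt_pow_left₀ 2 (Nat.zero_le _) h)

/-- The least square in the residue class of `a k` modulo `7`. -/
def mn7 (a : ℕ → ℤ) (k : ℕ) : ℕ := lnth 0 sq7 (rs 7 a k)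
/-- The least square in the residue class of `a k` modulo `5`. -/
def mn5 (a : ℕ → ℤ) (k : ℕ) : ℕ := lnth 0 sq5 (rs 5 a k)

theorem mn7_le (a : ℕ → ℤ) (k : ℕ) : mn7 a k ≤ q a k := by
  have h9 : ∀ r < 7, lnth 0 sq7 r ≤ 9 := by decide
  by_cases h : (a k).natAbs ≤ 2
  · have h1 : -2 ≤ a k := by omega
    have h2 : a k ≤ 2 := by omega
    rw [mn7, rs, q]
    generalize a k = x at *
    interval_cases x <;> decide
  · have h3 : 3 ≤ (a k).natAbs := by omega
    exact (h9 _ (rs_lt 7 (by norm_num) a k)).trans (Nat.pow_le_pow_left h3 2)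

theorem mn5_le (a : ℕ → ℤ) (k : ℕ) : mn5 a k ≤ q a k := by
  have h9 : ∀ r < 5, lnth 0 sq5 r ≤ 4 := by decide
  by_cases h : (a k).natAbs ≤ 1
  · have h1 : -1 ≤ a k := by omega
    have h2 : a k ≤ 1 := by omega
    rw [mn5, rs, q]
    generalize a k = x at *
    interval_cases x <;> decide
  · have h3 : 2 ≤ (a k).natAbs := by omega
    exact (h9 _ (rs_lt 5 (by norm_num) a k)).trans (Nat.pow_le_pow_left h3 2)

theorem Ew_mono {y z : ℕ → ℕ} (h : ∀ k, y k ≤ z k) : Ew y ≤ Ew z :=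
  Finset.sum_le_sum fun k _ => h k

theorem zero_of_hz {y : ℕ → ℕ} (hy : ∀ k < 32, y k < 32) (h : hz y = 0) : ∀ k < 32, y k = 0 := by
  have h0 : hz (fun _ => 0) = 0 := by decide
  exact hzn_inj 32 hy (fun _ _ => by norm_num) (h.trans h0.symm)

theorem rs_zero_dvd {p : ℕ} (hp : 0 < p) {a : ℕ → ℤ} {k : ℕ} (h : rs p a k = 0) :
    (p : ℤ) ∣ a k := by
  have := rs_cast p hp a k
  rw [h] at this
  exact Int.dvd_of_emod_eq_zero this.symm

theorem check7 : Nat.beq (search 7 9 21 (fun _ => rows7) (Ap 7) (fun _ => sq7) (fun Y => Y)) 0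
    = true := by decide +kernel

/-- Minimum of the code modulo `7`: a nonzero word has square sum larger than `21`. -/
theorem core7 {b : ℕ → ℤ} (hb : Sys 7 b) (h : ∑ k ∈ Finset.range 32, q b k ≤ 21) :
    ∀ k < 32, b k = 0 := by
  obtain ⟨g, hg, hE⟩ := exists_small 9 _ (q b) rfl (Or.inr ⟨rfl, h⟩)
  obtain ⟨ε, hε, hc⟩ := hg.seven b hb
  set c : ℕ → ℤ := fun k => ε k * b (g k) with hcdef
  have hq : ∀ k, q c k = q b (g k) := q_sign hε b g
  have hsum : ∑ k ∈ Finset.range 32, q c k = ∑ k ∈ Finset.range 32, q b k := by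
    simp only [hq]; exact hg.sum (q b)
  have h9 : ∀ r < 7, lnth 0 sq7 r < 32 := by decide
  have hrow : ∀ r < 7, (r, lnth 0 sq7 r) ∈ rows7 := by decide
  have h0 := core (by norm_num) le_rfl (by norm_num) (by norm_num) (fun _ _ => by decide)
    (fun _ _ => by decide) check7 hc (mn7 c) (fun i _ => hrow _ (rs_lt 7 (by norm_num) c i))
    (fun _ _ => rfl) ((Ew_mono (mn7_le c)).trans (by simp only [Ew, hq]; exact hE))
    ((Finset.sum_le_sum fun k _ => mn7_le c k).trans (hsum.trans_le h))
  have h1 := zero_of_hz (fun k _ => h9 _ (rs_lt 7 (by norm_num) c k)) h0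
  have hz7 : ∀ r < 7, lnth 0 sq7 r = 0 → r = 0 := by decide
  refine q_sum_zero ?_
  rw [← hsum]
  refine Finset.sum_eq_zero fun k hk => ?_
  have hk := Finset.mem_range.mp hk
  have h2 := rs_zero_dvd (by norm_num) (hz7 _ (rs_lt 7 (by norm_num) c k) (h1 k hk))
  have h3 : (c k).natAbs ≤ 6 := abs_le_of_q (by have := q_le_sum c hk; omega)
  have h4 : c k = 0 := by omega
  simp [q, h4]

theorem check5a : Nat.beq (search 5 8 20 (fun i => lnth rows5 [[(1, 1), (2, 4)]] i) (Ap 5)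
    (fun _ => sq5) (force chk5)) 0 = true := by decide +kernel

theorem check5b : Nat.beq (search 5 8 20 (fun i => lnth rows5 [[(0, 0)], [(1, 1), (2, 4)]] i)
    (Ap 5) (fun _ => sq5) (force chk5)) 0 = true := by decide +kernel

theorem check5c : Nat.beq (search 5 8 20
    (fun i => lnth rows5 [[(0, 0)], [(0, 0)], [(1, 1), (2, 4)]] i)
    (Ap 5) (fun _ => sq5) (force chk5)) 0 = true := by decide +kernel

theorem check5d : Nat.beq (search 5 8 20 (fun i => lnth rows5 [[(0, 0)], [(0, 0)], [(0, 0)]] i)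
    (Ap 5) (fun _ => sq5) (force chk5)) 0 = true := by decide +kernel

theorem force_eq (f : ℕ → ℕ) (Y : ℕ) : force f Y = f Y := by cases Y <;> rfl

/-- Soundness of a search modulo `5` in which the rows of the first coordinates are given by `pre`.
-/
theorem search5 {pre : List Row} (h0 : Nat.beq (search 5 8 20 (fun i => lnth rows5 pre i) (Ap 5)
    (fun _ => sq5) (force chk5)) 0 = true) (hpre : pre.length ≤ 3)
    (hr : ∀ i < 3, ∀ a ∈ lnth rows5 pre i, a.1 ≤ 6)
    {a : ℕ → ℤ} (ha : Sys 5 a) (h : ∑ k ∈ Finset.range 32, q a k ≤ 20) (hE : Ew (q a) ≤ 8)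
    (hx : ∀ i < 3, (rs 5 a i, mn5 a i) ∈ lnth rows5 pre i) : chk5 (hz (mn5 a)) = 0 := by
  have hrow : ∀ r < 5, (r, lnth 0 sq5 r) ∈ rows5 := by decide
  have hd : ∀ i, 3 ≤ i → lnth rows5 pre i = rows5 := fun i hi => by
    rw [lnth_eq, List.getD_eq_default _ _ (by omega)]
  rw [← force_eq chk5]
  refine core (by norm_num) (by norm_num) (by norm_num) (by norm_num) (fun _ _ => by decide)
    (fun i _ => ?_) h0 ha (mn5 a) (fun i _ => ?_) (fun _ _ => rfl)
    ((Ew_mono (mn5_le a)).trans hE) ((Finset.sum_le_sum fun k _ => mn5_le a k).trans h)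
  · rcases lt_or_ge i 3 with hi | hi
    · exact hr i hi
    · show ∀ a ∈ lnth rows5 pre i, a.1 ≤ 6
      rw [hd i hi]; decide
  · rcases lt_or_ge i 3 with hi | hi
    · exact hx i hi
    · show _ ∈ lnth rows5 pre i
      rw [hd i hi]; exact hrow _ (rs_lt 5 (by norm_num) a i)

theorem Sys.neg {m : ℕ} {a : ℕ → ℤ} (h : Sys m a) : Sys m fun k => -a k := by
  intro k hk
  simp only [Int.cast_neg, neg_mul, Finset.sum_neg_distrib, h k hk]

theorem rs_neg (a : ℕ → ℤ) (k : ℕ) : rs 5 (fun k => -a k) k = (5 - rs 5 a k) % 5 := by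
  have h1 := rs_cast 5 (by norm_num) a k
  have h2 := rs_cast 5 (by norm_num) (fun k => -a k) k
  push_cast at h1 h2
  omega

theorem mn5_neg (a : ℕ → ℤ) : mn5 (fun k => -a k) = mn5 a := by
  funext k
  have h : ∀ r < 5, lnth 0 sq5 ((5 - r) % 5) = lnth 0 sq5 r := by decide
  rw [mn5, mn5, rs_neg, h _ (rs_lt 5 (by norm_num) a k)]

theorem q_neg (a : ℕ → ℤ) : q (fun k => -a k) = q a := by
  funext k; simp [q]

theorem signs : ∀ r s t : ℕ, r < 5 → s < 5 → t < 5 → ¬((r = 1 ∨ r = 2) ∨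
    (r = 0 ∧ (s = 1 ∨ s = 2)) ∨ (r = 0 ∧ s = 0 ∧ (t = 1 ∨ t = 2)) ∨ (r = 0 ∧ s = 0 ∧ t = 0)) →
    (((5 - r) % 5 = 1 ∨ (5 - r) % 5 = 2) ∨
    ((5 - r) % 5 = 0 ∧ ((5 - s) % 5 = 1 ∨ (5 - s) % 5 = 2)) ∨
    ((5 - r) % 5 = 0 ∧ (5 - s) % 5 = 0 ∧ ((5 - t) % 5 = 1 ∨ (5 - t) % 5 = 2)) ∨
    ((5 - r) % 5 = 0 ∧ (5 - s) % 5 = 0 ∧ (5 - t) % 5 = 0)) := by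
  intro r s t hr hs ht
  interval_cases r <;> interval_cases s <;> interval_cases t <;> decide

/-- After a change of sign, the first nonzero residue among the first three coordinates is `1` or
`2`, which leaves four cases. -/
theorem core5 {a : ℕ → ℤ} (ha : Sys 5 a) (h : ∑ k ∈ Finset.range 32, q a k ≤ 20)
    (hE : Ew (q a) ≤ 8) : chk5 (hz (mn5 a)) = 0 := by
  have main : ∀ a : ℕ → ℤ, Sys 5 a → ∑ k ∈ Finset.range 32, q a k ≤ 20 → Ew (q a) ≤ 8 →
      ((rs 5 a 0 = 1 ∨ rs 5 a 0 = 2) ∨ (rs 5 a 0 = 0 ∧ (rs 5 a 1 = 1 ∨ rs 5 a 1 = 2)) ∨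
      (rs 5 a 0 = 0 ∧ rs 5 a 1 = 0 ∧ (rs 5 a 2 = 1 ∨ rs 5 a 2 = 2)) ∨
      (rs 5 a 0 = 0 ∧ rs 5 a 1 = 0 ∧ rs 5 a 2 = 0)) → chk5 (hz (mn5 a)) = 0 := by
    intro a ha h hE hc
    have l0 := rs_lt 5 (by norm_num) a 0
    have l1 := rs_lt 5 (by norm_num) a 1
    have l2 := rs_lt 5 (by norm_num) a 2
    have p0 : ∀ r, r = 0 → (r, lnth 0 sq5 r) ∈ [(0, 0)] := by rintro _ rfl; decide
    have p1 : ∀ r, r = 1 ∨ r = 2 → (r, lnth 0 sq5 r) ∈ [(1, 1), (2, 4)] := by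
      rintro _ (rfl | rfl) <;> decide
    have p2 : ∀ r < 5, (r, lnth 0 sq5 r) ∈ rows5 := by decide
    rcases hc with hc | ⟨h0, hc⟩ | ⟨h0, h1, hc⟩ | ⟨h0, h1, h2⟩
    · refine search5 check5a (by decide) (by decide) ha h hE fun i hi => ?_
      interval_cases i
      exacts [p1 _ hc, p2 _ l1, p2 _ l2]
    · refine search5 check5b (by decide) (by decide) ha h hE fun i hi => ?_
      interval_cases i
      exacts [p0 _ h0, p1 _ hc, p2 _ l2]
    · refine search5 check5c (by decide) (by decide) ha h hE fun i hi => ?_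
      interval_cases i
      exacts [p0 _ h0, p0 _ h1, p1 _ hc]
    · refine search5 check5d (by decide) (by decide) ha h hE fun i hi => ?_
      interval_cases i
      exacts [p0 _ h0, p0 _ h1, p0 _ h2]
  have l0 := rs_lt 5 (by norm_num) a 0
  have l1 := rs_lt 5 (by norm_num) a 1
  have l2 := rs_lt 5 (by norm_num) a 2
  have e0 := rs_neg a 0
  have e1 := rs_neg a 1
  have e2 := rs_neg a 2
  by_cases hc : ((rs 5 a 0 = 1 ∨ rs 5 a 0 = 2) ∨ (rs 5 a 0 = 0 ∧ (rs 5 a 1 = 1 ∨ rs 5 a 1 = 2)) ∨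
      (rs 5 a 0 = 0 ∧ rs 5 a 1 = 0 ∧ (rs 5 a 2 = 1 ∨ rs 5 a 2 = 2)) ∨
      (rs 5 a 0 = 0 ∧ rs 5 a 1 = 0 ∧ rs 5 a 2 = 0))
  · exact main a ha h hE hc
  · have h' : ∑ k ∈ Finset.range 32, q (fun k => -a k) k ≤ 20 := by
      simpa only [q_neg] using h
    have hE' : Ew (q fun k => -a k) ≤ 8 := by simpa only [q_neg] using hE
    have key := main (fun k => -a k) ha.neg h' hE' (by
      rw [e0, e1, e2]
      exact signs _ _ _ l0 l1 l2 hc)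
    exact (congrArg (fun y => chk5 (hz y)) (mn5_neg a)).symm.trans key

/-! ### The lower bound -/

theorem chk5_zero {Y : ℕ} (h : chk5 Y = 0) : Y = 0 ∨ Y % 31 = 20 ∧
    (find Y ((Y &&& mask (List.range 16)) % 31) masks = 0 ∨ Y ∈ base) := by
  have h' : iteb (Nat.beq Y 0) 0 (iteb (Nat.beq (Y % 31) 20) (iteb (Nat.beq (find Y
    ((Y &&& mask (List.range 16)) % 31) masks) 0) 0 (mem Y base)) 1) = 0 := h
  rw [iteb_beq, iteb_beq, iteb_beq] at h'
  by_cases h1 : Y = 0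
  · exact Or.inl h1
  rw [if_neg h1] at h'
  by_cases h2 : Y % 31 = 20
  · rw [if_pos h2] at h'
    by_cases h3 : find Y ((Y &&& mask (List.range 16)) % 31) masks = 0
    · exact Or.inr ⟨h2, Or.inl h3⟩
    · rw [if_neg h3] at h'
      exact Or.inr ⟨h2, Or.inr (mem_zero h')⟩
  · rw [if_neg h2] at h'
    exact absurd h' one_ne_zero

theorem Ew_mask {y : ℕ → ℕ} (hy : ∑ k ∈ Finset.range 32, y k ≤ 30) :
    (hz y &&& mask (List.range 16)) % 31 = Ew y := by
  have h := land_mask_inv Inv.id hy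
  rwa [List.map_id'] at h

/-- A short word of the code modulo `5` vanishes, or it has square sum `20` and either its weight
on `{0, …, 15}` can be decreased by an automorphism, or its pattern of squares is listed. -/
theorem short5 {a : ℕ → ℤ} (ha : Sys 5 a) (h : ∑ k ∈ Finset.range 32, q a k ≤ 20)
    (hE : Ew (q a) ≤ 8) : (∀ k < 32, a k = 0) ∨ (∑ k ∈ Finset.range 32, q a k = 20 ∧
      ((∃ g, Inv g ∧ Ew (fun k => q a (g k)) < Ew (q a)) ∨ hz (q a) ∈ base)) := by
  have hle : ∀ k, mn5 a k < 32 := fun k =>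
    (by decide : ∀ r < 5, lnth 0 sq5 r < 32) _ (rs_lt 5 (by norm_num) a k)
  have hs : ∑ k ∈ Finset.range 32, mn5 a k ≤ ∑ k ∈ Finset.range 32, q a k :=
    Finset.sum_le_sum fun k _ => mn5_le a k
  rcases chk5_zero (core5 ha h hE) with h0 | ⟨h0, h1⟩
  · left
    intro k hk
    have h1 := zero_of_hz (fun k _ => hle k) h0 k hk
    have h2 := rs_zero_dvd (by norm_num) ((by decide : ∀ r < 5, lnth 0 sq5 r = 0 → r = 0) _
      (rs_lt 5 (by norm_num) a k) h1)
    have h3 : (a k).natAbs ≤ 4 := abs_le_of_q (by have := q_le_sum a hk; omega)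
    omega
  · right
    rw [hz_eq, hzn_mod] at h0
    have h2 : ∑ k ∈ Finset.range 32, mn5 a k = 20 := by omega
    have h3 : ∑ k ∈ Finset.range 32, q a k = 20 := by omega
    have h4 : ∀ k < 32, mn5 a k = q a k := fun k hk =>
      (Finset.sum_eq_sum_iff_of_le fun k _ => mn5_le a k).mp (h2.trans h3.symm) k
        (Finset.mem_range.mpr hk)
    have h5 : hz (mn5 a) = hz (q a) := hzn_congr 32 h4
    rw [h5, Ew_mask (by omega)] at h1
    refine ⟨h3, h1.imp (fun h1 => ?_) id⟩
    obtain ⟨m, hm, h6⟩ := find_zero h1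
    rw [masks, lmap_eq] at hm
    obtain ⟨S, hS, rfl⟩ := List.mem_map.mp hm
    obtain ⟨g, hg, rfl⟩ := reach_sets S hS
    rw [land_mask_inv hg (by omega)] at h6
    exact ⟨g, hg, h6⟩

/-- Minimum of the code modulo `5`: a nonzero word has square sum larger than `15`. -/
theorem min5 {a : ℕ → ℤ} (ha : Sys 5 a) (h : ∑ k ∈ Finset.range 32, q a k ≤ 15) :
    ∀ k < 32, a k = 0 := by
  obtain ⟨g, hg, hE⟩ := exists_small 8 _ (q a) rfl (Or.inl ⟨rfl, by omega⟩)
  obtain ⟨ε, hε, hc⟩ := hg.five a ha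
  have hq : q (fun k => ε k * a (g k)) = fun k => q a (g k) := funext (q_sign hε a g)
  have hsum : ∑ k ∈ Finset.range 32, q (fun k => ε k * a (g k)) k
      = ∑ k ∈ Finset.range 32, q a k := by
    rw [hq]; exact hg.sum (q a)
  rcases short5 hc (by omega) (by rw [hq]; exact hE) with h0 | ⟨h0, -⟩
  · refine q_sum_zero (hsum.symm.trans (Finset.sum_eq_zero fun k hk => ?_))
    have := h0 k (Finset.mem_range.mp hk)
    simp only [q, this]; rfl
  · omega

/-- `y` is the pattern of squares of a word modulo `5` of square sum `20` which is congruent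
modulo `2` to a word modulo `7` of square sum `28`. -/
def Good (y : ℕ → ℕ) : Prop := ∃ a b : ℕ → ℤ, Sys 5 a ∧ Sys 7 b ∧ q a = y ∧
  ∑ k ∈ Finset.range 32, q a k = 20 ∧ ∑ k ∈ Finset.range 32, q b k = 28 ∧
  ∀ k < 32, q b k % 2 = q a k % 2

theorem Good.comp {y : ℕ → ℕ} (h : Good y) {g : ℕ → ℕ} (hg : Inv g) : Good fun k => y (g k) := by
  obtain ⟨a, b, ha, hb, rfl, h1, h2, h3⟩ := h
  obtain ⟨ε, hε, ha'⟩ := hg.five a ha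
  obtain ⟨δ, hδ, hb'⟩ := hg.seven b hb
  refine ⟨_, _, ha', hb', funext (q_sign hε a g), ?_, ?_, fun k hk => ?_⟩
  · rw [funext (q_sign hε a g)]; exact (hg.sum (q a)).trans h1
  · rw [funext (q_sign hδ b g)]; exact (hg.sum (q b)).trans h2
  · rw [q_sign hε, q_sign hδ]; exact h3 _ (hg.lt hk)

theorem checkB : Nat.beq (lsum searchB reps) 0 = true := by decide +kernel

theorem lsum_beq {α : Type} {f : α → ℕ} {l : List α} (h : Nat.beq (lsum f l) 0 = true) :
    ∀ x ∈ l, f x = 0 := lsum_eq_zero (Nat.eq_of_beq_eq_true h)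

theorem searchB_reps (r : List ℕ) (hr : r ∈ reps) : searchB r = 0 :=
  lsum_beq (f := searchB) (l := reps) checkB r hr

theorem reps_digits : ∀ r ∈ reps, r.length = 32 ∧ (∀ k < 32, lnth 0 r k < 32) ∧
    ∑ k ∈ Finset.range 32, lnth 0 r k % 2 = lsum (fun v => Nat.mod v 2) r ∧
    12 ≤ lsum (fun v => Nat.mod v 2) r := by decide +kernel

theorem rowB_mem (y : ℕ) (x : ℤ) (hx : x.natAbs ≤ 4) (h : x.natAbs ^ 2 % 2 = y % 2) :
    ((x % 7).toNat, (x.natAbs ^ 2 - y % 2) / 4) ∈ rowB y := by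
  have h1 : -4 ≤ x := by omega
  have h2 : x ≤ 4 := by omega
  have e : rowB y = iteb (Nat.beq (y % 2) 0) [(0, 0), (2, 1), (5, 1), (4, 4), (3, 4)]
    [(1, 0), (6, 0), (3, 2), (4, 2)] := rfl
  rw [e, ← h]
  clear e hx h
  interval_cases x <;> decide

theorem colB_eq (y : ℕ) (x : ℤ) (hx : x.natAbs ≤ 4) (h : x.natAbs ^ 2 % 2 = y % 2) :
    lnth 0 (colB y) (x % 7).toNat = (x.natAbs ^ 2 - y % 2) / 4 := by
  have h1 : -4 ≤ x := by omega
  have h2 : x ≤ 4 := by omega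
  have e : colB y = iteb (Nat.beq (y % 2) 0) [0, 9, 1, 4, 4, 1, 9] [12, 0, 6, 2, 2, 6, 0] := rfl
  rw [e, ← h]
  clear e hx h
  interval_cases x <;> decide

theorem rowB_le (y : ℕ) : ∀ a ∈ rowB y, a.1 ≤ 6 := by
  have e : rowB y = iteb (Nat.beq (y % 2) 0) [(0, 0), (2, 1), (5, 1), (4, 4), (3, 4)]
    [(1, 0), (6, 0), (3, 2), (4, 2)] := rfl
  rw [e]
  rcases Nat.mod_two_eq_zero_or_one y with h | h <;> rw [h] <;> decide

theorem colB_le (y : ℕ) : ∀ a ∈ colB y, a ≤ 12 := by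
  have e : colB y = iteb (Nat.beq (y % 2) 0) [0, 9, 1, 4, 4, 1, 9] [12, 0, 6, 2, 2, 6, 0] := rfl
  rw [e]
  rcases Nat.mod_two_eq_zero_or_one y with h | h <;> rw [h] <;> decide

theorem sq_mod (n : ℕ) : n ^ 2 = 4 * ((n ^ 2 - n ^ 2 % 2) / 4) + n ^ 2 % 2 := by
  rcases Nat.even_or_odd' n with ⟨c, rfl | rfl⟩
  · rw [show (2 * c) ^ 2 = 4 * c ^ 2 by ring]; omega
  · rw [show (2 * c + 1) ^ 2 = 4 * (c ^ 2 + c) + 1 by ring]; omega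

theorem searchB_eq {r : List ℕ} (h : searchB r = 0) : Nat.beq (search 7
    ((28 - lsum (fun v => Nat.mod v 2) r) / 4) ((28 - lsum (fun v => Nat.mod v 2) r) / 4)
    (fun i => rowB (lnth 0 r i)) (Ap 7) (fun j => colB (lnth 0 r (16 + j))) (fun _ => 1)) 0
    = true := by
  rw [searchB] at h
  exact Nat.beq_eq.mpr h

/-- The patterns `reps` do not come from a pair as in `Good`. Each has at least `12` odd entries, so
the square sum `28` of `b` exceeds the number of odd coordinates by at most `16`; hence all
coordinates of `b` are at most `4` in absolute value, and the search `searchB` covers `b`. -/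
theorem reps_bad : ∀ r ∈ reps, ∀ y, Good y → ∃ k < 32, y k ≠ lnth 0 r k := by
  rintro r hr _ ⟨a, b, -, hb, rfl, -, h2, h3⟩
  by_contra! hcon
  obtain ⟨-, -, hs, h12⟩ := reps_digits r hr
  have h0 := searchB_eq (searchB_reps r hr)
  set s := lsum (fun v => Nat.mod v 2) r
  have hpar : ∀ k < 32, q b k % 2 = lnth 0 r k % 2 := fun k hk => by rw [h3 k hk, hcon k hk]
  set wt : ℕ → ℕ := fun k => (q b k - lnth 0 r k % 2) / 4 with hwt
  have hq : ∀ k < 32, q b k = 4 * wt k + lnth 0 r k % 2 := fun k hk => by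
    have := sq_mod (b k).natAbs
    rw [hwt]
    dsimp only
    rw [← hpar k hk]
    exact this
  have htot : 4 * ∑ k ∈ Finset.range 32, wt k + s = 28 := by
    rw [← hs, ← h2, Finset.mul_sum, ← Finset.sum_add_distrib]
    exact Finset.sum_congr rfl fun k hk => (hq k (Finset.mem_range.mp hk)).symm
  have hK : ∑ k ∈ Finset.range 32, wt k = (28 - s) / 4 := by omega
  have hb4 : ∀ k < 32, (b k).natAbs ≤ 4 := fun k hk => abs_le_of_q (by
    have h4 := hq k hk
    have h5 : wt k ≤ ∑ k ∈ Finset.range 32, wt k :=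
      Finset.single_le_sum (f := wt) (fun _ _ => Nat.zero_le _) (Finset.mem_range.mpr hk)
    omega)
  have hEw : Ew wt ≤ ∑ k ∈ Finset.range 32, wt k := by
    rw [← Ew_compl]; exact Nat.le_add_left _ _
  rw [← hK] at h0
  have hW : ∑ k ∈ Finset.range 32, wt k ≤ 4 := by omega
  have hrow : ∀ i < 16, (rs 7 b i, wt i) ∈ rowB (lnth 0 r i) := fun i hi =>
    rowB_mem _ _ (hb4 i (by omega)) (hpar i (by omega))
  have hcol : ∀ j < 16, lnth 0 (colB (lnth 0 r (16 + j))) (rs 7 b (16 + j)) = wt (16 + j) :=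
    fun j hj => colB_eq _ _ (hb4 _ (by omega)) (hpar _ (by omega))
  clear_value wt
  obtain ⟨K, hK'⟩ : ∃ K, K = ∑ k ∈ Finset.range 32, wt k := ⟨_, rfl⟩
  rw [← hK'] at h0 hEw hW
  have key : (1 : ℕ) = 0 := core (p := 7) (E := K) (chk := fun _ => 1) (by norm_num) le_rfl
    (by omega) (by omega) (fun j _ => colB_le _) (fun i _ => rowB_le _) h0 hb wt hrow hcol hEw
    hK'.ge
  exact one_ne_zero key

/-- The list `l` of `32` digits is not the pattern of squares of a pair as in `Good`. -/
def Bad (l : List ℕ) : Prop := l.length = 32 ∧ (∀ k < 32, lnth 0 l k < 32) ∧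
  ∀ y, Good y → ∃ k < 32, y k ≠ lnth 0 l k

theorem R15 : ∀ k < 32, lnth 0 Rl ((lnth 0 Rl)^[14] k) = k := by decide +kernel

theorem Bad.lmap {l : List ℕ} (h : Bad l) : Bad (lmap (lnth 0 l) Rl) := by
  obtain ⟨-, h2, h3⟩ := h
  refine ⟨by rw [lmap_eq, List.length_map]; rfl, fun k hk => ?_, fun y hy => ?_⟩
  · rw [lnth_lmap l Rl hk]; exact h2 _ (inv_R.lt hk)
  · obtain ⟨k, hk, hne⟩ := h3 _ (hy.comp (inv_R.iterate 14))
    refine ⟨_, (inv_R.iterate 14).lt hk, fun e => hne ?_⟩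
    rw [e, lnth_lmap l Rl ((inv_R.iterate 14).lt hk), R15 k hk]

theorem hzl_eq (l : List ℕ) (u : ℕ) : hzl l u = l.foldl (fun u x => u * 32 + x) u := by
  induction l generalizing u with
  | nil => rfl
  | cons x l ih => exact ih _

theorem hzl_hz {l : List ℕ} (h : l.length = 32) : hzl l 0 = hz (lnth 0 l) := by
  have e : l = (List.range 32).map (lnth 0 l) := by
    refine List.ext_getElem (by simp [h]) fun i h1 h2 => ?_
    rw [List.getElem_map, List.getElem_range, lnth_eq, List.getD_eq_getElem _ _ h1]
  conv_lhs => rw [e]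
  rw [hzl_eq, List.foldl_map]
  rfl

theorem mem_lflat {α β : Type} {f : α → List β} {l : List α} {y : β} (h : y ∈ lflat f l) :
    ∃ x ∈ l, y ∈ f x := by
  induction l with
  | nil => cases h
  | cons x l ih =>
    rcases List.mem_append.mp (show y ∈ f x ++ lflat f l from h) with h | h
    · exact ⟨x, by simp, h⟩
    · obtain ⟨z, hz, h⟩ := ih h
      exact ⟨z, by simp [hz], h⟩

theorem base_bad {y : ℕ → ℕ} (hy : Good y) (hlt : ∀ k < 32, y k < 32) : hz y ∉ base := by
  intro h
  rw [base, lmap_eq] at h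
  obtain ⟨l, hl, e⟩ := List.mem_map.mp h
  obtain ⟨r, hr, hl⟩ := mem_lflat hl
  have hr' := reps_digits r hr
  obtain ⟨h1, h2, h3⟩ := iter_ind _ Bad (fun _ h => h.lmap) _ _
    ⟨hr'.1, hr'.2.1, reps_bad r hr⟩ l hl
  obtain ⟨k, hk, hne⟩ := h3 y hy
  rw [hzl_hz h1] at e
  exact hne (hzn_inj 32 hlt h2 e.symm k hk)

/-- Descent on the square sum of `a` over the information coordinates. -/
theorem not_good : ∀ n y, Ew y = n → ¬Good y := by
  intro n
  induction n using Nat.strong_induction_on with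
  | _ n ih =>
    rintro y rfl hy
    have hdesc : ∀ g, Inv g → Ew (fun k => y (g k)) < Ew y → False := fun g hg h =>
      ih _ h _ rfl (hy.comp hg)
    have hy' := hy
    obtain ⟨a, b, ha, hb, rfl, h1, h2, h3⟩ := hy'
    by_cases hE : Ew (q a) ≤ 8
    · rcases short5 ha h1.le hE with h0 | ⟨-, ⟨g, hg, h⟩ | h⟩
      · rw [Finset.sum_eq_zero fun k hk => by
          simp only [q, h0 k (Finset.mem_range.mp hk)]; rfl] at h1
        omega
      · exact hdesc g hg h
      · exact base_bad hy (fun k hk => by have := q_le_sum a hk; omega) h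
    · obtain ⟨g, hg, h⟩ := exists_small 8 20 (q a) h1 (Or.inl ⟨rfl, le_rfl⟩)
      exact hdesc g hg (by omega)

/-- A code whose generator matrix has pairwise orthogonal isotropic rows is self-orthogonal, so
square sums of its words are divisible by `m`. -/
theorem iso {m : ℕ} (hG : ∀ i < 16, ∀ j < 16,
    ((∑ k ∈ Finset.range 32, G i k * G j k : ℕ) : ZMod m) = 0) {a : ℕ → ℤ} (ha : Sys m a) :
    m ∣ ∑ k ∈ Finset.range 32, q a k := by
  rw [← ZMod.natCast_eq_zero_iff, Nat.cast_sum]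
  have h1 : ∀ k ∈ Finset.range 32, ((q a k : ℕ) : ZMod m) = ∑ i ∈ Finset.range 16,
      ∑ j ∈ Finset.range 16, ((a i : ZMod m) * (a j : ZMod m)) * ((G i k * G j k : ℕ) : ZMod m) := by
    intro k hk
    have e : ((q a k : ℕ) : ZMod m) = (a k : ZMod m) * (a k : ZMod m) := by
      have : ((q a k : ℕ) : ℤ) = a k * a k := by rw [q, Nat.cast_pow, Int.natCast_natAbs, sq_abs, sq]
      rw [← Int.cast_mul, ← this, Int.cast_natCast]
    rw [e, ha k (Finset.mem_range.mp hk), Finset.sum_mul_sum]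
    refine Finset.sum_congr rfl fun i _ => Finset.sum_congr rfl fun j _ => ?_
    rw [Nat.cast_mul]; ring
  rw [Finset.sum_congr rfl h1, Finset.sum_comm]
  refine Finset.sum_eq_zero fun i hi => ?_
  rw [Finset.sum_comm]
  refine Finset.sum_eq_zero fun j hj => ?_
  rw [← Finset.mul_sum, ← Nat.cast_sum, hG i (Finset.mem_range.mp hi) j (Finset.mem_range.mp hj),
    mul_zero]

theorem iso5 : ∀ i < 16, ∀ j < 16,
    ((∑ k ∈ Finset.range 32, G i k * G j k : ℕ) : ZMod 5) = 0 := by decide +kernel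

theorem iso7 : ∀ i < 16, ∀ j < 16,
    ((∑ k ∈ Finset.range 32, G i k * G j k : ℕ) : ZMod 7) = 0 := by decide +kernel

/-- If all coordinates are even, then halving gives a word of a quarter of the square sum. -/
theorem half {m : ℕ} (c : ZMod m) (hc : c * 2 = 1) {a : ℕ → ℤ} (ha : Sys m a)
    (h2 : ∀ k < 32, (2 : ℤ) ∣ a k) : ∃ a' : ℕ → ℤ, Sys m a' ∧ (∀ k < 32, a k = 2 * a' k) ∧
      ∑ k ∈ Finset.range 32, q a k = 4 * ∑ k ∈ Finset.range 32, q a' k := by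
  have h : ∀ k < 32, a k = 2 * (a k / 2) := fun k hk => by have := h2 k hk; omega
  refine ⟨fun k => a k / 2, fun k hk => ?_, h, ?_⟩
  · have e : ∀ k < 32, ((a k / 2 : ℤ) : ZMod m) = c * (a k : ZMod m) := fun k hk => by
      conv_rhs => rw [h k hk, Int.cast_mul, ← mul_assoc, Int.cast_ofNat, hc, one_mul]
    rw [e k hk, ha k hk, Finset.mul_sum]
    refine Finset.sum_congr rfl fun i hi => ?_
    rw [e i (by have := Finset.mem_range.mp hi; omega), mul_assoc]
  · rw [Finset.mul_sum]
    refine Finset.sum_congr rfl fun k hk => ?_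
    rw [q, q, h k (Finset.mem_range.mp hk), Int.natAbs_mul]
    simp only [Int.mul_ediv_cancel_left _ (two_ne_zero : (2 : ℤ) ≠ 0)]
    rw [mul_pow]; rfl

theorem B2_nonneg (x : Fin 2 → ℚ) : 0 ≤ B2 x x := by
  unfold B2; nlinarith [sq_nonneg (x 0 + x 1), sq_nonneg (x 0), sq_nonneg (x 1)]

theorem B2_zero {x : Fin 2 → ℚ} (h : B2 x x = 0) : x = 0 := by
  have h0 : x 0 = 0 := by
    unfold B2 at h; nlinarith [sq_nonneg (x 0 + x 1), sq_nonneg (x 0), sq_nonneg (x 1)]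
  have h1 : x 1 = 0 := by
    unfold B2 at h; nlinarith [sq_nonneg (x 0 + x 1), sq_nonneg (x 0), sq_nonneg (x 1)]
  funext i; fin_cases i <;> assumption

theorem q_even {a b : ℤ} (h : (2 : ℤ) ∣ a - b) : b.natAbs ^ 2 % 2 = a.natAbs ^ 2 % 2 := by
  have : b.natAbs % 2 = a.natAbs % 2 := by omega
  rw [Nat.pow_mod, this, ← Nat.pow_mod]

theorem lower {v : P1 → Fin 2 → ℚ} (hv : v ∈ LQ) (hne : v ≠ 0) : 6 ≤ Bf v v := by
  obtain ⟨a, b, ha, hb, hpar, h4, hB⟩ := exists_ab hv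
  by_contra! hlt
  obtain ⟨i, hi⟩ := iso iso5 ha
  obtain ⟨j, hj⟩ := iso iso7 hb
  have hsq : ∀ (c : ℕ → ℤ) k, ((q c k : ℕ) : ℤ) = c k ^ 2 := fun c k => by
    rw [q, Nat.cast_pow, Int.natCast_natAbs, sq_abs]
  have hN : ∀ k, 70 * B2 (v (pt k)) (v (pt k)) = ((7 * q a k + 5 * q b k : ℕ) : ℚ) := fun k => by
    rw [hB, ← hsq, ← hsq]; push_cast; ring
  have htot : ∑ k ∈ Finset.range 32, (7 * q a k + 5 * q b k) = 35 * (i + j) := by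
    rw [Finset.sum_add_distrib, ← Finset.mul_sum, ← Finset.mul_sum, hi, hj]; ring
  have hBf : 70 * Bf v v = ((35 * (i + j) : ℕ) : ℚ) := by
    rw [Bf, sum_pt fun ν => B2 (v ν) (v ν), Finset.mul_sum, Finset.sum_congr rfl fun k _ => hN k,
      ← Nat.cast_sum, htot]
  have hij : i + j < 12 := by
    have : ((35 * (i + j) : ℕ) : ℚ) < (420 : ℕ) := by rw [← hBf]; push_cast; linarith
    have := Nat.cast_lt.mp this
    omega
  have h4' : 4 ∣ 35 * (i + j) := by
    rw [← htot]
    refine Finset.dvd_sum fun k _ => ?_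
    have := h4 k
    rw [← hsq, ← hsq] at this
    exact_mod_cast this
  have hab : ∃ k < 32, a k ≠ 0 ∨ b k ≠ 0 := by
    by_contra! h0
    refine hne ?_
    have h1 : Bf v v = 0 := by
      have : ∑ k ∈ Finset.range 32, (7 * q a k + 5 * q b k) = 0 :=
        Finset.sum_eq_zero fun k hk => by
          have := h0 k (Finset.mem_range.mp hk)
          simp only [q, this]; rfl
      rw [← htot, this, Nat.cast_zero] at hBf
      linarith
    funext ν
    refine B2_zero ?_
    exact (Finset.sum_eq_zero_iff_of_nonneg fun ν _ => B2_nonneg (v ν)).mp h1 ν (Finset.mem_univ ν)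
  have ha0 : i ≤ 3 → ∀ k < 32, a k = 0 := fun h => min5 ha (by omega)
  have hb0 : j ≤ 3 → ∀ k < 32, b k = 0 := fun h => core7 hb (by omega)
  have hza : (∀ k < 32, a k = 0) → i = 0 := fun h => by
    rw [Finset.sum_eq_zero fun k hk => by simp only [q, h k (Finset.mem_range.mp hk)]; rfl] at hi
    omega
  have hzb : (∀ k < 32, b k = 0) → j = 0 := fun h => by
    rw [Finset.sum_eq_zero fun k hk => by simp only [q, h k (Finset.mem_range.mp hk)]; rfl] at hj
    omega
  have hij0 : i ≠ 0 ∨ j ≠ 0 := by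
    by_contra! h
    obtain ⟨k, hk, h'⟩ := hab
    rcases h' with h' | h'
    · exact h' (ha0 (by omega) k hk)
    · exact h' (hb0 (by omega) k hk)
  -- If `a = 0`, then `b` is even, and `b / 2` has square sum at most `14`; similarly if `b = 0`.
  by_cases hi3 : i ≤ 3
  · have ha := ha0 hi3
    have hi0 := hza ha
    obtain ⟨b', hb', h1, h2⟩ := half 4 (by decide) hb fun k hk => by
      have h1 := hpar k
      have h2 := ha k hk
      omega
    have hb0' := core7 hb' (by omega)
    have := hzb fun k hk => by rw [h1 k hk, hb0' k hk, mul_zero]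
    omega
  by_cases hj3 : j ≤ 3
  · have hb := hb0 hj3
    have hj0 := hzb hb
    obtain ⟨a', ha', h1, h2⟩ := half 3 (by decide) ha fun k hk => by
      have h1 := hpar k
      have h2 := hb k hk
      omega
    have ha0' := min5 ha' (by omega)
    have := hza fun k hk => by rw [h1 k hk, ha0' k hk, mul_zero]
    omega
  have hi4 : i = 4 := by omega
  have hj4 : j = 4 := by omega
  subst hi4 hj4
  exact not_good _ _ rfl ⟨a, b, ha, hb, rfl, hi, hj, fun k _ => q_even (hpar k)⟩

/-! ### A vector of norm 6 -/

/-- Reading a table on `P¹(F₃₁)`: entry `z` at the finite point `z`, entry `31` at `∞`. -/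
def onP1 (l : List ℤ) : P1 → ℤ
  | none => l.getD 31 0
  | some z => l.getD z.val 0

/-- The coordinates `a` of the vector of norm `6`. -/
def exA : P1 → ℤ := onP1 [0, -2, -1, -1, -1, 0, -1, 0, 0, 0, 0, -1, 1, 0, -1, -1, 0, 0, 1, 0, 0, 0, 0,
  0, -1, -1, 0, 1, 0, -2, 0, 0]

/-- The coordinates `b` of the vector of norm `6`. -/
def exB : P1 → ℤ := onP1 [0, 0, -1, -1, -1, 0, 1, 0, 0, 0, 0, -1, 1, -4, 1, -1, -2, 0, -1, 0, 2, 0, 0,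
  2, 1, 1, -2, 1, 0, 2, -2, -2]

/-- The coefficients of the codeword `exW` at the generators `vgen 0, …, vgen 14`. -/
def exN : List ℕ := [32, 6, 0, 31, 28, 9, 0, 28, 31, 11, 23, 16, 7, 3, 5]

def exW : P1 → ZMod 35 := ∑ i : Fin 15, exN.getD i 0 • vgen (i.val : ZMod 31)

theorem exW_mem : exW ∈ Qcode := by
  unfold exW
  refine sum_mem fun i _ => nsmul_mem ?_ _
  exact AddSubgroup.subset_closure ⟨_, rfl⟩

/-- The vector with `x₀ - x₁ = a/5` and `x₀ + x₁ = b/7` in every component. -/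
def exV (ν : P1) : Fin 2 → ℚ :=
  ![(7 * exA ν + 5 * exB ν : ℚ) / 70, (5 * exB ν - 7 * exA ν : ℚ) / 70]

/-- The integer `14 a + 15 b` is congruent to `-a` modulo `5` and to `b` modulo `7`. -/
theorem exW_spec : ∀ ν : P1, ((14 * exA ν + 15 * exB ν : ℤ) : ZMod 35) = exW ν := by
  decide +kernel

/-- The two components have the same parity at every point. -/
theorem exB_spec : ∀ ν : P1, exB ν = exA ν + 2 * ((exB ν - exA ν) / 2) := by
  decide +kernel

theorem ex_norm : ∑ ν : P1, (7 * exA ν ^ 2 + 5 * exB ν ^ 2) = 420 := by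
  decide +kernel

theorem exV_mem : exV ∈ LQ := by
  refine ⟨exW, exW_mem, fun ν => ⟨14 * exA ν + 15 * exB ν, exW_spec ν, ?_⟩⟩
  have h := exB_spec ν
  set c := (exB ν - exA ν) / 2
  have hq : (exB ν : ℚ) = exA ν + 2 * c := by rw [h]; push_cast; ring
  intro i
  fin_cases i
  · refine ⟨-(28 * exA ν + 29 * c), ?_⟩
    simp [exV, uvec, hq]
    ring
  · refine ⟨-(5 * exA ν + 5 * c), ?_⟩
    simp [exV, uvec, hq]
    ring

theorem exV_norm : Bf exV exV = 6 := by
  have h : ∀ ν, B2 (exV ν) (exV ν) = ((7 * exA ν ^ 2 + 5 * exB ν ^ 2 : ℤ) : ℚ) / 70 := by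
    intro ν
    simp [B2, exV]
    ring
  unfold Bf
  rw [Finset.sum_congr rfl fun ν _ => h ν, ← Finset.sum_div, ← Int.cast_sum, ex_norm]
  norm_num

end GQR

/-- `min {⟨v,v⟩ : v ∈ L_Q, v ≠ 0} = 6`: every nonzero vector of `L_Q` has square-norm
at least 6, and some vector of `L_Q` has square-norm exactly 6. -/
theorem stmt_1 :
    (∀ v ∈ LQ, v ≠ 0 → 6 ≤ Bf v v) ∧ (∃ v ∈ LQ, Bf v v = 6) :=
  ⟨fun _ hv hne => GQR.lower hv hne, GQR.exV, GQR.exV_mem, GQR.exV_norm⟩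
end
end

section
/- The lattice L_Q is an even unimodular positive definite lattice of rank 64: L_Q is a free ℤ-module of rank 64, ⟨v,v⟩ ∈ 2ℤ for all v ∈ L_Q, the form is positive definite, and L_Q equals its dual lattice {x ∈ L_Q ⊗ ℚ : ⟨x,v⟩ ∈ ℤ for all v ∈ L_Q}. -/
/-!
Write `v · w` for the standard bilinear form on `(ℤ/35ℤ)^{P¹(F₃₁)}`.  If `x ν ≡ m_ν u` and
`y ν ≡ n_ν u` modulo `R`, then `⟨u,u⟩ = 216/35`, `u ∈ R∨` and evenness of `R` give
`⟨x,y⟩ ∈ (216/35) ∑ m_ν n_ν + ℤ` and `⟨x,x⟩ ∈ (216/35) ∑ m_ν² + 2ℤ` (`B2_formula`,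
`exists_Bf_eq`, `exists_Bf_self_eq`).  As `216` is prime to `35`, `L_Q` is even and unimodular as soon as `Q` is equal
to its orthogonal complement.

* `Q ⊆ Q^⊥` (`vgen_orth`, `Qcode_orth`): the products `v_μ · v_ν` depend only on `ν - μ`, so only
  31 of them have to be evaluated.
* `Q^⊥ ⊆ Q` (`mem_Qcode_of_orth`): let `V` be the matrix with rows `v_μ`.  There are explicit
  matrices `Y`, `X`, of the same quadratic-residue shape as `V`, with `Vᵀ Y + X V = 1`
  (`splitting`).  A vector `x ∈ Q^⊥` satisfies `V x = 0`, so `x = Vᵀ (Y x)` is a combination of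
  the rows of `V`.

Freeness of rank 64 holds because `ℤ⁶⁴ ⊆ L_Q ⊆ (1/35) ℤ⁶⁴`.
-/

noncomputable section

/-! ### The code is its own orthogonal complement -/

/-- The function on `F₃₁` equal to `a` at `0`, `b` at nonzero squares and `c` at nonsquares. -/
def qrFun (a b c : ZMod 35) (d : ZMod 31) : ZMod 35 :=
  if d = 0 then a else if IsSquare d then b else c

lemma vgen_some (μ ν : ZMod 31) : vgen μ (some ν) = qrFun 1 7 3 (μ - ν) := by
  simp only [vgen, qrFun, sub_eq_zero, eq_comm]

lemma vgen_none (μ : ZMod 31) : vgen μ none = 2 := rfl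

/-- A product of two circulant matrices is circulant. -/
lemma sum_shift (F G : ZMod 31 → ZMod 35) (ν ρ : ZMod 31) :
    ∑ μ, F (μ - ν) * G (μ - ρ) = ∑ μ, F μ * G (μ + (ν - ρ)) := by
  rw [← Equiv.sum_comp (Equiv.subRight ν) (fun μ => F μ * G (μ + (ν - ρ)))]
  simp

lemma sum_shift_one (F : ZMod 31 → ZMod 35) (ν : ZMod 31) : ∑ μ, F (μ - ν) = ∑ μ, F μ :=
  Equiv.sum_comp (Equiv.subRight ν) F

lemma vgen_orth (μ ν : ZMod 31) : vgen μ ⬝ᵥ vgen ν = 0 := by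
  have key : ∀ d : ZMod 31, ∑ t, qrFun 1 7 3 t * qrFun 1 7 3 (t + d) = -4 := by decide +kernel
  have h : ∑ ρ, qrFun 1 7 3 (μ - ρ) * qrFun 1 7 3 (ν - ρ) = -4 := by
    rw [← key (ν - μ), ← Equiv.sum_comp (Equiv.subLeft μ)]
    refine Finset.sum_congr rfl fun t _ => ?_
    rw [Equiv.subLeft_apply, sub_sub_cancel, sub_sub_eq_add_sub, add_sub_assoc',
      add_comm ν t]
  simp only [dotProduct, Fintype.sum_option, vgen_none, vgen_some, h]
  decide

/-- The generators of `Q` as the rows of a matrix. -/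
def V : Matrix (ZMod 31) P1 (ZMod 35) := fun μ ν => vgen μ ν

/-- The factor `Y` in the identity `Vᵀ Y + X V = 1`. -/
def Y : Matrix (ZMod 31) P1 (ZMod 35) := fun μ ν =>
  match ν with
  | none => 0
  | some ν => qrFun 21 15 22 (μ - ν)

/-- The factor `X` in the identity `Vᵀ Y + X V = 1`. -/
def X : Matrix P1 (ZMod 31) (ZMod 35) := fun ν μ =>
  match ν with
  | none => 13
  | some ν => qrFun 0 10 18 (μ - ν)

/-- The entries of `Y` and `X` come from solving this identity, a linear system in the eight
parameters of two matrices of quadratic-residue shape, modulo 5 and modulo 7. -/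
lemma splitting : V.transpose * Y + X * V = 1 := by
  have key : ∀ d : ZMod 31, ∑ t, qrFun 1 7 3 t * qrFun 21 15 22 (t + d)
      + ∑ t, qrFun 0 10 18 t * qrFun 1 7 3 (t + d) = if d = 0 then 1 else 0 := by
    decide +kernel
  have hf : ∑ t, qrFun 1 7 3 t = 11 := by decide +kernel
  have hg : ∑ t, qrFun 21 15 22 t = 16 := by decide +kernel
  have hh : ∑ t, qrFun 0 10 18 t = 0 := by decide +kernel
  ext i j
  simp only [Matrix.add_apply, Matrix.mul_apply, Matrix.transpose_apply, V, Matrix.one_apply]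
  rcases i with _ | ν <;> rcases j with _ | ρ
  · simp only [vgen_none, X, Y]
    decide
  · simp only [vgen_none, vgen_some, X, Y, ← Finset.mul_sum, sum_shift_one, hf, hg]
    rw [if_neg (Option.some_ne_none ρ).symm]
    decide
  · simp only [vgen_none, vgen_some, X, Y, ← Finset.sum_mul, sum_shift_one, hf, hh]
    rw [if_neg (Option.some_ne_none ν)]
    decide
  · simp only [vgen_some, X, Y, sum_shift, key, sub_eq_zero, Option.some_inj]

lemma Qcode_orth {w z : P1 → ZMod 35} (hw : w ∈ Qcode) (hz : z ∈ Qcode) : w ⬝ᵥ z = 0 := by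
  induction hw using AddSubgroup.closure_induction with
  | zero => simp
  | add a b _ _ ha hb => simp [add_dotProduct, ha, hb]
  | neg a _ ha => simp [neg_dotProduct, ha]
  | mem a ha =>
    obtain ⟨μ, rfl⟩ := ha
    induction hz using AddSubgroup.closure_induction with
    | zero => simp
    | add a b _ _ ha hb => simp [dotProduct_add, ha, hb]
    | neg a _ ha => simp [dotProduct_neg, ha]
    | mem a ha =>
      obtain ⟨ν, rfl⟩ := ha
      exact vgen_orth μ ν

lemma vgen_mem (μ : ZMod 31) : vgen μ ∈ Qcode := AddSubgroup.subset_closure ⟨μ, rfl⟩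

lemma smul_mem_Qcode (c : ZMod 35) {w : P1 → ZMod 35} (hw : w ∈ Qcode) : c • w ∈ Qcode := by
  rw [← ZMod.natCast_zmod_val c, Nat.cast_smul_eq_nsmul]
  exact nsmul_mem hw _

lemma mem_Qcode_of_orth {x : P1 → ZMod 35} (h : ∀ μ, vgen μ ⬝ᵥ x = 0) : x ∈ Qcode := by
  have hV : V.mulVec x = 0 := funext h
  have hx : x = V.transpose.mulVec (Y.mulVec x) := by
    conv_lhs => rw [← Matrix.one_mulVec x, ← splitting, Matrix.add_mulVec,
      ← Matrix.mulVec_mulVec, ← Matrix.mulVec_mulVec, hV, Matrix.mulVec_zero, add_zero]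
  rw [hx, Matrix.mulVec_transpose, Matrix.vecMul_eq_sum]
  exact sum_mem fun μ _ => smul_mem_Qcode _ (vgen_mem μ)

/-! ### The bilinear form in coordinates -/

/-- `x ν = m_ν u + r_ν` for all `ν`, with `m_ν ∈ ℤ` and `r_ν ∈ R = ℤ²`. -/
def IsRep (x : P1 → Fin 2 → ℚ) (m : P1 → ℤ) (r : P1 → Fin 2 → ℤ) : Prop :=
  ∀ ν i, x ν i = m ν * uvec i + r ν i

lemma mem_LQ_iff (x : P1 → Fin 2 → ℚ) :
    x ∈ LQ ↔ ∃ m r, IsRep x m r ∧ (fun ν => (m ν : ZMod 35)) ∈ Qcode := by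
  constructor
  · rintro ⟨w, hw, h⟩
    choose m hm hr using h
    choose r hr using hr
    refine ⟨m, r, fun ν i => ?_, ?_⟩
    · rw [← hr]
      simp
    · rwa [funext hm]
  · rintro ⟨m, r, hx, hm⟩
    refine ⟨_, hm, fun ν => ⟨m ν, rfl, fun i => ⟨r ν i, ?_⟩⟩⟩
    simp [hx ν i]

/-- Since `⟨u,u⟩ = 216/35`, `⟨u,e₁⟩ = 6` and `⟨u,e₂⟩ = 2`. -/
lemma B2_formula {x y m n r s} (hx : IsRep x m r) (hy : IsRep y n s) (ν : P1) :
    B2 (x ν) (y ν) = 216 / 35 * ((m ν * n ν : ℤ) : ℚ) +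
      ((m ν * (6 * s ν 0 + 2 * s ν 1) + n ν * (6 * r ν 0 + 2 * r ν 1) +
        (6 * r ν 0 * s ν 0 + r ν 0 * s ν 1 + r ν 1 * s ν 0 + 6 * r ν 1 * s ν 1) : ℤ) : ℚ) := by
  simp only [B2, hx ν, hy ν, uvec, Matrix.cons_val_zero, Matrix.cons_val_one]
  push_cast
  ring

lemma exists_Bf_eq {x y m n r s} (hx : IsRep x m r) (hy : IsRep y n s) :
    ∃ k : ℤ, Bf x y = 216 / 35 * ((∑ ν, m ν * n ν : ℤ) : ℚ) + k := by
  refine ⟨∑ ν, (m ν * (6 * s ν 0 + 2 * s ν 1) + n ν * (6 * r ν 0 + 2 * r ν 1) +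
    (6 * r ν 0 * s ν 0 + r ν 0 * s ν 1 + r ν 1 * s ν 0 + 6 * r ν 1 * s ν 1)), ?_⟩
  rw [Bf, Finset.sum_congr rfl fun ν _ => B2_formula hx hy ν, Finset.sum_add_distrib,
    ← Finset.mul_sum, ← Int.cast_sum, ← Int.cast_sum]

lemma exists_Bf_self_eq {x m r} (hx : IsRep x m r) :
    ∃ k : ℤ, Bf x x = 216 / 35 * ((∑ ν, m ν * m ν : ℤ) : ℚ) + 2 * k := by
  refine ⟨∑ ν, (m ν * (6 * r ν 0 + 2 * r ν 1) +
    (3 * r ν 0 * r ν 0 + r ν 0 * r ν 1 + 3 * r ν 1 * r ν 1)), ?_⟩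
  rw [Bf, Finset.sum_congr rfl fun ν _ => B2_formula hx hx ν, Finset.sum_add_distrib,
    ← Finset.mul_sum, ← Int.cast_sum]
  congr 1
  rw [Int.cast_sum, Finset.mul_sum]
  refine Finset.sum_congr rfl fun ν _ => ?_
  push_cast
  ring

lemma dvd_sum_iff (m n : P1 → ℤ) :
    (35 : ℤ) ∣ ∑ ν, m ν * n ν ↔
      (fun ν => (m ν : ZMod 35)) ⬝ᵥ (fun ν => (n ν : ZMod 35)) = 0 := by
  rw [← Nat.cast_ofNat, ← ZMod.intCast_zmod_eq_zero_iff_dvd]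
  simp [dotProduct]

lemma Bf_int {x y} (hx : x ∈ LQ) (hy : y ∈ LQ) : ∃ k : ℤ, Bf x y = k := by
  obtain ⟨m, r, hx, hm⟩ := (mem_LQ_iff x).1 hx
  obtain ⟨n, s, hy, hn⟩ := (mem_LQ_iff y).1 hy
  obtain ⟨k, hk⟩ := exists_Bf_eq hx hy
  obtain ⟨j, hj⟩ := (dvd_sum_iff m n).2 (Qcode_orth hm hn)
  refine ⟨216 * j + k, ?_⟩
  rw [hk, hj]
  push_cast
  ring

lemma Bf_even {x} (hx : x ∈ LQ) : ∃ k : ℤ, Bf x x = 2 * k := by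
  obtain ⟨m, r, hx, hm⟩ := (mem_LQ_iff x).1 hx
  obtain ⟨k, hk⟩ := exists_Bf_self_eq hx
  obtain ⟨j, hj⟩ := (dvd_sum_iff m m).2 (Qcode_orth hm hm)
  refine ⟨108 * j + k, ?_⟩
  rw [hk, hj]
  push_cast
  ring

/-- Completing squares: `⟨a,a⟩ = (a₀ + a₁)² + 5 a₀² + 5 a₁²`. -/
lemma B2_self (a : Fin 2 → ℚ) : B2 a a = (a 0 + a 1) ^ 2 + 5 * a 0 ^ 2 + 5 * a 1 ^ 2 := by
  simp only [B2]
  ring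

lemma Bf_pos {x : P1 → Fin 2 → ℚ} (hx : x ≠ 0) : 0 < Bf x x := by
  obtain ⟨ν, hν⟩ := Function.ne_iff.1 hx
  obtain ⟨i, hi⟩ := Function.ne_iff.1 hν
  refine Finset.sum_pos' (fun ν _ => ?_) ⟨ν, Finset.mem_univ _, ?_⟩
  · rw [B2_self]
    positivity
  · rw [B2_self]
    have h : 0 < x ν i ^ 2 := by
      have : x ν i ≠ 0 := hi
      positivity
    fin_cases i
    · have h0 : 0 < x ν 0 ^ 2 := h
      positivity
    · have h1 : 0 < x ν 1 ^ 2 := h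
      positivity

/-! ### The dual lattice -/

lemma int_mem_LQ (r : P1 → Fin 2 → ℤ) : (fun ν i => (r ν i : ℚ)) ∈ LQ :=
  (mem_LQ_iff _).2 ⟨0, r, fun ν i => by simp, by
    convert Qcode.zero_mem using 1
    ext ν
    simp⟩

lemma Bf_single (x : P1 → Fin 2 → ℚ) (ν : P1) (a : Fin 2 → ℤ) :
    Bf x (fun ν' i => ((Pi.single ν a : P1 → Fin 2 → ℤ) ν' i : ℚ)) =
      B2 (x ν) (fun i => a i) := by
  rw [Bf, Fintype.sum_eq_single ν]
  · simp
  · intro ν' h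
    simp [B2, h]

/-- Every element of `R∨` is congruent to a multiple of `u` modulo `R`. -/
lemma exists_rep_of_dual {x : P1 → Fin 2 → ℚ} (h : ∀ v ∈ LQ, ∃ k : ℤ, Bf x v = k) :
    ∃ m r, IsRep x m r := by
  choose p hp using fun ν => h _ (int_mem_LQ (Pi.single ν ![1, 0]))
  choose q hq using fun ν => h _ (int_mem_LQ (Pi.single ν ![0, 1]))
  simp only [Bf_single, B2] at hp hq
  simp at hp hq
  -- Inverting `G`: `35 x₀ = 6p - q` and `35 x₁ = 6q - p`; take `m = q - 6p ≡ 34 (6p - q)`.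
  refine ⟨fun ν => q ν - 6 * p ν, fun ν => ![6 * p ν - q ν, p ν], fun ν i => ?_⟩
  have h1 := hp ν
  have h2 := hq ν
  fin_cases i
  · simp [uvec]
    linarith
  · simp [uvec]
    linarith

lemma mem_LQ_of_dual {x : P1 → Fin 2 → ℚ} (h : ∀ v ∈ LQ, ∃ k : ℤ, Bf x v = k) : x ∈ LQ := by
  obtain ⟨m, r, hx⟩ := exists_rep_of_dual h
  refine (mem_LQ_iff x).2 ⟨m, r, hx, mem_Qcode_of_orth fun μ => ?_⟩
  -- Pair `x` with the lift `(v_μ(ν) u)_ν` of `v_μ`.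
  let n : P1 → ℤ := fun ν => (vgen μ ν).val
  have hn : (fun ν => (n ν : ZMod 35)) = vgen μ := by
    funext ν
    simp [n]
  have hy : IsRep (fun ν i => n ν * uvec i) n 0 := fun ν i => by simp
  obtain ⟨k, hk⟩ := h _ ((mem_LQ_iff _).2 ⟨n, 0, hy, hn ▸ vgen_mem μ⟩)
  obtain ⟨l, hl⟩ := exists_Bf_eq hx hy
  rw [← hn, dotProduct_comm, ← dvd_sum_iff]
  have e : (216 * (∑ ν, m ν * n ν) : ℤ) = 35 * (k - l) := by
    have : (216 * ((∑ ν, m ν * n ν : ℤ) : ℚ)) = 35 * (k - l) := by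
      rw [← hk, hl]
      ring
    exact_mod_cast this
  omega

/-! ### Freeness and rank -/

/-- The embedding `z ↦ z / 35` of `ℤ⁶⁴` into `ℚ⁶⁴`; its image contains `L_Q`. -/
def scale : (P1 → Fin 2 → ℤ) →ₗ[ℤ] (P1 → Fin 2 → ℚ) where
  toFun z ν i := z ν i / 35
  map_add' a b := by
    ext
    simp [add_div]
  map_smul' c a := by
    ext
    simp [mul_div_assoc]

lemma scale_injective : Function.Injective scale := by
  intro a b h
  ext ν i
  have := congrFun (congrFun h ν) i
  simpa [scale] using this

/-- The lattice `35 L_Q ⊆ ℤ⁶⁴`. -/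
def LZ : Submodule ℤ (P1 → Fin 2 → ℤ) := AddSubgroup.toIntSubmodule
  { carrier := {z | scale z ∈ LQ}
    zero_mem' := by
      have := int_mem_LQ 0
      simp only [Set.mem_ofPred_eq, map_zero]
      convert this
      simp
    add_mem' := by
      intro a b ha hb
      obtain ⟨m, r, hx, hm⟩ := (mem_LQ_iff _).1 ha
      obtain ⟨n, s, hy, hn⟩ := (mem_LQ_iff _).1 hb
      refine (mem_LQ_iff _).2 ⟨m + n, r + s, fun ν i => ?_, ?_⟩
      · rw [map_add, Pi.add_apply, Pi.add_apply, hx, hy]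
        simp
        ring
      · convert Qcode.add_mem hm hn using 1
        ext ν
        simp
    neg_mem' := by
      intro a ha
      obtain ⟨m, r, hx, hm⟩ := (mem_LQ_iff _).1 ha
      refine (mem_LQ_iff _).2 ⟨-m, -r, fun ν i => ?_, ?_⟩
      · rw [map_neg, Pi.neg_apply, Pi.neg_apply, hx]
        simp
        ring
      · convert Qcode.neg_mem hm using 1
        ext ν
        simp }

lemma mem_LZ {z : P1 → Fin 2 → ℤ} : z ∈ LZ ↔ scale z ∈ LQ := Iff.rfl

lemma exists_scale {x} (hx : x ∈ LQ) : ∃ z, scale z = x := by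
  obtain ⟨m, r, hx, -⟩ := (mem_LQ_iff x).1 hx
  refine ⟨fun ν => ![34 * m ν + 35 * r ν 0, 6 * m ν + 35 * r ν 1], ?_⟩
  ext ν i
  rw [hx]
  fin_cases i <;> simp [scale, uvec] <;> ring

lemma finrank_LZ : Module.finrank ℤ LZ = 64 := by
  have h64 : Module.finrank ℤ (P1 → Fin 2 → ℤ) = 64 := by
    simp [Module.finrank_pi_fintype, ZMod.card]
  refine le_antisymm (h64 ▸ Submodule.finrank_le LZ) ?_
  -- Multiplication by 35 embeds `ℤ⁶⁴` into `35 L_Q`.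
  let f : (P1 → Fin 2 → ℤ) →ₗ[ℤ] LZ :=
    LinearMap.codRestrict LZ ((35 : ℤ) • LinearMap.id) (fun z => by
      rw [mem_LZ]
      convert int_mem_LQ z using 1
      ext ν i
      simp [scale])
  have hf : Function.Injective f := by
    intro a b h
    have h' : (35 : ℤ) • a = (35 : ℤ) • b := congrArg Subtype.val h
    exact smul_right_injective _ (by norm_num) h'
  rw [← h64]
  exact LinearMap.finrank_le_finrank_of_injective hf

lemma exists_basis : ∃ b : Fin 64 → (P1 → Fin 2 → ℚ), (∀ i, b i ∈ LQ) ∧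
    ∀ v ∈ LQ, ∃! c : Fin 64 → ℤ, v = ∑ i, c i • b i := by
  let b := Module.finBasisOfFinrankEq ℤ LZ finrank_LZ
  refine ⟨fun i => scale (b i), fun i => (b i).2, fun v hv => ?_⟩
  obtain ⟨z, rfl⟩ := exists_scale hv
  have hsum (c : Fin 64 → ℤ) :
      ∑ i, c i • scale (b i) = scale (b.equivFun.symm c : LZ) := by
    simp only [Module.Basis.equivFun_symm_apply, Submodule.coe_sum, Submodule.coe_smul, map_sum,
      map_smul]
  refine ⟨b.equivFun ⟨z, hv⟩, ?_, fun c hc => ?_⟩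
  · simp only [hsum, LinearEquiv.symm_apply_apply]
  · simp only [hsum] at hc
    rw [← LinearEquiv.symm_apply_eq]
    exact Subtype.ext (scale_injective hc).symm

/-- `L_Q` is an even unimodular positive definite lattice of rank 64:
it is a free ℤ-module of rank 64 (it has a ℤ-basis of 64 vectors),
`⟨v,v⟩ ∈ 2ℤ` for all `v ∈ L_Q`, the form is positive definite on `L_Q`, and
`L_Q` coincides with its dual lattice inside `L_Q ⊗ ℚ = span_ℚ L_Q`. -/
theorem stmt_2 :
    (∃ b : Fin 64 → (P1 → Fin 2 → ℚ), (∀ i, b i ∈ LQ) ∧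
      ∀ v ∈ LQ, ∃! c : Fin 64 → ℤ, v = ∑ i, c i • b i) ∧
    (∀ v ∈ LQ, ∃ k : ℤ, Bf v v = 2 * (k : ℚ)) ∧
    (∀ v ∈ LQ, v ≠ 0 → 0 < Bf v v) ∧
    {x | x ∈ Submodule.span ℚ LQ ∧ ∀ v ∈ LQ, ∃ k : ℤ, Bf x v = (k : ℚ)} = LQ := by
  refine ⟨exists_basis, fun v hv => Bf_even hv, fun v _ h => Bf_pos h, ?_⟩
  ext x
  exact ⟨fun h => mem_LQ_of_dual h.2,
    fun hx => ⟨Submodule.subset_span hx, fun v hv => Bf_int hx hv⟩⟩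
end
end
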